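/- arXiv:1511.03724 — 2 statements merged into one kernel-verified Lean document; each statement's English description precedes it below -/
import Mathlib

section
/- Let s, t be real with t > s > 0, and let w = u + iv ∈ ℂ with u > 0. If F₊(s,t;w) = 0 or F₋(s,t;w) = 0, then −(1/(2t))·log(1 + 2(su)²) < v < −(1/(4t))·log(1 + (su)²) (log denotes the natural logarithm). In particular, all zeros of F₊ and F₋ with positive real part lie strictly below the real axis. -/
/-- `F₊(s,t;w) = 1 + i(1 + e^{itw})/(sw)` -/
noncomputable def Fplus (s t : ℝ) (w : ℂ) : ℂ :=
  1 + Complex.I * (1 + Complex.exp (Complex.I * t * w)) / (s * w)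

/-- `F₋(s,t;w) = 1 + i(1 − e^{itw})/(sw)` -/
noncomputable def Fminus (s t : ℝ) (w : ℂ) : ℂ :=
  1 + Complex.I * (1 - Complex.exp (Complex.I * t * w)) / (s * w)

/-!
A zero of `F₊` or `F₋` satisfies `e^{itw} = ∓(1 - isw)`. Comparing squared moduli, with
`w = u + iv`, gives `X = (1 + sv)² + (su)²` for `X = e^{-2tv}`, which forces `v < 0` when `u ≠ 0`.
With `z = -sv > 0`, the bound `s ≤ t` and the Taylor polynomial of `exp` give `X ≥ 1 + 2z + 2z²`.
Eliminating `z` through `(su)² = X - (1 - z)²` then yields `X < 1 + 2(su)²` and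
`1 + (su)² < 2X - 1 ≤ X²`, and taking logarithms turns these into the two bounds on `v`.
-/

section ExpLogBounds

variable {c B v : ℝ}

lemma neg_one_div_mul_log_lt_iff (hc : 0 < c) (hB : 0 < B) :
    -(1 / c) * Real.log B < v ↔ Real.exp (-(c * v)) < B := by
  rw [← Real.lt_log_iff_exp_lt hB, neg_mul, one_div_mul_eq_div, neg_lt, lt_div_iff₀' hc, mul_neg]

lemma lt_neg_one_div_mul_log_iff (hc : 0 < c) (hB : 0 < B) :
    v < -(1 / c) * Real.log B ↔ B < Real.exp (-(c * v)) := by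
  rw [← Real.log_lt_iff_lt_exp hB, neg_mul, one_div_mul_eq_div, lt_neg, div_lt_iff₀' hc, mul_neg]

end ExpLogBounds

section ModulusEquation

variable {s t v a : ℝ}

lemma neg_of_exp_eq_sq_add (hs : 0 ≤ s) (ht : 0 ≤ t) (ha : 0 < a)
    (h : Real.exp (-(2 * t * v)) = (1 + s * v) ^ 2 + a) : v < 0 := by
  by_contra! hv
  have exp_le_one : Real.exp (-(2 * t * v)) ≤ 1 :=
    Real.exp_le_one_iff.mpr (neg_nonpos.mpr (by positivity))
  have one_le_sq : 1 ≤ (1 + s * v) ^ 2 :=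
    one_le_pow₀ (le_add_of_nonneg_right (mul_nonneg hs hv))
  linarith

lemma one_sub_two_mul_add_two_mul_sq_le_exp (hs : 0 ≤ s) (hst : s ≤ t) (hv : v ≤ 0) :
    1 - 2 * (s * v) + 2 * (s * v) ^ 2 ≤ Real.exp (-(2 * t * v)) := by
  have sv_nonpos : s * v ≤ 0 := mul_nonpos_of_nonneg_of_nonpos hs hv
  calc 1 - 2 * (s * v) + 2 * (s * v) ^ 2
      = 1 + -(2 * (s * v)) + (-(2 * (s * v))) ^ 2 / 2 := by ring
    _ ≤ Real.exp (-(2 * (s * v))) := Real.quadratic_le_exp_of_nonneg (by linarith)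
    _ ≤ Real.exp (-(2 * t * v)) :=
      Real.exp_le_exp.mpr (by linarith [mul_le_mul_of_nonpos_right hst hv])

lemma exp_lt_one_add_two_mul_of_exp_eq_sq_add (hs : 0 < s) (hst : s ≤ t) (hv : v < 0)
    (h : Real.exp (-(2 * t * v)) = (1 + s * v) ^ 2 + a) :
    Real.exp (-(2 * t * v)) < 1 + 2 * a := by
  have sv_neg : s * v < 0 := mul_neg_of_pos_of_neg hs hv
  have quadratic_le := one_sub_two_mul_add_two_mul_sq_le_exp hs.le hst hv.le
  linarith

lemma one_add_lt_exp_of_exp_eq_sq_add (hs : 0 < s) (hst : s ≤ t) (hv : v < 0)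
    (h : Real.exp (-(2 * t * v)) = (1 + s * v) ^ 2 + a) :
    1 + a < Real.exp (-(4 * t * v)) := by
  have sv_neg : s * v < 0 := mul_neg_of_pos_of_neg hs hv
  have linear_le : 1 - 2 * (s * v) ≤ Real.exp (-(2 * t * v)) := by
    linarith [one_sub_two_mul_add_two_mul_sq_le_exp hs.le hst hv.le, sq_nonneg (s * v)]
  have exp_sq : Real.exp (-(4 * t * v)) = Real.exp (-(2 * t * v)) ^ 2 := by
    rw [← Real.exp_nat_mul]
    ring_nf
  calc 1 + a = Real.exp (-(2 * t * v)) - 2 * (s * v) - (s * v) ^ 2 := by rw [h]; ring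
    _ < 2 * Real.exp (-(2 * t * v)) - 1 := by linarith [sq_pos_of_neg sv_neg]
    _ ≤ Real.exp (-(2 * t * v)) ^ 2 := by linarith [sq_nonneg (Real.exp (-(2 * t * v)) - 1)]
    _ = Real.exp (-(4 * t * v)) := exp_sq.symm

end ModulusEquation

section Zeros

variable {s t : ℝ} {w : ℂ}

lemma Fplus_eq_zero_iff (hs : s ≠ 0) (hw : w ≠ 0) :
    Fplus s t w = 0 ↔ Complex.exp (Complex.I * t * w) = -(1 - Complex.I * s * w) := by
  have hs' : (s : ℂ) ≠ 0 := Complex.ofReal_ne_zero.mpr hs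
  rw [Fplus]
  field_simp
  constructor <;> intro h
  · linear_combination
      (-Complex.I) * h + (1 + Complex.exp (Complex.I * t * w)) * Complex.I_mul_I
  · linear_combination Complex.I * h + s * w * Complex.I_mul_I

lemma Fminus_eq_zero_iff (hs : s ≠ 0) (hw : w ≠ 0) :
    Fminus s t w = 0 ↔ Complex.exp (Complex.I * t * w) = 1 - Complex.I * s * w := by
  have hs' : (s : ℂ) ≠ 0 := Complex.ofReal_ne_zero.mpr hs
  rw [Fminus]
  field_simp
  constructor <;> intro h
  · linear_combination
      Complex.I * h - (1 - Complex.exp (Complex.I * t * w)) * Complex.I_mul_I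
  · linear_combination (-Complex.I) * h + s * w * Complex.I_mul_I

lemma normSq_exp_I_mul (t : ℝ) (w : ℂ) :
    Complex.normSq (Complex.exp (Complex.I * t * w)) = Real.exp (-(2 * t * w.im)) := by
  rw [Complex.normSq_eq_norm_sq, Complex.norm_exp, ← Real.exp_nat_mul]
  simp [mul_assoc]

lemma normSq_one_sub_I_mul (s : ℝ) (w : ℂ) :
    Complex.normSq (1 - Complex.I * s * w) = (1 + s * w.im) ^ 2 + (s * w.re) ^ 2 := by
  simp [Complex.normSq_apply, sq]

lemma exp_eq_sq_add_sq_of_Fplus_or_Fminus_eq_zero (hs : s ≠ 0) (hw : w ≠ 0)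
    (hzero : Fplus s t w = 0 ∨ Fminus s t w = 0) :
    Real.exp (-(2 * t * w.im)) = (1 + s * w.im) ^ 2 + (s * w.re) ^ 2 := by
  rw [← normSq_exp_I_mul, ← normSq_one_sub_I_mul]
  rcases hzero with hplus | hminus
  · rw [(Fplus_eq_zero_iff hs hw).mp hplus, Complex.normSq_neg]
  · rw [(Fminus_eq_zero_iff hs hw).mp hminus]

end Zeros

theorem stmt1_general (s t : ℝ) (hs : 0 < s) (hst : s ≤ t) (w : ℂ) (hu : w.re ≠ 0)
    (hzero : Fplus s t w = 0 ∨ Fminus s t w = 0) :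
    -(1 / (2 * t)) * Real.log (1 + 2 * (s * w.re) ^ 2) < w.im ∧
      w.im < -(1 / (4 * t)) * Real.log (1 + (s * w.re) ^ 2) := by
  have ht : 0 < t := hs.trans_le hst
  have hw : w ≠ 0 := fun h => hu (congrArg Complex.re h)
  have modulus_eq := exp_eq_sq_add_sq_of_Fplus_or_Fminus_eq_zero hs.ne' hw hzero
  have im_neg : w.im < 0 := neg_of_exp_eq_sq_add hs.le ht.le (by positivity) modulus_eq
  rw [neg_one_div_mul_log_lt_iff (by positivity) (by positivity),
    lt_neg_one_div_mul_log_iff (by positivity) (by positivity)]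
  exact ⟨exp_lt_one_add_two_mul_of_exp_eq_sq_add hs hst im_neg modulus_eq,
    one_add_lt_exp_of_exp_eq_sq_add hs hst im_neg modulus_eq⟩

/-- Location of the zeros of `F₊` and `F₋` in the right half-plane: writing
`w = u + iv` with `u > 0`, any zero satisfies
`−(1/(2t))·log(1 + 2(su)²) < v < −(1/(4t))·log(1 + (su)²)`. -/
theorem stmt1 (s t : ℝ) (hs : 0 < s) (hts : s < t) (w : ℂ) (hu : 0 < w.re)
    (hzero : Fplus s t w = 0 ∨ Fminus s t w = 0) :
    -(1 / (2 * t)) * Real.log (1 + 2 * (s * w.re) ^ 2) < w.im ∧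
      w.im < -(1 / (4 * t)) * Real.log (1 + (s * w.re) ^ 2) :=
  stmt1_general s t hs hts.le w hu.ne' hzero
end

section
/- Fix real κ > 0 and η > 0. For every a ∈ (0, 1/2) and every M > 20 there exists f₀ > 0 such that for all f ∈ (0, f₀): D_f(z) ≠ 0 for every z ∈ R₁ ∪ R₂, where R₁ = {z = re^{iθ} : r > f^a, −2π/3 + r^{−3/2}·M·f·log(r + f⁻¹) < θ < −r^{−3/2}·M·f·log(r + f⁻¹)} and R₂ = {z = re^{iθ} : r > f^a, −2π < θ < −2π/3 − r⁻¹·(1 + r^{−1/2})·M·f·log(r + f⁻¹)} (log denotes the natural logarithm). -/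
open Real

/-- Taylor coefficients of the Airy function `Ai`:
`a₀ = 3^{−2/3}/Γ(2/3)`, `a₁ = −3^{−1/3}/Γ(1/3)`, `a₂ = 0`,
`a_{k+3} = a_k/((k+3)(k+2))`. -/
noncomputable def airyCoeff : ℕ → ℂ
  | 0 => (3 : ℂ) ^ (-(2 : ℂ) / 3) / Complex.Gamma (2 / 3)
  | 1 => -((3 : ℂ) ^ (-(1 : ℂ) / 3) / Complex.Gamma (1 / 3))
  | 2 => 0
  | (k + 3) => airyCoeff k / (((k : ℂ) + 3) * ((k : ℂ) + 2))

/-- The Airy function `Ai`, as the entire function with the above Taylor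
coefficients at `0`. -/
noncomputable def Ai (z : ℂ) : ℂ := ∑' k : ℕ, airyCoeff k * z ^ k

/-- `ω = e^{2πi/3}` -/
noncomputable def ωc : ℂ := Complex.exp (2 * π * Complex.I / 3)

/-- `W = f^{1/3}·e^{−iπ/6}/(2π)` -/
noncomputable def Wf (f : ℝ) : ℂ :=
  ((f ^ ((1 : ℝ) / 3) : ℝ) : ℂ) * Complex.exp (-(π : ℂ) * Complex.I / 6) / (2 * π)

/-- `α₊(z) = Ai(−ω(z − κf)f^{−2/3})·Ai(−(z − κf)f^{−2/3})` -/
noncomputable def alphaP (κ f : ℝ) (z : ℂ) : ℂ :=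
  Ai (-ωc * (z - κ * f) * ((f ^ (-(2 : ℝ) / 3) : ℝ) : ℂ)) *
    Ai (-(z - κ * f) * ((f ^ (-(2 : ℝ) / 3) : ℝ) : ℂ))

/-- `α₋(z) = Ai(−ω(z + κf)f^{−2/3})·Ai(−(z + κf)f^{−2/3})` -/
noncomputable def alphaM (κ f : ℝ) (z : ℂ) : ℂ :=
  Ai (-ωc * (z + κ * f) * ((f ^ (-(2 : ℝ) / 3) : ℝ) : ℂ)) *
    Ai (-(z + κ * f) * ((f ^ (-(2 : ℝ) / 3) : ℝ) : ℂ))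

/-- `β₊(z) = Ai(−ω(z + κf)f^{−2/3})·Ai(−(z − κf)f^{−2/3})` -/
noncomputable def betaP (κ f : ℝ) (z : ℂ) : ℂ :=
  Ai (-ωc * (z + κ * f) * ((f ^ (-(2 : ℝ) / 3) : ℝ) : ℂ)) *
    Ai (-(z - κ * f) * ((f ^ (-(2 : ℝ) / 3) : ℝ) : ℂ))

/-- `β₋(z) = Ai(−ω(z − κf)f^{−2/3})·Ai(−(z + κf)f^{−2/3})` -/
noncomputable def betaM (κ f : ℝ) (z : ℂ) : ℂ :=
  Ai (-ωc * (z - κ * f) * ((f ^ (-(2 : ℝ) / 3) : ℝ) : ℂ)) *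
    Ai (-(z + κ * f) * ((f ^ (-(2 : ℝ) / 3) : ℝ) : ℂ))

/-- The resonance determinant `D_f` of the Stark Hamiltonian
`p² + fx + η⁻¹(δ_κ + δ_{−κ})`:
`D_f(z) = 1 + (α₊ + α₋)/(ηW) + β₊(β₋ − β₊)/(η²W²)`. -/
noncomputable def Df (κ η f : ℝ) (z : ℂ) : ℂ :=
  1 + (alphaP κ f z + alphaM κ f z) / (η * Wf f)
    + betaP κ f z * (betaM κ f z - betaP κ f z) / (η ^ 2 * (Wf f) ^ 2)

/-!
In the upper half plane `D_f` does not vanish because a zero would give a complex eigenvalue of a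
self-adjoint operator: the corresponding combination of Airy functions decays in both directions,
which the monotonicity of its probability current `Im (u' ū)` rules out.

In the lower half plane write `z = r e^{iθ}`, `k = √z`, `X = -i / (2ηk)`. Steepest descent gives
`Ai(x) = e^{-(2/3) x^{3/2}} (1 + O(x^{-3/2})) / (2 √π x^{1/4})`, and inserting this into `D_f`
yields `D_f(z) = i X e^{2p} Q + T`, where `2 Re p ≈ -(4 / 3f) r^{3/2} sin (3θ/2)`, `Q` is an
explicit combination of the plane waves `e^{±2iκk}` and `T` is of order `1`. At distance
`M f log(r + f⁻¹) r^{-3/2}` from the rays `arg z = 0, -2π/3`, where `Re p` changes sign, the factor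
`e^{2p}` is a high power of `r + f⁻¹` or of its inverse. Hence one of the two terms dominates the
other; the remaining point is that neither `Q` nor `T` is too small.
-/

open Complex (I)
open MeasureTheory Set Filter Topology

/-! ### Contour integral representation -/

/-- The moment `∫₀^∞ s^k e^{-s³/3} ds`, from which the Taylor coefficients of `Ai` are built. -/
noncomputable def airyMoment (k : ℕ) : ℝ := ∫ s in Ioi (0 : ℝ), s ^ k * Real.exp (-(s ^ 3) / 3)

lemma airyMoment_eq_rpow_mul_Gamma (k : ℕ) :
    airyMoment k = 3 ^ (((k : ℝ) + 1) / 3 - 1) * Real.Gamma (((k : ℝ) + 1) / 3) := by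
  have hk : (-1 : ℝ) < k := by linarith [(Nat.cast_nonneg k : (0 : ℝ) ≤ k)]
  have hGamma := integral_rpow_mul_exp_neg_mul_rpow (p := 3) (b := 1 / 3) (by norm_num) hk
    (by norm_num)
  have hpow : (1 / 3 : ℝ) ^ (-((k : ℝ) + 1) / 3) * (1 / 3) = 3 ^ (((k : ℝ) + 1) / 3 - 1) := by
    rw [Real.rpow_sub_one (by norm_num), one_div, Real.inv_rpow (by norm_num),
      ← Real.rpow_neg (by norm_num), neg_div, neg_neg, ← div_eq_mul_inv]
  rw [← hpow, ← hGamma, airyMoment]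
  refine setIntegral_congr_fun measurableSet_Ioi fun s _ ↦ ?_
  simp only [Real.rpow_natCast, Real.rpow_ofNat]
  ring_nf

lemma airyMoment_add_three (k : ℕ) : airyMoment (k + 3) = (k + 1) * airyMoment k := by
  have hexp : (((k + 3 : ℕ) : ℝ) + 1) / 3 = ((k : ℝ) + 1) / 3 + 1 := by push_cast; ring
  rw [airyMoment_eq_rpow_mul_Gamma, airyMoment_eq_rpow_mul_Gamma, hexp,
    Real.Gamma_add_one (by positivity), add_sub_cancel_right, Real.rpow_sub_one (by norm_num)]
  ring

lemma Gamma_one_third_mul_Gamma_two_thirds :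
    Real.Gamma (1 / 3) * Real.Gamma (2 / 3) = 2 * π / √3 := by
  have hreflection := Real.Gamma_mul_Gamma_one_sub (1 / 3)
  rw [show (1 - 1 / 3 : ℝ) = 2 / 3 by norm_num, show π * (1 / 3) = π / 3 by ring,
    Real.sin_pi_div_three] at hreflection
  rw [hreflection]
  field_simp

lemma airyCoeff_zero :
    airyCoeff 0 = (((3 : ℝ) ^ (-(2 : ℝ) / 3) / Real.Gamma (2 / 3) : ℝ) : ℂ) := by
  rw [airyCoeff, Complex.ofReal_div, Complex.ofReal_cpow (by norm_num), ← Complex.Gamma_ofReal]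
  push_cast
  rfl

lemma airyCoeff_one :
    airyCoeff 1 = ((-((3 : ℝ) ^ (-(1 : ℝ) / 3) / Real.Gamma (1 / 3)) : ℝ) : ℂ) := by
  rw [airyCoeff, Complex.ofReal_neg, Complex.ofReal_div, Complex.ofReal_cpow (by norm_num),
    ← Complex.Gamma_ofReal]
  push_cast
  rfl

lemma airyCoeff_zero_eq_airyMoment : airyCoeff 0 = ((√3 / (2 * π) * airyMoment 0 : ℝ) : ℂ) := by
  have hG : Real.Gamma (2 / 3) ≠ 0 := (Real.Gamma_pos_of_pos (by norm_num)).ne'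
  have hmul := Gamma_one_third_mul_Gamma_two_thirds
  rw [airyCoeff_zero, airyMoment_eq_rpow_mul_Gamma]
  congr 1
  norm_num
  field_simp at hmul ⊢
  linear_combination -hmul

lemma airyCoeff_one_eq_airyMoment :
    airyCoeff 1 = ((-(√3 / (2 * π) * airyMoment 1) : ℝ) : ℂ) := by
  have hG : Real.Gamma (1 / 3) ≠ 0 := (Real.Gamma_pos_of_pos (by norm_num)).ne'
  have hmul := Gamma_one_third_mul_Gamma_two_thirds
  rw [airyCoeff_one, airyMoment_eq_rpow_mul_Gamma]
  congr 1
  norm_num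
  field_simp at hmul ⊢
  linear_combination -hmul

lemma airyCoeff_zero_mul_airyCoeff_one :
    airyCoeff 0 * airyCoeff 1 = ((-(1 / (2 * π * √3)) : ℝ) : ℂ) := by
  have hG₁ : Real.Gamma (1 / 3) ≠ 0 := (Real.Gamma_pos_of_pos (by norm_num)).ne'
  have hG₂ : Real.Gamma (2 / 3) ≠ 0 := (Real.Gamma_pos_of_pos (by norm_num)).ne'
  have hpow : (3 : ℝ) ^ (-(2 : ℝ) / 3) * (3 : ℝ) ^ (-(1 : ℝ) / 3) = 1 / 3 := by
    rw [← Real.rpow_add (by norm_num)]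
    norm_num [Real.rpow_neg_one]
  have hsqrt : √3 ^ 2 = (3 : ℝ) := Real.sq_sqrt (by norm_num)
  rw [airyCoeff_zero, airyCoeff_one, ← Complex.ofReal_mul]
  congr 1
  calc (3 : ℝ) ^ (-(2 : ℝ) / 3) / Real.Gamma (2 / 3)
        * (-((3 : ℝ) ^ (-(1 : ℝ) / 3) / Real.Gamma (1 / 3)))
      = -(((3 : ℝ) ^ (-(2 : ℝ) / 3) * (3 : ℝ) ^ (-(1 : ℝ) / 3))
          / (Real.Gamma (1 / 3) * Real.Gamma (2 / 3))) := by field_simp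
    _ = -(1 / (2 * π * √3)) := by
        rw [hpow, Gamma_one_third_mul_Gamma_two_thirds]
        field_simp
        linear_combination -hsqrt

lemma sqrt_three_sq_complex : ((√3 : ℝ) : ℂ) ^ 2 = 3 := by
  rw [← Complex.ofReal_pow, Real.sq_sqrt (by norm_num), Complex.ofReal_ofNat]

/-- The directions of the two rays of the Airy contour: `airyRay 1 = e^{iπ/3}` and
`airyRay (-1) = e^{-iπ/3}`. Only `σ = ±1` is meaningful. -/
noncomputable def airyRay (σ : ℝ) : ℂ := 1 / 2 + σ * (√3 / 2 : ℝ) * I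

lemma airyRay_pow_three {σ : ℝ} (hσ : σ ^ 2 = 1) : airyRay σ ^ 3 = -1 := by
  have hσ' : (σ : ℂ) ^ 2 = 1 := mod_cast hσ
  have hsq : (σ * (√3 : ℝ) * I : ℂ) ^ 2 = -3 := by
    rw [mul_pow, mul_pow, hσ', sqrt_three_sq_complex, Complex.I_sq]
    ring
  rw [airyRay]
  push_cast
  linear_combination (3 / 8 + σ * (√3 : ℝ) * I / 8) * hsq

lemma airyRay_one_pow_sub_airyRay_neg_one_pow (k : ℕ) :
    airyRay 1 ^ (k + 3) - airyRay (-1) ^ (k + 3) = -(airyRay 1 ^ k - airyRay (-1) ^ k) := by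
  rw [pow_add, pow_add, airyRay_pow_three (by norm_num), airyRay_pow_three (by norm_num)]
  ring

lemma norm_eq_one_of_pow_three_eq_neg_one {e : ℂ} (he : e ^ 3 = -1) : ‖e‖ = 1 :=
  Complex.norm_eq_one_of_pow_eq_one (n := 6) (by linear_combination (e ^ 3 - 1) * he) (by norm_num)

lemma airyCoeff_eq_airyMoment (k : ℕ) :
    airyCoeff k = 1 / (2 * π * I) *
      ((-1) ^ k / (k.factorial : ℂ) * (airyRay 1 ^ (k + 1) - airyRay (-1) ^ (k + 1))
        * airyMoment k) := by
  have hpi : (π : ℂ) ≠ 0 := mod_cast Real.pi_ne_zero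
  induction k using Nat.strong_induction_on with
  | _ k ih =>
    match k with
    | 0 =>
      rw [airyCoeff_zero_eq_airyMoment, airyRay, airyRay]
      simp only [Nat.factorial]
      push_cast
      field_simp
      ring
    | 1 =>
      rw [airyCoeff_one_eq_airyMoment, airyRay, airyRay]
      simp only [Nat.factorial]
      push_cast
      field_simp
      ring
    | 2 =>
      simp [airyCoeff, airyRay_pow_three]
    | n + 3 =>
      have hn1 : (n : ℂ) + 1 ≠ 0 := mod_cast Nat.succ_ne_zero n
      have hn2 : (n : ℂ) + 2 ≠ 0 := mod_cast Nat.succ_ne_zero (n + 1)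
      have hn3 : (n : ℂ) + 3 ≠ 0 := mod_cast Nat.succ_ne_zero (n + 2)
      have hn : (n.factorial : ℂ) ≠ 0 := mod_cast Nat.factorial_ne_zero n
      rw [airyCoeff, ih n (by omega), airyMoment_add_three, show n + 3 + 1 = n + 1 + 3 by ring,
        airyRay_one_pow_sub_airyRay_neg_one_pow]
      simp only [Nat.factorial_succ]
      push_cast
      rw [show (n : ℂ) + 1 + 1 = n + 2 by ring, show (n : ℂ) + 2 + 1 = n + 3 by ring]
      field_simp
      ring

/-- The integrand `e^{t³/3 - xt}` of the contour integral for `2πi Ai(x)`. -/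
noncomputable def airyKernel (x t : ℂ) : ℂ := Complex.exp (t ^ 3 / 3 - x * t)

@[fun_prop]
lemma continuous_airyKernel (x : ℂ) : Continuous (airyKernel x) := by
  unfold airyKernel
  fun_prop

/-- The integral of `airyKernel x` along the ray from `0` in direction `e`. -/
noncomputable def airyRayIntegral (e x : ℂ) : ℂ :=
  ∫ s in Ioi (0 : ℝ), airyKernel x (e * s) * e

lemma linear_sub_cubic_le {c s : ℝ} (hc : 0 ≤ c) (hs : 0 ≤ s) :
    c * s - s ^ 3 / 3 ≤ 3 * (c + 1) ^ 2 - s := by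
  rcases le_total s (3 * (c + 1)) with hsmall | hlarge
  · have : (c + 1) * s ≤ (c + 1) * (3 * (c + 1)) := by gcongr
    have : 0 ≤ s ^ 3 := by positivity
    nlinarith
  · have hsq : 3 * (c + 1) ≤ s ^ 2 := by nlinarith
    have : s * (3 * (c + 1)) ≤ s * s ^ 2 := by gcongr
    nlinarith

lemma integrableOn_exp_linear_sub_cubic {c : ℝ} (hc : 0 ≤ c) :
    IntegrableOn (fun s : ℝ ↦ Real.exp (c * s - s ^ 3 / 3)) (Ioi 0) := by
  have hdom : IntegrableOn (fun s : ℝ ↦ Real.exp (3 * (c + 1) ^ 2) * Real.exp (-s)) (Ioi 0) :=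
    (integrableOn_exp_neg_Ioi 0).const_mul _
  refine hdom.mono' (by fun_prop) ((ae_restrict_iff' measurableSet_Ioi).2 ?_)
  refine Eventually.of_forall fun s hs ↦ ?_
  rw [← Real.exp_add, Real.norm_of_nonneg (Real.exp_pos _).le, Real.exp_le_exp]
  linarith [linear_sub_cubic_le hc (le_of_lt hs)]

section Ray

variable {e : ℂ}

lemma cube_ray_div_three (he : e ^ 3 = -1) (s : ℝ) :
    (e * s) ^ 3 / 3 = ((-(s ^ 3) / 3 : ℝ) : ℂ) := by
  rw [mul_pow, he]
  push_cast
  ring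

lemma norm_airyKernel_ray_le (he : e ^ 3 = -1) (x : ℂ) {s : ℝ} (hs : 0 ≤ s) :
    ‖airyKernel x (e * s)‖ ≤ Real.exp (‖x‖ * s - s ^ 3 / 3) := by
  have hlin : |(x * (e * s)).re| ≤ ‖x‖ * s := by
    refine (Complex.abs_re_le_norm _).trans_eq ?_
    rw [norm_mul, norm_mul, norm_eq_one_of_pow_three_eq_neg_one he, Complex.norm_real,
      Real.norm_of_nonneg hs, one_mul]
  rw [airyKernel, Complex.norm_exp, Real.exp_le_exp, Complex.sub_re, cube_ray_div_three he,
    Complex.ofReal_re]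
  linarith [(abs_le.1 hlin).1]

lemma integrableOn_airyKernel_ray (he : e ^ 3 = -1) (x : ℂ) :
    IntegrableOn (fun s : ℝ ↦ airyKernel x (e * s) * e) (Ioi 0) := by
  refine (integrableOn_exp_linear_sub_cubic (norm_nonneg x)).mono'
    (Continuous.aestronglyMeasurable (by fun_prop)) ((ae_restrict_iff' measurableSet_Ioi).2 ?_)
  refine Eventually.of_forall fun s hs ↦ ?_
  rw [norm_mul, norm_eq_one_of_pow_three_eq_neg_one he, mul_one]
  exact norm_airyKernel_ray_le he x (le_of_lt hs)

lemma integral_airyKernel_ray_term (he : e ^ 3 = -1) (x : ℂ) (k : ℕ) :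
    ∫ s in Ioi (0 : ℝ),
        (-x * (e * s)) ^ k / (k.factorial : ℂ) * (Complex.exp ((e * s) ^ 3 / 3) * e)
      = (-1) ^ k / (k.factorial : ℂ) * e ^ (k + 1) * airyMoment k * x ^ k := by
  have hmoment : (airyMoment k : ℂ)
      = ∫ s in Ioi (0 : ℝ), ((s ^ k * Real.exp (-(s ^ 3) / 3) : ℝ) : ℂ) := integral_ofReal.symm
  rw [hmoment, mul_right_comm, ← integral_const_mul]
  congr 1
  funext s
  rw [cube_ray_div_three he]
  push_cast
  ring

lemma hasSum_airyRayIntegral (he : e ^ 3 = -1) (x : ℂ) :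
    HasSum (fun k : ℕ ↦ (-1) ^ k / (k.factorial : ℂ) * e ^ (k + 1) * airyMoment k * x ^ k)
      (airyRayIntegral e x) := by
  simp only [← integral_airyKernel_ray_term he]
  refine hasSum_integral_of_dominated_convergence
    (fun k s ↦ (‖x‖ * s) ^ k / (k.factorial : ℝ) * Real.exp (-(s ^ 3) / 3))
    (fun k ↦ Continuous.aestronglyMeasurable (by fun_prop)) ?_ ?_ ?_ ?_
  · refine fun k ↦ (ae_restrict_iff' measurableSet_Ioi).2 (Eventually.of_forall fun s hs ↦ ?_)
    rw [cube_ray_div_three he, norm_mul, norm_mul, Complex.norm_exp_ofReal]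
    simp [norm_eq_one_of_pow_three_eq_neg_one he, abs_of_pos (mem_Ioi.1 hs)]
  · exact Eventually.of_forall fun s ↦ (Real.summable_pow_div_factorial _).mul_right _
  · refine (integrableOn_exp_linear_sub_cubic (norm_nonneg x)).congr (Eventually.of_forall ?_)
    intro s
    simp only
    rw [tsum_mul_right, sub_eq_add_neg, Real.exp_add, Real.exp_eq_exp_ℝ,
      NormedSpace.exp_eq_tsum_div, neg_div]
  · refine Eventually.of_forall fun s ↦ ?_
    have hexp := NormedSpace.expSeries_div_hasSum_exp (𝔸 := ℂ) (-x * (e * s))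
    rw [← Complex.exp_eq_exp_ℂ] at hexp
    convert! hexp.mul_right (Complex.exp ((e * s) ^ 3 / 3) * e) using 1
    rw [airyKernel, ← mul_assoc (Complex.exp _), ← Complex.exp_add]
    ring_nf

end Ray

lemma hasSum_Ai (x : ℂ) :
    HasSum (fun k ↦ airyCoeff k * x ^ k) (1 / (2 * π * I) *
      (airyRayIntegral (airyRay 1) x - airyRayIntegral (airyRay (-1)) x)) := by
  have hray (σ : ℝ) (hσ : σ ^ 2 = 1) := hasSum_airyRayIntegral (airyRay_pow_three hσ) x
  convert! ((hray 1 (by norm_num)).sub (hray (-1) (by norm_num))).mul_left (1 / (2 * π * I))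
    using 1
  funext k
  rw [airyCoeff_eq_airyMoment]
  ring

lemma summable_Ai (z : ℂ) : Summable (fun k ↦ airyCoeff k * z ^ k) := (hasSum_Ai z).summable

lemma Ai_eq_airyRayIntegral_sub (x : ℂ) :
    Ai x = 1 / (2 * π * I) *
      (airyRayIntegral (airyRay 1) x - airyRayIntegral (airyRay (-1)) x) :=
  (hasSum_Ai x).tsum_eq

/-! ### Differential equation and Wronskian -/

section PowerSeries

variable {c : ℕ → ℂ}

lemma norm_mul_natCast_mul_pow_pred_le (a : ℂ) {y : ℂ} {R : ℝ} (hR : 1 ≤ R) (hy : ‖y‖ ≤ R)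
    (k : ℕ) : ‖a * (k * y ^ (k - 1))‖ ≤ ‖a * ((2 * R : ℝ) : ℂ) ^ k‖ := by
  rw [norm_mul, norm_mul, norm_mul, norm_pow, norm_pow, Complex.norm_natCast, Complex.norm_real,
    Real.norm_of_nonneg (by positivity), mul_pow]
  gcongr
  · exact_mod_cast Nat.lt_two_pow_self.le
  · calc ‖y‖ ^ (k - 1) ≤ R ^ (k - 1) := by gcongr
      _ ≤ R ^ k := pow_le_pow_right₀ hR (Nat.sub_le k 1)

lemma summable_mul_natCast_mul_pow_pred (hc : ∀ z : ℂ, Summable fun k ↦ c k * z ^ k) (z : ℂ) :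
    Summable fun k : ℕ ↦ c k * (k * z ^ (k - 1)) :=
  (hc _).norm.of_norm_bounded fun k ↦ norm_mul_natCast_mul_pow_pred_le (c k)
    (by linarith [norm_nonneg z] : 1 ≤ ‖z‖ + 1) (by linarith) k

lemma summable_succ_mul_pow (hc : ∀ z : ℂ, Summable fun k ↦ c k * z ^ k) (z : ℂ) :
    Summable fun k : ℕ ↦ c (k + 1) * (k + 1) * z ^ k := by
  simpa [mul_assoc] using (summable_nat_add_iff 1).2 (summable_mul_natCast_mul_pow_pred hc z)

lemma hasDerivAt_tsum_mul_pow (hc : ∀ z : ℂ, Summable fun k ↦ c k * z ^ k) (z : ℂ) :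
    HasDerivAt (fun z ↦ ∑' k, c k * z ^ k) (∑' k : ℕ, c (k + 1) * (k + 1) * z ^ k) z := by
  have hshift : ∑' k : ℕ, c k * (k * z ^ (k - 1)) = ∑' k : ℕ, c (k + 1) * (k + 1) * z ^ k := by
    rw [(summable_mul_natCast_mul_pow_pred hc z).tsum_eq_zero_add]
    simp [mul_assoc]
  have hpos : 0 < ‖z‖ + 1 := by positivity
  rw [← hshift]
  refine hasDerivAt_tsum_of_isPreconnected (t := Metric.ball (0 : ℂ) (‖z‖ + 1)) (y₀ := 0)
    (g' := fun k y ↦ c k * (k * y ^ (k - 1))) (hc ((2 * (‖z‖ + 1) : ℝ) : ℂ)).norm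
    Metric.isOpen_ball (convex_ball _ _).isPreconnected
    (fun k y _ ↦ (hasDerivAt_pow k y).const_mul (c k)) (fun k y hy ↦ ?_)
    (Metric.mem_ball_self hpos) (hc 0) (by simp)
  exact norm_mul_natCast_mul_pow_pred_le (c k) (by linarith [norm_nonneg z])
    (mem_ball_zero_iff.1 hy).le k

end PowerSeries

/-- The derivative `Ai'`, as a power series. -/
noncomputable def airyDeriv (z : ℂ) : ℂ := ∑' k : ℕ, airyCoeff (k + 1) * (k + 1) * z ^ k

lemma summable_airyDeriv (z : ℂ) :
    Summable fun k : ℕ ↦ airyCoeff (k + 1) * (k + 1) * z ^ k :=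
  summable_succ_mul_pow summable_Ai z

lemma hasDerivAt_Ai (z : ℂ) : HasDerivAt Ai (airyDeriv z) z :=
  hasDerivAt_tsum_mul_pow summable_Ai z

lemma hasDerivAt_airyDeriv (z : ℂ) : HasDerivAt airyDeriv (z * Ai z) z := by
  convert! hasDerivAt_tsum_mul_pow summable_airyDeriv z using 1
  rw [(summable_succ_mul_pow summable_airyDeriv z).tsum_eq_zero_add, Ai, ← tsum_mul_left]
  simp only [airyCoeff, zero_add, zero_mul, Nat.cast_add, Nat.cast_one]
  congr 1
  funext k
  have hk2 : (k : ℂ) + 2 ≠ 0 := mod_cast Nat.succ_ne_zero (k + 1)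
  have hk3 : (k : ℂ) + 3 ≠ 0 := mod_cast Nat.succ_ne_zero (k + 2)
  rw [show (k : ℂ) + 1 + 1 = k + 2 by ring, show (k : ℂ) + 2 + 1 = k + 3 by ring]
  field_simp
  ring

lemma Ai_zero : Ai 0 = airyCoeff 0 := by
  rw [Ai, (summable_Ai 0).tsum_eq_zero_add]
  simp

lemma airyDeriv_zero : airyDeriv 0 = airyCoeff 1 := by
  rw [airyDeriv, (summable_airyDeriv 0).tsum_eq_zero_add]
  simp

lemma ωc_eq : ωc = -1 / 2 + (√3 / 2 : ℝ) * I := by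
  have hangle : (2 * π * I / 3 : ℂ) = ((π - π / 3 : ℝ) : ℂ) * I := by push_cast; ring
  rw [ωc, hangle, Complex.exp_mul_I, ← Complex.ofReal_cos, ← Complex.ofReal_sin, Real.cos_pi_sub,
    Real.sin_pi_sub, Real.cos_pi_div_three, Real.sin_pi_div_three]
  push_cast
  ring

lemma ωc_pow_three : ωc ^ 3 = 1 := by
  rw [ωc, ← Complex.exp_nat_mul, ← Complex.exp_two_pi_mul_I]
  congr 1
  push_cast
  ring

lemma one_add_ωc_add_ωc_sq : 1 + ωc + ωc ^ 2 = 0 := by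
  rw [ωc_eq]
  push_cast
  linear_combination (1 / 4 * ((√3 : ℝ) : ℂ) ^ 2) * Complex.I_sq - 1 / 4 * sqrt_three_sq_complex

lemma airyCoeff_three_mul_add_two (k : ℕ) : airyCoeff (3 * k + 2) = 0 := by
  induction k with
  | zero => rfl
  | succ n ih => rw [show 3 * (n + 1) + 2 = (3 * n + 2) + 3 by ring, airyCoeff, ih, zero_div]

lemma airyCoeff_mul_sum_ωc_pow (k : ℕ) :
    airyCoeff k * (1 + ωc ^ (k + 1) + (ωc ^ 2) ^ (k + 1)) = 0 := by
  have hω (n : ℕ) : ωc ^ (3 * n) = 1 := by rw [pow_mul, ωc_pow_three, one_pow]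
  rcases (by omega : k = 3 * (k / 3) ∨ k = 3 * (k / 3) + 1 ∨ k = 3 * (k / 3) + 2) with
    hk | hk | hk <;> rw [hk]
  · rw [← pow_mul, mul_comm 2, pow_mul _ _ 2, pow_succ, hω]
    linear_combination airyCoeff (3 * (k / 3)) * one_add_ωc_add_ωc_sq
  · rw [← pow_mul, mul_comm 2, pow_mul _ _ 2, add_assoc (3 * _), pow_add, hω]
    linear_combination airyCoeff (3 * (k / 3) + 1)
      * (one_add_ωc_add_ωc_sq + ωc * ωc_pow_three)
  · rw [airyCoeff_three_mul_add_two, zero_mul]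

lemma Ai_connection (x : ℂ) : Ai x + ωc * Ai (ωc * x) + ωc ^ 2 * Ai (ωc ^ 2 * x) = 0 := by
  have hsum := ((summable_Ai x).hasSum.add ((summable_Ai (ωc * x)).hasSum.mul_left ωc)).add
    ((summable_Ai (ωc ^ 2 * x)).hasSum.mul_left (ωc ^ 2))
  refine hsum.unique ?_
  convert! (hasSum_zero : HasSum (fun _ : ℕ ↦ (0 : ℂ)) 0) using 1
  funext k
  linear_combination x ^ k * airyCoeff_mul_sum_ωc_pow k

lemma exp_neg_pi_mul_I_div_six :
    Complex.exp (-(π : ℂ) * I / 6) = (√3 / 2 : ℝ) - 1 / 2 * I := by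
  have hangle : (-(π : ℂ) * I / 6) = ((-(π / 6) : ℝ) : ℂ) * I := by push_cast; ring
  rw [hangle, Complex.exp_mul_I, ← Complex.ofReal_cos, ← Complex.ofReal_sin, Real.cos_neg,
    Real.sin_neg, Real.cos_pi_div_six, Real.sin_pi_div_six]
  push_cast
  ring

lemma Ai_wronskian (x : ℂ) :
    Ai x * (ωc * airyDeriv (ωc * x)) - airyDeriv x * Ai (ωc * x)
      = Complex.exp (-(π : ℂ) * I / 6) / (2 * π) := by
  have hderiv : ∀ y : ℂ, HasDerivAt
      (fun x ↦ Ai x * (ωc * airyDeriv (ωc * x)) - airyDeriv x * Ai (ωc * x)) 0 y := by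
    intro y
    have hrot : HasDerivAt (fun x : ℂ ↦ ωc * x) ωc y := by
      simpa using (hasDerivAt_id y).const_mul ωc
    have hdrot := ((hasDerivAt_airyDeriv (ωc * y)).comp y hrot).const_mul ωc
    have hrot' := (hasDerivAt_Ai (ωc * y)).comp y hrot
    convert! ((hasDerivAt_Ai y).mul hdrot).sub ((hasDerivAt_airyDeriv y).mul hrot') using 1
    simp only [Function.comp]
    linear_combination (-(y * Ai y * Ai (ωc * y))) * ωc_pow_three
  have hconst := is_const_of_deriv_eq_zero (fun y ↦ (hderiv y).differentiableAt)
    (fun y ↦ (hderiv y).deriv) x 0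
  have hpi : (π : ℂ) ≠ 0 := mod_cast Real.pi_ne_zero
  have hsqrt : ((√3 : ℝ) : ℂ) ≠ 0 := mod_cast (by positivity : √3 ≠ 0)
  have hvalue : ((-(1 / (2 * π * √3)) : ℝ) : ℂ) * (ωc - 1)
      = ((√3 / 2 : ℝ) - 1 / 2 * I) / (2 * π) := by
    rw [ωc_eq]
    push_cast
    field_simp
    linear_combination (-1 : ℂ) * sqrt_three_sq_complex
  simp only [mul_zero] at hconst
  rw [hconst, Ai_zero, airyDeriv_zero, exp_neg_pi_mul_I_div_six, ← hvalue,
    ← airyCoeff_zero_mul_airyCoeff_one]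
  ring

/-! ### Vertical line representation and asymptotics -/

lemma tendsto_exp_neg_quadratic_mul_self {c : ℝ} (hc : 0 < c) (d : ℝ) :
    Tendsto (fun Y : ℝ ↦ Real.exp (-c * Y ^ 2 + d * Y) * Y) atTop (𝓝 0) := by
  have hlin : Tendsto (fun Y : ℝ ↦ Y ^ 1 * Real.exp (-Y)) atTop (𝓝 0) :=
    Real.tendsto_pow_mul_exp_neg_atTop_nhds_zero 1
  refine squeeze_zero' (eventually_atTop.2 ⟨0, fun Y hY ↦ by positivity⟩) ?_ hlin
  filter_upwards [eventually_ge_atTop 1, eventually_ge_atTop ((d + 1) / c)] with Y hY₁ hY₂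
  rw [div_le_iff₀ hc] at hY₂
  rw [pow_one, mul_comm]
  gcongr
  nlinarith

-- The sector `3 (Re t)² ≤ (Im t)²` lies between the Airy rays and the imaginary axis.
lemma norm_airyKernel_le_of_sector (x : ℂ) {t : ℂ} {q : ℝ} (hq : 0 ≤ q) (hqt : q ≤ t.re)
    (ht : 3 * t.re ^ 2 ≤ t.im ^ 2) :
    ‖airyKernel x t‖ ≤ Real.exp (-(8 / 9 * q) * |t.im| ^ 2 + 2 * ‖x‖ * |t.im|) := by
  have hre_im : |t.re| ≤ |t.im| := sq_le_sq.1 (by nlinarith [sq_nonneg t.re])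
  have hlin : |(x * t).re| ≤ ‖x‖ * (2 * |t.im|) := by
    refine (Complex.abs_re_le_norm _).trans ?_
    rw [norm_mul]
    gcongr
    linarith [Complex.norm_le_abs_re_add_abs_im t]
  have hcube : (t ^ 3 / 3 : ℂ).re = t.re ^ 3 / 3 - t.re * t.im ^ 2 := by
    rw [Complex.div_ofNat_re, pow_succ, pow_two, Complex.mul_re, Complex.mul_re, Complex.mul_im]
    ring
  have hre : t.re * (3 * t.re ^ 2) ≤ t.re * t.im ^ 2 := by gcongr; linarith
  have hq' : q * t.im ^ 2 ≤ t.re * t.im ^ 2 := by gcongr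
  rw [airyKernel, Complex.norm_exp, Real.exp_le_exp, Complex.sub_re, hcube, sq_abs]
  linarith [(abs_le.1 hlin).1]

section Primitive

variable {x : ℂ} {Φ : ℂ → ℂ}

lemma tendsto_primitive_ray (hΦ : ∀ t, HasDerivAt Φ (airyKernel x t) t) {e : ℂ}
    (he : e ^ 3 = -1) :
    Tendsto (fun s : ℝ ↦ Φ (e * s)) atTop (𝓝 (airyRayIntegral e x + Φ 0)) := by
  have hderiv (s : ℝ) : HasDerivAt (fun s : ℝ ↦ Φ (e * s)) (airyKernel x (e * s) * e) s := by
    have hlin : HasDerivAt (fun s : ℝ ↦ e * (s : ℂ)) e s := by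
      simpa using (Complex.ofRealCLM.hasDerivAt (x := s)).const_mul e
    exact (hΦ (e * s)).comp s hlin
  have hint := integrableOn_airyKernel_ray he x
  have hlim := tendsto_limUnder_of_hasDerivAt_of_integrableOn_Ioi (fun s _ ↦ hderiv s) hint
  have hvalue := integral_Ioi_of_hasDerivAt_of_tendsto' (fun s _ ↦ hderiv s) hint hlim
  rw [Complex.ofReal_zero, mul_zero, ← airyRayIntegral, eq_sub_iff_add_eq] at hvalue
  rwa [hvalue]

lemma tendsto_primitive_vertical_sub_ray (hΦ : ∀ t, HasDerivAt Φ (airyKernel x t) t) {σ : ℝ}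
    (hσ : σ ^ 2 = 1) {q : ℝ} (hq : 0 < q) :
    Tendsto (fun Y : ℝ ↦ Φ (q + σ * Y * I) - Φ ((Y / √3 : ℝ) + σ * Y * I)) atTop (𝓝 0) := by
  refine squeeze_zero_norm' ?_ (tendsto_exp_neg_quadratic_mul_self
    (by positivity : 0 < 8 / 9 * q) (2 * ‖x‖))
  filter_upwards [eventually_gt_atTop 0, eventually_ge_atTop (√3 * q)] with Y hY hqY
  have hsqrt : (1 : ℝ) ≤ √3 := by rw [Real.one_le_sqrt]; norm_num
  have hqY' : q ≤ Y / √3 := by rw [le_div_iff₀ (by positivity)]; linarith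
  have hYY : Y / √3 ≤ Y := div_le_self hY.le hsqrt
  have hσ' : |σ| = 1 := by rwa [← sq_eq_sq₀ (abs_nonneg _) zero_le_one, sq_abs, one_pow]
  set S : Set ℂ := Icc q (Y / √3) ×ℂ {σ * Y}
  have hconvex : Convex ℝ S := ((convex_Icc _ _).linear_preimage Complex.reLm).inter
    ((convex_singleton _).linear_preimage Complex.imLm)
  have hbound : ∀ t ∈ S,
      ‖airyKernel x t‖ ≤ Real.exp (-(8 / 9 * q) * Y ^ 2 + 2 * ‖x‖ * Y) := by
    rintro t ⟨⟨hqt, htY⟩, him : t.im = σ * Y⟩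
    have habs : |t.im| = Y := by rw [him, abs_mul, hσ', one_mul, abs_of_pos hY]
    have hre : t.re ^ 2 ≤ (Y / √3) ^ 2 := pow_le_pow_left₀ (by linarith) htY 2
    rw [div_pow, Real.sq_sqrt (by norm_num)] at hre
    have hsector := norm_airyKernel_le_of_sector x hq.le hqt (by rw [← sq_abs t.im, habs]; linarith)
    rwa [habs] at hsector
  have hmem {u : ℝ} (hu : u ∈ Icc q (Y / √3)) : (u + σ * Y * I : ℂ) ∈ S := by
    simpa [S, Complex.mem_reProdIm] using hu
  refine (hconvex.norm_image_sub_le_of_norm_hasDerivWithin_le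
    (fun t _ ↦ (hΦ t).hasDerivWithinAt) hbound (hmem ⟨hqY', le_rfl⟩)
    (hmem ⟨le_rfl, hqY'⟩)).trans ?_
  gcongr
  rw [add_sub_add_right_eq_sub, ← Complex.ofReal_sub, Complex.norm_real, Real.norm_eq_abs, abs_le]
  constructor <;> linarith

lemma tendsto_primitive_vertical (hΦ : ∀ t, HasDerivAt Φ (airyKernel x t) t) {σ : ℝ}
    (hσ : σ ^ 2 = 1) {q : ℝ} (hq : 0 < q) :
    Tendsto (fun Y : ℝ ↦ Φ (q + σ * Y * I)) atTop
      (𝓝 (airyRayIntegral (airyRay σ) x + Φ 0)) := by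
  have hscale : Tendsto (fun Y : ℝ ↦ 2 * Y / √3) atTop atTop :=
    (tendsto_id.const_mul_atTop two_pos).atTop_div_const (by positivity)
  have hray := (tendsto_primitive_ray hΦ (airyRay_pow_three hσ)).comp hscale
  have hsum := (tendsto_primitive_vertical_sub_ray hΦ hσ hq).add hray
  rw [zero_add] at hsum
  refine hsum.congr fun Y ↦ ?_
  have hpoint : airyRay σ * ((2 * Y / √3 : ℝ) : ℂ) = (Y / √3 : ℝ) + σ * Y * I := by
    have : ((√3 : ℝ) : ℂ) ≠ 0 := mod_cast (by positivity : √3 ≠ 0)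
    rw [airyRay]
    push_cast
    field_simp
  rw [Function.comp_apply, hpoint, sub_add_cancel]

end Primitive

/-- The integral along the vertical line through `p` of `airyKernel (p ^ 2)`, with the value
`e^{-2p³/3}` of the kernel at the saddle point `p` factored out. -/
noncomputable def airyLineIntegral (p : ℂ) : ℂ :=
  ∫ s : ℝ, Complex.exp (-p * s ^ 2 - I * s ^ 3 / 3)

lemma airyKernel_sq_vertical (p : ℂ) (s : ℝ) :
    airyKernel (p ^ 2) (p + I * s)
      = Complex.exp (-(2 * p ^ 3 / 3)) * Complex.exp (-p * s ^ 2 - I * s ^ 3 / 3) := by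
  rw [airyKernel, ← Complex.exp_add]
  congr 1
  linear_combination p * (s : ℂ) ^ 2 * Complex.I_sq + (s : ℂ) ^ 3 / 3 * Complex.I_pow_three

lemma norm_airyLineIntegrand (p : ℂ) (s : ℝ) :
    ‖Complex.exp (-p * s ^ 2 - I * s ^ 3 / 3)‖ = Real.exp (-p.re * s ^ 2) := by
  have hsplit : (-p * s ^ 2 - I * s ^ 3 / 3 : ℂ)
      = ((s ^ 2 : ℝ) : ℂ) * (-p) - ((s ^ 3 / 3 : ℝ) : ℂ) * I := by push_cast; ring
  rw [Complex.norm_exp, hsplit, Complex.sub_re, Complex.re_ofReal_mul, Complex.re_ofReal_mul,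
    Complex.I_re, Complex.neg_re]
  ring_nf

lemma integrable_airyLineIntegrand {p : ℂ} (hp : 0 < p.re) :
    Integrable (fun s : ℝ ↦ Complex.exp (-p * s ^ 2 - I * s ^ 3 / 3)) :=
  (integrable_exp_neg_mul_sq hp).mono' (Continuous.aestronglyMeasurable (by fun_prop))
    (Eventually.of_forall fun s ↦ (norm_airyLineIntegrand p s).le)

lemma Ai_sq_eq_airyLineIntegral {p : ℂ} (hp : 0 < p.re) :
    Ai (p ^ 2) = Complex.exp (-(2 * p ^ 3 / 3)) / (2 * π) * airyLineIntegral p := by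
  obtain ⟨Φ, hΦ'⟩ := Differentiable.isExactOn_univ (f := airyKernel (p ^ 2))
    (by unfold airyKernel; fun_prop)
  have hΦ (t : ℂ) : HasDerivAt Φ (airyKernel (p ^ 2) t) t := hΦ' t trivial
  have htop : Tendsto (fun s : ℝ ↦ Φ (p + I * s)) atTop
      (𝓝 (airyRayIntegral (airyRay 1) (p ^ 2) + Φ 0)) := by
    have hshift : Tendsto (fun s : ℝ ↦ s + p.im) atTop atTop :=
      tendsto_atTop_add_const_right _ _ tendsto_id
    refine ((tendsto_primitive_vertical hΦ (one_pow 2) hp).comp hshift).congr fun s ↦ ?_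
    conv_rhs => rw [← Complex.re_add_im p]
    simp only [Function.comp_apply, Complex.ofReal_one, Complex.ofReal_add]
    ring_nf
  have hbot : Tendsto (fun s : ℝ ↦ Φ (p + I * s)) atBot
      (𝓝 (airyRayIntegral (airyRay (-1)) (p ^ 2) + Φ 0)) := by
    have hshift : Tendsto (fun s : ℝ ↦ -s + -p.im) atBot atTop :=
      tendsto_atTop_add_const_right _ _ tendsto_neg_atBot_atTop
    refine ((tendsto_primitive_vertical hΦ (by norm_num) hp).comp hshift).congr fun s ↦ ?_
    conv_rhs => rw [← Complex.re_add_im p]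
    simp only [Function.comp_apply, Complex.ofReal_neg, Complex.ofReal_one, Complex.ofReal_add]
    ring_nf
  have hderiv (s : ℝ) : HasDerivAt (fun s : ℝ ↦ Φ (p + I * s))
      ((Complex.exp (-(2 * p ^ 3 / 3)) * I) * Complex.exp (-p * s ^ 2 - I * s ^ 3 / 3)) s := by
    have hline : HasDerivAt (fun s : ℝ ↦ p + I * (s : ℂ)) I s := by
      simpa using ((Complex.ofRealCLM.hasDerivAt (x := s)).const_mul I).const_add p
    convert! (hΦ (p + I * s)).comp s hline using 1
    rw [airyKernel_sq_vertical]
    ring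
  have hvalue := integral_of_hasDerivAt_of_tendsto hderiv
    ((integrable_airyLineIntegrand hp).const_mul _) hbot htop
  have hpi : (π : ℂ) ≠ 0 := mod_cast Real.pi_ne_zero
  rw [integral_const_mul, ← airyLineIntegral, add_sub_add_right_eq_sub] at hvalue
  rw [Ai_eq_airyRayIntegral_sub, ← hvalue]
  field_simp

lemma norm_Ai_sq_le {p : ℂ} (hp : 0 < p.re) (hp3 : 0 ≤ (p ^ 3).re) :
    ‖Ai (p ^ 2)‖ ≤ √(π / p.re) := by
  have hint : ‖airyLineIntegral p‖ ≤ √(π / p.re) := by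
    refine (norm_integral_le_integral_norm _).trans_eq ?_
    simp only [norm_airyLineIntegrand]
    exact integral_gaussian p.re
  have hexp : ‖Complex.exp (-(2 * p ^ 3 / 3))‖ ≤ 1 := by
    have hre : (-(2 * p ^ 3 / 3)).re = -(2 / 3 * (p ^ 3).re) := by
      rw [show -(2 * p ^ 3 / 3) = ((-(2 / 3) : ℝ) : ℂ) * p ^ 3 by push_cast; ring,
        Complex.re_ofReal_mul]
      ring
    rw [Complex.norm_exp, Real.exp_le_one_iff, hre]
    linarith
  have htwo_pi : ‖(2 * π : ℂ)‖ = 2 * π := by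
    rw [norm_mul, Complex.norm_real, Real.norm_of_nonneg Real.pi_pos.le, Complex.norm_ofNat]
  have hcoeff : ‖Complex.exp (-(2 * p ^ 3 / 3)) / (2 * π)‖ ≤ 1 := by
    rw [norm_div, htwo_pi, div_le_one (by positivity)]
    linarith [Real.pi_gt_three]
  rw [Ai_sq_eq_airyLineIntegral hp, norm_mul]
  exact (mul_le_of_le_one_left (norm_nonneg _) hcoeff).trans hint

lemma cube_mul_exp_neg_le {t : ℝ} (ht : 0 ≤ t) :
    t ^ 3 * Real.exp (-t) ≤ 48 * Real.exp (-(t / 2)) := by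
  have hcube : t ^ 3 ≤ 48 * Real.exp (t / 2) := by
    have hpow := Real.pow_div_factorial_le_exp (t / 2) (by positivity) 3
    norm_num [Nat.factorial] at hpow
    nlinarith
  calc t ^ 3 * Real.exp (-t) ≤ 48 * Real.exp (t / 2) * Real.exp (-t) := by gcongr
    _ = 48 * Real.exp (-(t / 2)) := by rw [mul_assoc, ← Real.exp_add]; ring_nf

lemma norm_airyLineIntegrand_even_part_sub_gaussian_le {p : ℂ} (hp : 0 < p.re) (s : ℝ) :
    ‖Complex.exp (-p * s ^ 2 - I * s ^ 3 / 3)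
        + Complex.exp (-p * ((-s : ℝ) : ℂ) ^ 2 - I * ((-s : ℝ) : ℂ) ^ 3 / 3)
        - 2 * Complex.exp (-p * s ^ 2)‖
      ≤ 6 / p.re ^ 3 * Real.exp (-(p.re / 2) * s ^ 2) := by
  have hcos : Complex.exp (-p * s ^ 2 - I * s ^ 3 / 3)
        + Complex.exp (-p * ((-s : ℝ) : ℂ) ^ 2 - I * ((-s : ℝ) : ℂ) ^ 3 / 3)
        - 2 * Complex.exp (-p * s ^ 2)
      = Complex.exp (-p * s ^ 2) * ((2 * (Real.cos (s ^ 3 / 3) - 1) : ℝ) : ℂ) := by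
    have hpos : (-p * s ^ 2 - I * s ^ 3 / 3 : ℂ) = -p * s ^ 2 + -(s ^ 3 / 3) * I := by ring
    have hneg : (-p * ((-s : ℝ) : ℂ) ^ 2 - I * ((-s : ℝ) : ℂ) ^ 3 / 3 : ℂ)
        = -p * s ^ 2 + (s ^ 3 / 3) * I := by push_cast; ring
    rw [hpos, hneg, Complex.exp_add, Complex.exp_add]
    push_cast
    rw [Complex.cos]
    ring
  have hgauss : ‖Complex.exp (-p * s ^ 2)‖ = Real.exp (-p.re * s ^ 2) := by
    rw [Complex.norm_exp, ← Complex.ofReal_pow, Complex.re_mul_ofReal, Complex.neg_re]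
  have hquad : |2 * (Real.cos (s ^ 3 / 3) - 1)| ≤ s ^ 6 / 9 := by
    have hlower := Real.one_sub_sq_div_two_le_cos (x := s ^ 3 / 3)
    rw [abs_le]
    constructor <;> nlinarith [sq_nonneg (s ^ 3), Real.cos_le_one (s ^ 3 / 3)]
  rw [hcos, norm_mul, hgauss, Complex.norm_real, Real.norm_eq_abs]
  calc Real.exp (-p.re * s ^ 2) * |2 * (Real.cos (s ^ 3 / 3) - 1)|
      ≤ Real.exp (-p.re * s ^ 2) * (s ^ 6 / 9) := by gcongr
    _ = 1 / (9 * p.re ^ 3) * ((p.re * s ^ 2) ^ 3 * Real.exp (-(p.re * s ^ 2))) := by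
        rw [neg_mul]
        field_simp
    _ ≤ 1 / (9 * p.re ^ 3) * (48 * Real.exp (-(p.re * s ^ 2 / 2))) :=
        mul_le_mul_of_nonneg_left (cube_mul_exp_neg_le (by positivity)) (by positivity)
    _ = 48 / 9 / p.re ^ 3 * Real.exp (-(p.re / 2) * s ^ 2) := by
        rw [show -(p.re * s ^ 2 / 2) = -(p.re / 2) * s ^ 2 by ring]
        field_simp
    _ ≤ 6 / p.re ^ 3 * Real.exp (-(p.re / 2) * s ^ 2) := by gcongr; norm_num

-- The cubic phase only enters at second order, since its odd part integrates to zero.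
lemma norm_airyLineIntegral_sub_gaussian_le {p : ℂ} (hp : 0 < p.re) :
    ‖airyLineIntegral p - (π / p : ℂ) ^ (1 / 2 : ℂ)‖ ≤ 3 / p.re ^ 3 * √(2 * π / p.re) := by
  set F : ℝ → ℂ := fun s ↦ Complex.exp (-p * s ^ 2 - I * s ^ 3 / 3)
  have hF_int : Integrable F := integrable_airyLineIntegrand hp
  have hF_neg : ∫ s : ℝ, F (-s) = airyLineIntegral p := integral_neg_eq_self F volume
  have hF_add : Integrable (fun s ↦ F s + F (-s)) := hF_int.add hF_int.comp_neg
  have hdouble : ∫ s : ℝ, (F s + F (-s) - 2 * Complex.exp (-p * s ^ 2))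
      = 2 * (airyLineIntegral p - (π / p : ℂ) ^ (1 / 2 : ℂ)) := by
    rw [integral_sub hF_add ((integrable_cexp_neg_mul_sq hp).const_mul 2),
      integral_add hF_int hF_int.comp_neg, integral_const_mul, hF_neg,
      integral_gaussian_complex hp, ← airyLineIntegral]
    ring
  have hbound := norm_integral_le_of_norm_le
    ((integrable_exp_neg_mul_sq (by positivity : 0 < p.re / 2)).const_mul (6 / p.re ^ 3))
    (Eventually.of_forall (norm_airyLineIntegrand_even_part_sub_gaussian_le hp))
  rw [integral_const_mul, integral_gaussian, show π / (p.re / 2) = 2 * π / p.re by field_simp]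
    at hbound
  have hnorm := congrArg norm hdouble
  rw [norm_mul, Complex.norm_ofNat] at hnorm
  linarith [show 6 / p.re ^ 3 * √(2 * π / p.re) = 2 * (3 / p.re ^ 3 * √(2 * π / p.re)) by ring]

lemma one_fourth_le_cos {y : ℝ} (hy : |y| ≤ 11 / 10) : 1 / 4 ≤ Real.cos y := by
  have hsq : y ^ 2 ≤ (11 / 10) ^ 2 := by rw [← sq_abs]; gcongr
  linarith [Real.one_sub_sq_div_two_le_cos (x := y)]

lemma pi_div_exp_cpow_half {l : ℂ} (hl : |l.im| < π) :
    (π / Complex.exp l : ℂ) ^ (1 / 2 : ℂ) = (√π : ℝ) * Complex.exp (-(l / 2)) := by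
  have hexp : (π / Complex.exp l : ℂ) = Complex.exp ((Real.log π : ℝ) - l) := by
    rw [Complex.exp_sub, ← Complex.ofReal_exp, Real.exp_log Real.pi_pos]
  have hlog : Complex.log (Complex.exp ((Real.log π : ℝ) - l)) = (Real.log π : ℝ) - l := by
    have := abs_lt.1 hl
    refine Complex.log_exp ?_ ?_ <;> simp <;> linarith
  have hsplit : (((Real.log π : ℝ) : ℂ) - l) * (1 / 2)
      = ((Real.log π * (1 / 2) : ℝ) : ℂ) + -(l / 2) := by push_cast; ring
  rw [hexp, Complex.cpow_def_of_ne_zero (Complex.exp_ne_zero _), hlog, hsplit, Complex.exp_add,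
    ← Complex.ofReal_exp, Real.sqrt_eq_rpow, Real.rpow_def_of_pos Real.pi_pos]

lemma norm_airyLineIntegral_exp_sub_le {l : ℂ} (hl : |l.im| ≤ 11 / 10) :
    ‖airyLineIntegral (Complex.exp l) - (√π : ℝ) * Complex.exp (-(l / 2))‖
      ≤ 576 / Real.exp l.re ^ 3 * (√π / √(Real.exp l.re)) := by
  set p := Complex.exp l
  set x := Real.exp l.re with hx
  have hx_pos : 0 < x := Real.exp_pos l.re
  have hpx : x / 4 ≤ p.re := by
    rw [Complex.exp_re, ← hx]
    nlinarith [one_fourth_le_cos hl]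
  have hp : 0 < p.re := by linarith
  have hsqrt : √(2 * π / p.re) ≤ 3 * √π / √x := by
    rw [Real.sqrt_le_left (by positivity), div_pow, mul_pow, Real.sq_sqrt Real.pi_pos.le,
      Real.sq_sqrt hx_pos.le, div_le_div_iff₀ hp hx_pos]
    nlinarith [Real.pi_pos, mul_le_mul_of_nonneg_left hpx Real.pi_pos.le]
  rw [← pi_div_exp_cpow_half (by linarith [Real.pi_gt_three])]
  calc _ ≤ 3 / p.re ^ 3 * √(2 * π / p.re) := norm_airyLineIntegral_sub_gaussian_le hp
    _ ≤ 3 / (x / 4) ^ 3 * (3 * √π / √x) := by gcongr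
    _ = 576 / x ^ 3 * (√π / √x) := by field_simp; norm_num

/-- The factor `ε` with `Ai(e^{2l}) = e^{-(2/3)e^{3l}} e^{-l/2} (1 + ε) / (2√π)`; see
`Ai_exp_two_mul`. -/
noncomputable def airyError (l : ℂ) : ℂ :=
  airyLineIntegral (Complex.exp l) * Complex.exp (l / 2) / (√π : ℝ) - 1

lemma norm_airyError_le {l : ℂ} (hl : |l.im| ≤ 11 / 10) :
    ‖airyError l‖ ≤ 600 * Real.exp (-(3 * l.re)) := by
  have hsqrt_pi : ((√π : ℝ) : ℂ) ≠ 0 := mod_cast (by positivity : √π ≠ 0)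
  have hexp := Complex.exp_ne_zero (l / 2)
  have hfactor : airyError l
      = (airyLineIntegral (Complex.exp l) - (√π : ℝ) * Complex.exp (-(l / 2)))
        * (Complex.exp (l / 2) / (√π : ℝ)) := by
    rw [airyError, Complex.exp_neg]
    field_simp
  have hnorm : ‖Complex.exp (l / 2) / (√π : ℝ)‖ = √(Real.exp l.re) / √π := by
    rw [norm_div, Complex.norm_exp, Complex.norm_real, Real.norm_of_nonneg (by positivity),
      Complex.div_ofNat_re, Real.exp_half]
  have hcube : Real.exp (-(3 * l.re)) = 1 / Real.exp l.re ^ 3 := by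
    rw [Real.exp_neg, ← Real.exp_nat_mul, one_div, Nat.cast_ofNat]
  rw [hfactor, norm_mul, hnorm, hcube]
  calc _ ≤ 576 / Real.exp l.re ^ 3 * (√π / √(Real.exp l.re)) * (√(Real.exp l.re) / √π) := by
        gcongr
        exact norm_airyLineIntegral_exp_sub_le hl
    _ = 576 * (1 / Real.exp l.re ^ 3) := by field_simp
    _ ≤ 600 * (1 / Real.exp l.re ^ 3) := by gcongr; norm_num

lemma Ai_exp_two_mul {l : ℂ} (hl : |l.im| < π / 2) :
    Ai (Complex.exp (2 * l)) = Complex.exp (-(2 / 3 * Complex.exp (3 * l)))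
      * Complex.exp (-(l / 2)) / (2 * √π : ℝ) * (1 + airyError l) := by
  have hre : 0 < (Complex.exp l).re := by
    rw [Complex.exp_re]
    exact mul_pos (Real.exp_pos _) (Real.cos_pos_of_mem_Ioo (abs_lt.1 hl))
  have hsq : Complex.exp (2 * l) = Complex.exp l ^ 2 := by rw [← Complex.exp_nat_mul]; norm_num
  have hcube : Complex.exp (3 * l) = Complex.exp l ^ 3 := by rw [← Complex.exp_nat_mul]; norm_num
  have hexp := Complex.exp_ne_zero (l / 2)
  have hsqrt_pi : ((√π : ℝ) : ℂ) ≠ 0 := mod_cast (by positivity : √π ≠ 0)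
  have hpi : ((√π : ℝ) : ℂ) ^ 2 = π := by rw [← Complex.ofReal_pow, Real.sq_sqrt Real.pi_pos.le]
  rw [hsq, hcube, Ai_sq_eq_airyLineIntegral hre, airyError, mul_div_right_comm, add_sub_cancel,
    Complex.exp_neg (l / 2), ← hpi]
  push_cast
  field_simp

/-! ### Decay in the sector `|arg z| ≤ π/3` -/

-- For `z = p²` the sector `‖z‖ ≤ 2 Re z` is exactly where `Re p³` is nonnegative.
lemma norm_Ai_le_of_norm_le_two_mul_re {z : ℂ} (hz : z ≠ 0) (hsector : ‖z‖ ≤ 2 * z.re) :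
    ‖Ai z‖ ≤ √(2 * π / √‖z‖) := by
  obtain ⟨p, hp_re, rfl⟩ : ∃ p : ℂ, 0 ≤ p.re ∧ p ^ 2 = z := by
    obtain ⟨p, hp⟩ := IsAlgClosed.exists_pow_nat_eq z two_pos
    rcases le_total 0 p.re with h | h
    · exact ⟨p, h, hp⟩
    · exact ⟨-p, by simpa using h, by rw [neg_sq, hp]⟩
  have hp : 0 < ‖p‖ := norm_pos_iff.2 (by rintro rfl; simp at hz)
  have hnorm_sq : ‖p‖ ^ 2 = p.re ^ 2 + p.im ^ 2 := by
    rw [Complex.sq_norm, Complex.normSq_apply]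
    ring
  have hre_sq : (p ^ 2).re = p.re ^ 2 - p.im ^ 2 := by
    rw [pow_two, Complex.mul_re]
    ring
  rw [norm_pow, hnorm_sq, hre_sq] at hsector
  have hre_cube : 0 ≤ (p ^ 3).re := by
    have hcube : (p ^ 3).re = p.re * (p.re ^ 2 - 3 * p.im ^ 2) := by
      rw [pow_succ, pow_two, Complex.mul_re, Complex.mul_re, Complex.mul_im]
      ring
    rw [hcube]
    exact mul_nonneg hp_re (by linarith)
  have hhalf : ‖p‖ / 2 ≤ p.re := by
    refine (pow_le_pow_iff_left₀ (by positivity) hp_re two_ne_zero).1 ?_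
    rw [div_pow, hnorm_sq]
    nlinarith
  rw [norm_pow, Real.sqrt_sq hp.le]
  refine (norm_Ai_sq_le (by linarith) hre_cube).trans (Real.sqrt_le_sqrt ?_)
  rw [div_le_div_iff₀ (by linarith) hp]
  nlinarith [Real.pi_pos]

lemma tendsto_sqrt_div_sqrt_atTop_zero {ι : Type*} {l : Filter ι} {u : ι → ℝ}
    (hu : Tendsto u l atTop) (c : ℝ) : Tendsto (fun i ↦ √(c / √(u i))) l (𝓝 0) := by
  rw [← Real.sqrt_zero]
  exact (Real.continuous_sqrt.tendsto _).comp ((Real.tendsto_sqrt_atTop.comp hu).const_div_atTop _)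

lemma tendsto_Ai_zero {ι : Type*} {l : Filter ι} {g : ι → ℂ} (hg : Tendsto (‖g ·‖) l atTop)
    (hsector : ∀ᶠ i in l, ‖g i‖ ≤ 2 * (g i).re) : Tendsto (fun i ↦ Ai (g i)) l (𝓝 0) := by
  refine squeeze_zero_norm' ?_ (tendsto_sqrt_div_sqrt_atTop_zero hg (2 * π))
  filter_upwards [hsector, hg.eventually_gt_atTop 0] with i hi hpos
  exact norm_Ai_le_of_norm_le_two_mul_re (norm_pos_iff.1 hpos) hi

lemma tendsto_airyDeriv_zero {ι : Type*} {l : Filter ι} {g : ι → ℂ} {ρ : ℝ} (hρ : 0 < ρ)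
    (hg : Tendsto (‖g ·‖) l atTop)
    (hsector : ∀ᶠ i in l, ∀ z ∈ Metric.sphere (g i) ρ, ‖z‖ ≤ 2 * z.re) :
    Tendsto (fun i ↦ airyDeriv (g i)) l (𝓝 0) := by
  have hlim := (tendsto_sqrt_div_sqrt_atTop_zero (tendsto_atTop_add_const_right l (-ρ) hg)
    (2 * π)).div_const ρ
  rw [zero_div] at hlim
  refine squeeze_zero_norm' ?_ hlim
  filter_upwards [hsector, hg.eventually_gt_atTop ρ] with i hi hlarge
  rw [← (hasDerivAt_Ai _).deriv]
  refine Complex.norm_deriv_le_of_forall_mem_sphere_norm_le hρ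
    (show Differentiable ℂ Ai from fun x ↦ (hasDerivAt_Ai x).differentiableAt).diffContOnCl
    fun z hz ↦ ?_
  have hnorm : ‖g i‖ + -ρ ≤ ‖z‖ := by
    have := norm_sub_norm_le (g i) z
    rw [mem_sphere_iff_norm, norm_sub_rev] at hz
    linarith
  refine (norm_Ai_le_of_norm_le_two_mul_re (norm_pos_iff.1 (by linarith)) (hi z hz)).trans
    (Real.sqrt_le_sqrt ?_)
  have : 0 < √(‖g i‖ + -ρ) := Real.sqrt_pos.2 (by linarith)
  gcongr

/-! ### Schrödinger solutions and the upper half-plane -/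

/-- `u` is a solution, with derivative `u'`, of the stationary Schrödinger equation
`-u'' + V u = z u` on the line with real potential `V` and complex energy `z`. -/
structure SchrodingerSolution (V : ℝ → ℝ) (z : ℂ) (u u' : ℝ → ℂ) : Prop where
  hasDerivAt : ∀ x, HasDerivAt u (u' x) x
  hasDerivAt_deriv : ∀ x, HasDerivAt u' ((V x - z) * u x) x

/-- The probability current `Im (u' ū)` of a wave function `u` with derivative `u'`. -/
noncomputable def probabilityCurrent (u u' : ℝ → ℂ) (x : ℝ) : ℝ :=
  (u' x * (starRingEnd ℂ) (u x)).im

lemma tendsto_probabilityCurrent_zero {u u' : ℝ → ℂ} {l : Filter ℝ} (hu : Tendsto u l (𝓝 0))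
    (hu' : Tendsto u' l (𝓝 0)) : Tendsto (probabilityCurrent u u') l (𝓝 0) := by
  have hconj : Tendsto (fun x ↦ (starRingEnd ℂ) (u x)) l (𝓝 0) := by
    simpa only [map_zero, Function.comp_def] using (Complex.continuous_conj.tendsto 0).comp hu
  simpa only [mul_zero, Complex.zero_im, Function.comp_def] using!
    (Complex.continuous_im.tendsto _).comp (hu'.mul hconj)

namespace SchrodingerSolution

variable {V : ℝ → ℝ} {z : ℂ} {u u' v v' : ℝ → ℂ}

lemma linear_combination (hu : SchrodingerSolution V z u u') (hv : SchrodingerSolution V z v v')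
    (c d : ℂ) :
    SchrodingerSolution V z (fun x ↦ c * u x + d * v x) (fun x ↦ c * u' x + d * v' x) where
  hasDerivAt x := ((hu.hasDerivAt x).const_mul c).add ((hv.hasDerivAt x).const_mul d)
  hasDerivAt_deriv x :=
    (((hu.hasDerivAt_deriv x).const_mul c).add ((hv.hasDerivAt_deriv x).const_mul d)).congr_deriv
      (by ring)

lemma hasDerivAt_probabilityCurrent (hu : SchrodingerSolution V z u u') (x : ℝ) :
    HasDerivAt (probabilityCurrent u u') (-(z.im * Complex.normSq (u x))) x := by
  have hmul := (hu.hasDerivAt_deriv x).mul (hu.hasDerivAt x).star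
  refine ((Complex.imCLM.hasFDerivAt).comp_hasDerivAt x hmul).congr_deriv ?_
  simp [Complex.normSq_apply]
  ring

lemma antitone_probabilityCurrent (hu : SchrodingerSolution V z u u') (hz : 0 ≤ z.im) :
    Antitone (probabilityCurrent u u') :=
  antitone_of_hasDerivAt_nonpos hu.hasDerivAt_probabilityCurrent fun x ↦
    neg_nonpos.2 (mul_nonneg hz (Complex.normSq_nonneg (u x)))

lemma eq_zero_of_probabilityCurrent_eventually_eq_zero (hu : SchrodingerSolution V z u u')
    (hz : z.im ≠ 0) {x : ℝ} (hx : ∀ᶠ y in 𝓝 x, probabilityCurrent u u' y = 0) : u x = 0 := by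
  have hconst : HasDerivAt (probabilityCurrent u u') 0 x :=
    (hasDerivAt_const x 0).congr_of_eventuallyEq hx
  have hzero := (hu.hasDerivAt_probabilityCurrent x).unique hconst
  rw [neg_eq_zero, mul_eq_zero, Complex.normSq_eq_zero] at hzero
  exact hzero.resolve_left hz

lemma probabilityCurrent_neg (hu : SchrodingerSolution V z u u') (hz : 0 < z.im)
    (hbot : Tendsto u atBot (𝓝 0)) (hbot' : Tendsto u' atBot (𝓝 0))
    (hne : ∀ x, u x = 0 → u' x ≠ 0) (x : ℝ) : probabilityCurrent u u' x < 0 := by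
  have hanti := hu.antitone_probabilityCurrent hz.le
  have hnonpos := hanti.ge_of_tendsto (tendsto_probabilityCurrent_zero hbot hbot')
  refine (hnonpos x).lt_of_ne fun hx ↦ ?_
  have hcurrent : ∀ y ≤ x, probabilityCurrent u u' y = 0 := fun y hy ↦
    le_antisymm (hnonpos y) (hx.symm.le.trans (hanti hy))
  have hzero : ∀ y < x, u y = 0 := fun y hy ↦
    hu.eq_zero_of_probabilityCurrent_eventually_eq_zero hz.ne'
      ((eventually_lt_nhds hy).mono fun t ht ↦ hcurrent t ht.le)
  have hy : x - 1 < x := sub_one_lt x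
  refine hne (x - 1) (hzero _ hy) ((hu.hasDerivAt (x - 1)).unique ?_)
  exact (hasDerivAt_const (x - 1) (0 : ℂ)).congr_of_eventuallyEq
    ((eventually_lt_nhds hy).mono hzero)

end SchrodingerSolution

-- `U` and `U'` stand for the one-sided data at a point where a real `δ`-interaction of strength `g`
-- makes `U` proportional to `φ`, i.e. `(U' + g U) / U = φ' / φ`; then the currents have equal sign.
lemma im_mul_conj_nonneg_of_matching {φ φ' U U' : ℂ} {g : ℝ} (hne : φ = 0 → φ' ≠ 0)
    (hmatch : φ * (U' + g * U) = φ' * U) (hφ : 0 ≤ (φ' * (starRingEnd ℂ) φ).im) :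
    0 ≤ (U' * (starRingEnd ℂ) U).im := by
  by_cases hφ0 : φ = 0
  · have hU : U = 0 := by
      rw [hφ0, zero_mul, eq_comm, mul_eq_zero] at hmatch
      exact hmatch.resolve_left (hne hφ0)
    simp [hU]
  · have hscaled : (Complex.normSq φ : ℂ) * (U' * (starRingEnd ℂ) U)
        = (Complex.normSq U : ℂ) * (φ' * (starRingEnd ℂ) φ)
          - (Complex.normSq φ * g * Complex.normSq U : ℝ) := by
      push_cast
      rw [← Complex.mul_conj, ← Complex.mul_conj]
      linear_combination (starRingEnd ℂ) φ * (starRingEnd ℂ) U * hmatch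
    have him := congrArg Complex.im hscaled
    rw [Complex.im_ofReal_mul, Complex.sub_im, Complex.im_ofReal_mul, Complex.ofReal_im,
      sub_zero] at him
    refine nonneg_of_mul_nonneg_right ?_ (Complex.normSq_pos.2 hφ0)
    rw [him]
    exact mul_nonneg (Complex.normSq_nonneg U) hφ

-- A zero of the determinant would glue `ψ` on the left of `a` to a multiple of `φ` on the right of
-- `b` across the two interactions, giving an eigenfunction with nonreal eigenvalue of a selfadjoint
-- operator; the probability current makes this contradiction explicit.
lemma twoDeltaDeterminant_ne_zero {V : ℝ → ℝ} {z W : ℂ} {a b g : ℝ} (hab : a ≤ b) (hz : 0 < z.im)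
    {φ φ' ψ ψ' : ℝ → ℂ} (hφ : SchrodingerSolution V z φ φ') (hψ : SchrodingerSolution V z ψ ψ')
    (hW : ∀ x, φ x * ψ' x - φ' x * ψ x = W) (hW0 : W ≠ 0)
    (hφ_top : Tendsto φ atTop (𝓝 0)) (hφ'_top : Tendsto φ' atTop (𝓝 0))
    (hψ_bot : Tendsto ψ atBot (𝓝 0)) (hψ'_bot : Tendsto ψ' atBot (𝓝 0)) :
    1 + g * (ψ b * φ b + ψ a * φ a) / W
      + g ^ 2 * (ψ a * φ b) * (ψ b * φ a - ψ a * φ b) / W ^ 2 ≠ 0 := by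
  intro hdet
  have hφ_ne : ∀ x, φ x = 0 → φ' x ≠ 0 := fun x h0 h0' ↦ hW0 (by rw [← hW x, h0, h0']; ring)
  have hψ_ne : ∀ x, ψ x = 0 → ψ' x ≠ 0 := fun x h0 h0' ↦ hW0 (by rw [← hW x, h0, h0']; ring)
  set c : ℂ := -g * ψ a ^ 2 / W
  set d : ℂ := 1 + g * ψ a * φ a / W
  have hu := hφ.linear_combination hψ c d
  have hua : c * φ a + d * ψ a = ψ a := by ring
  have hua' : c * φ' a + d * ψ' a = ψ' a + g * ψ a := by
    simp only [c, d]
    field_simp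
    linear_combination g * ψ a * hW a
  have hcurrent_a : probabilityCurrent (fun x ↦ c * φ x + d * ψ x)
      (fun x ↦ c * φ' x + d * ψ' x) a = probabilityCurrent ψ ψ' a := by
    rw [probabilityCurrent, hua, hua', add_mul, Complex.add_im, mul_assoc, Complex.mul_conj,
      ← Complex.ofReal_mul, Complex.ofReal_im, add_zero, probabilityCurrent]
  have hmatch : φ b * (c * φ' b + d * ψ' b + g * (c * φ b + d * ψ b))
      = φ' b * (c * φ b + d * ψ b) := by
    have hfactor : φ b * (c * φ' b + d * ψ' b + g * (c * φ b + d * ψ b))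
        - φ' b * (c * φ b + d * ψ b) = W * (1 + g * (ψ b * φ b + ψ a * φ a) / W
          + g ^ 2 * (ψ a * φ b) * (ψ b * φ a - ψ a * φ b) / W ^ 2) := by
      simp only [c, d]
      field_simp
      linear_combination (W + g * ψ a * φ a) * hW b
    rwa [hdet, mul_zero, sub_eq_zero] at hfactor
  have hφ_nonneg : 0 ≤ probabilityCurrent φ φ' b :=
    (hφ.antitone_probabilityCurrent hz.le).le_of_tendsto
      (tendsto_probabilityCurrent_zero hφ_top hφ'_top) b
  have hnonneg := im_mul_conj_nonneg_of_matching (hφ_ne b) hmatch hφ_nonneg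
  have hneg := hψ.probabilityCurrent_neg hz hψ_bot hψ'_bot hψ_ne a
  have hle := hu.antitone_probabilityCurrent hz.le hab
  rw [hcurrent_a] at hle
  exact absurd hnonneg (not_le.2 (hle.trans_lt hneg))

lemma schrodingerSolution_Ai_affine {f : ℝ} {m b z : ℂ} (hm : m ^ 3 = f) (hb : m ^ 2 * b = -z) :
    SchrodingerSolution (fun x ↦ f * x) z (fun x ↦ Ai (m * x + b))
      (fun x ↦ airyDeriv (m * x + b) * m) where
  hasDerivAt x := (hasDerivAt_Ai _).comp x
    (((Complex.ofRealCLM.hasDerivAt.const_mul m).add_const b).congr_deriv (mul_one m))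
  hasDerivAt_deriv x := by
    have haffine : HasDerivAt (fun x : ℝ ↦ m * (x : ℂ) + b) m x :=
      ((Complex.ofRealCLM.hasDerivAt.const_mul m).add_const b).congr_deriv (mul_one m)
    refine (((hasDerivAt_airyDeriv _).comp x haffine).mul_const m).congr_deriv ?_
    push_cast
    linear_combination (x * Ai (m * x + b)) * hm + Ai (m * x + b) * hb

lemma tendsto_norm_ofReal_add_atTop (w : ℂ) :
    Tendsto (fun t : ℝ ↦ ‖(t : ℂ) + w‖) atTop atTop := by
  refine tendsto_atTop_mono (fun t ↦ ?_) (tendsto_atTop_add_const_right atTop (-‖w‖) tendsto_id)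
  have hnorm : t ≤ ‖(t : ℂ) + w‖ + ‖w‖ := by
    calc t ≤ ‖(t : ℂ)‖ := by rw [Complex.norm_real]; exact le_abs_self t
      _ ≤ ‖(t : ℂ) + w‖ + ‖w‖ := norm_le_add_norm_add _ _
  simp only [id]
  linarith

lemma eventually_closedBall_ofReal_add_sector (w : ℂ) :
    ∀ᶠ t : ℝ in atTop, ∀ z ∈ Metric.closedBall ((t : ℂ) + w) 1, ‖z‖ ≤ 2 * z.re := by
  filter_upwards [eventually_ge_atTop (3 * (‖w‖ + 1))] with t ht z hz
  have ht0 : 0 ≤ t := le_trans (by positivity) ht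
  have hdist : ‖z - t‖ ≤ ‖w‖ + 1 := by
    rw [mem_closedBall_iff_norm] at hz
    calc ‖z - t‖ = ‖w + (z - (t + w))‖ := by ring_nf
      _ ≤ ‖w‖ + 1 := (norm_add_le _ _).trans (by linarith)
  have hre := (abs_le.1 ((Complex.abs_re_le_norm _).trans hdist)).1
  have hnorm := norm_le_norm_add_norm_sub' z (t : ℂ)
  rw [Complex.sub_re, Complex.ofReal_re] at hre
  rw [Complex.norm_real, Real.norm_of_nonneg ht0] at hnorm
  linarith

lemma norm_ωc : ‖ωc‖ = 1 := by
  rw [ωc, show (2 * π * I / 3 : ℂ) = ((2 * π / 3 : ℝ) : ℂ) * I by push_cast; ring,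
    Complex.norm_exp_ofReal_mul_I]

lemma norm_le_two_mul_re_neg_ωc_mul {s : ℂ} (hre : 0 ≤ s.re) (him : 0 ≤ s.im) :
    ‖-ωc * s‖ ≤ 2 * (-ωc * s).re := by
  have hrotate : (-ωc * s).re = s.re / 2 + √3 / 2 * s.im := by
    rw [ωc_eq]
    simp
    ring
  have hsqrt : 1 ≤ √3 := Real.one_le_sqrt.2 (by norm_num)
  have hnorm := Complex.norm_le_abs_re_add_abs_im s
  rw [abs_of_nonneg hre, abs_of_nonneg him] at hnorm
  rw [hrotate, norm_mul, norm_neg, norm_ωc, one_mul]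
  nlinarith

lemma eventually_closedBall_neg_ωc_mul_sector (w : ℂ) :
    ∀ᶠ t : ℝ in atTop, ∀ z ∈ Metric.closedBall (-ωc * (t + w)) w.im, ‖z‖ ≤ 2 * z.re := by
  filter_upwards [eventually_ge_atTop (‖w‖ + |w.im|)] with t ht z hz
  have hω : -ωc ≠ 0 := by rw [neg_ne_zero, ← norm_pos_iff, norm_ωc]; exact one_pos
  obtain ⟨s, rfl⟩ : ∃ s, z = -ωc * s := ⟨(-ωc)⁻¹ * z, (mul_inv_cancel_left₀ hω z).symm⟩
  rw [mem_closedBall_iff_norm, ← mul_sub, norm_mul, norm_neg, norm_ωc, one_mul] at hz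
  have hre := (abs_le.1 ((Complex.abs_re_le_norm _).trans hz)).1
  have him := (abs_le.1 ((Complex.abs_im_le_norm _).trans hz)).1
  have hw := (abs_le.1 (Complex.abs_re_le_norm w)).1
  simp only [Complex.sub_re, Complex.sub_im, Complex.add_re, Complex.add_im, Complex.ofReal_re,
    Complex.ofReal_im] at hre him
  exact norm_le_two_mul_re_neg_ωc_mul (by linarith [le_abs_self w.im]) (by linarith)

lemma Wf_ne_zero {f : ℝ} (hf : 0 < f) : Wf f ≠ 0 := by
  have hpow : ((f ^ ((1 : ℝ) / 3) : ℝ) : ℂ) ≠ 0 := mod_cast (Real.rpow_pos_of_pos hf _).ne'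
  have hpi : (π : ℂ) ≠ 0 := mod_cast Real.pi_ne_zero
  exact div_ne_zero (mul_ne_zero hpow (Complex.exp_ne_zero _)) (mul_ne_zero two_ne_zero hpi)

lemma tendsto_airy_affine_atTop {c : ℝ} (hc : 0 < c) (b : ℂ) :
    Tendsto (fun x : ℝ ↦ Ai (c * x + b)) atTop (𝓝 0) ∧
      Tendsto (fun x : ℝ ↦ airyDeriv (c * x + b) * c) atTop (𝓝 0) := by
  have hscale : Tendsto (fun x : ℝ ↦ c * x) atTop atTop := tendsto_id.const_mul_atTop hc
  have hnorm := tendsto_norm_ofReal_add_atTop b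
  have hsector := eventually_closedBall_ofReal_add_sector b
  have hAi := (tendsto_Ai_zero hnorm (hsector.mono fun t ht ↦
    ht _ (Metric.mem_closedBall_self zero_le_one))).comp hscale
  have hderiv := (tendsto_airyDeriv_zero one_pos hnorm (hsector.mono fun t ht z hz ↦
    ht z (Metric.sphere_subset_closedBall hz))).comp hscale
  refine ⟨hAi.congr fun x ↦ ?_, ?_⟩
  · simp only [Function.comp, Complex.ofReal_mul]
  · simpa only [Function.comp, Complex.ofReal_mul, zero_mul] using hderiv.mul_const (c : ℂ)

lemma tendsto_airy_ωc_affine_atBot {c : ℝ} (hc : 0 < c) {b : ℂ} (hb : b.im < 0) :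
    Tendsto (fun x : ℝ ↦ Ai (ωc * c * x + ωc * b)) atBot (𝓝 0) ∧
      Tendsto (fun x : ℝ ↦ airyDeriv (ωc * c * x + ωc * b) * (ωc * c)) atBot (𝓝 0) := by
  have hscale : Tendsto (fun x : ℝ ↦ -(c * x)) atBot atTop :=
    tendsto_neg_atBot_atTop.comp (tendsto_id.const_mul_atBot hc)
  have hnorm : Tendsto (fun t : ℝ ↦ ‖-ωc * (t + -b)‖) atTop atTop := by
    simpa only [norm_mul, norm_neg, norm_ωc, one_mul] using tendsto_norm_ofReal_add_atTop (-b)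
  have him : 0 < (-b).im := by rwa [Complex.neg_im, neg_pos]
  have hsector := eventually_closedBall_neg_ωc_mul_sector (-b)
  have hAi := (tendsto_Ai_zero hnorm (hsector.mono fun t ht ↦
    ht _ (Metric.mem_closedBall_self him.le))).comp hscale
  have hderiv := (tendsto_airyDeriv_zero him hnorm (hsector.mono fun t ht z hz ↦
    ht z (Metric.sphere_subset_closedBall hz))).comp hscale
  have hpoint : ∀ x : ℝ, -ωc * (((-(c * x) : ℝ) : ℂ) + -b) = ωc * c * x + ωc * b := fun x ↦ by
    push_cast
    ring
  simp only [Function.comp_def, hpoint] at hAi hderiv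
  exact ⟨hAi, by simpa only [zero_mul] using hderiv.mul_const (ωc * c : ℂ)⟩

lemma rpow_one_third_pow_three {f : ℝ} (hf : 0 ≤ f) : (f ^ ((1 : ℝ) / 3)) ^ 3 = f := by
  rw [← Real.rpow_natCast, ← Real.rpow_mul hf]
  norm_num

lemma mul_rpow_neg_two_thirds {f : ℝ} (hf : 0 < f) :
    f * f ^ (-(2 : ℝ) / 3) = f ^ ((1 : ℝ) / 3) := by
  rw [← Real.rpow_one_add' hf.le (by norm_num)]
  norm_num

lemma sq_rpow_one_third_mul_rpow_neg_two_thirds {f : ℝ} (hf : 0 < f) :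
    (f ^ ((1 : ℝ) / 3)) ^ 2 * f ^ (-(2 : ℝ) / 3) = 1 := by
  rw [← Real.rpow_natCast, ← Real.rpow_mul hf.le, ← Real.rpow_add hf]
  norm_num

lemma airy_affine_wronskian (f : ℝ) (y : ℂ) :
    Ai y * (airyDeriv (ωc * y) * (ωc * (f ^ ((1 : ℝ) / 3) : ℝ)))
      - airyDeriv y * (f ^ ((1 : ℝ) / 3) : ℝ) * Ai (ωc * y) = Wf f := by
  rw [Wf]
  linear_combination ((f ^ ((1 : ℝ) / 3) : ℝ) : ℂ) * Ai_wronskian y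

theorem Df_ne_zero_of_im_pos {κ η f : ℝ} {z : ℂ} (hκ : 0 ≤ κ) (hη : η ≠ 0) (hf : 0 < f)
    (hz : 0 < z.im) : Df κ η f z ≠ 0 := by
  have hc_cube : ((f ^ ((1 : ℝ) / 3) : ℝ) : ℂ) ^ 3 = f := mod_cast rpow_one_third_pow_three hf.le
  have hcq : ((f ^ ((1 : ℝ) / 3) : ℝ) : ℂ) ^ 2 * (f ^ (-(2 : ℝ) / 3) : ℝ) = 1 :=
    mod_cast sq_rpow_one_third_mul_rpow_neg_two_thirds hf
  have hfq : (f : ℂ) * (f ^ (-(2 : ℝ) / 3) : ℝ) = (f ^ ((1 : ℝ) / 3) : ℝ) :=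
    mod_cast mul_rpow_neg_two_thirds hf
  have hc_pos : 0 < f ^ ((1 : ℝ) / 3) := Real.rpow_pos_of_pos hf _
  have hb : (-z * (f ^ (-(2 : ℝ) / 3) : ℝ)).im < 0 := by
    rw [Complex.im_mul_ofReal, Complex.neg_im]
    exact mul_neg_of_neg_of_pos (neg_lt_zero.2 hz) (Real.rpow_pos_of_pos hf _)
  set c : ℝ := f ^ ((1 : ℝ) / 3)
  set q : ℝ := f ^ (-(2 : ℝ) / 3) with hq
  have hφ : SchrodingerSolution (fun x ↦ f * x) z (fun x ↦ Ai (c * x + -z * q))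
      (fun x ↦ airyDeriv (c * x + -z * q) * c) :=
    schrodingerSolution_Ai_affine hc_cube (by linear_combination -z * hcq)
  have hψ : SchrodingerSolution (fun x ↦ f * x) z (fun x ↦ Ai (ωc * c * x + ωc * (-z * q)))
      (fun x ↦ airyDeriv (ωc * c * x + ωc * (-z * q)) * (ωc * c)) :=
    schrodingerSolution_Ai_affine (by rw [mul_pow, ωc_pow_three, one_mul, hc_cube])
      (by linear_combination -z * hcq - z * c ^ 2 * q * ωc_pow_three)
  have hW : ∀ x : ℝ, Ai (c * x + -z * q) * (airyDeriv (ωc * c * x + ωc * (-z * q)) * (ωc * c))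
      - airyDeriv (c * x + -z * q) * c * Ai (ωc * c * x + ωc * (-z * q)) = Wf f := fun x ↦ by
    rw [show ωc * c * x + ωc * (-z * q) = ωc * (c * x + -z * q) by ring, airy_affine_wronskian]
  have hdet := twoDeltaDeterminant_ne_zero (g := η⁻¹) (neg_le_self hκ) hz hφ hψ hW (Wf_ne_zero hf)
    (tendsto_airy_affine_atTop hc_pos _).1 (tendsto_airy_affine_atTop hc_pos _).2
    (tendsto_airy_ωc_affine_atBot hc_pos hb).1 (tendsto_airy_ωc_affine_atBot hc_pos hb).2
  convert! hdet using 1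
  have hη' : (η : ℂ) ≠ 0 := mod_cast hη
  have hW0 := Wf_ne_zero hf
  simp only [Df, alphaP, alphaM, betaP, betaM, ← hq, Complex.ofReal_neg, Complex.ofReal_inv]
  rw [show (c : ℂ) * κ + -z * q = -(z - κ * f) * q by rw [← hfq]; ring,
    show (c : ℂ) * -κ + -z * q = -(z + κ * f) * q by rw [← hfq]; ring,
    show ωc * c * κ + ωc * (-z * q) = -ωc * (z - κ * f) * q by rw [← hfq]; ring,
    show ωc * c * -κ + ωc * (-z * q) = -ωc * (z + κ * f) * q by rw [← hfq]; ring]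
  field_simp

/-! ### The square root of a perturbation of one -/

lemma one_add_ne_zero_of_norm_le {h : ℂ} (hh : ‖h‖ ≤ 1 / 100) : 1 + h ≠ 0 := by
  intro h0
  rw [← neg_eq_of_add_eq_zero_right h0, norm_neg, norm_one] at hh
  norm_num at hh

lemma cpow_three_halves_sq (x : ℂ) : (x ^ (3 / 2 : ℂ)) ^ 2 = x ^ 3 := by
  rw [← Complex.cpow_mul_nat, show (3 / 2 : ℂ) * (2 : ℕ) = (3 : ℕ) by norm_num,
    Complex.cpow_natCast]

lemma norm_one_add_cpow_three_halves_sub_one_le {h : ℂ} (hh : ‖h‖ ≤ 1 / 100) :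
    ‖(1 + h) ^ (3 / 2 : ℂ) - 1‖ ≤ 1 / 10 := by
  rw [Complex.cpow_def_of_ne_zero (one_add_ne_zero_of_norm_le hh)]
  have hlog := Complex.norm_log_one_add_half_le_self (z := h) (by linarith)
  have hexponent : ‖Complex.log (1 + h) * (3 / 2)‖ ≤ 3 / 2 * ‖h‖ * (3 / 2) := by
    rw [norm_mul]
    norm_num
    linarith
  linarith [Complex.norm_exp_sub_one_le (x := Complex.log (1 + h) * (3 / 2)) (by linarith)]

section SqrtPair

variable {A B h : ℂ}

lemma norm_mul_sub_one_le_of_sq_eq (hA : A ^ 2 = (1 + h) ^ 3) (hB : B ^ 2 = (1 - h) ^ 3)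
    (hA_near : ‖A - 1‖ ≤ 1 / 10) (hB_near : ‖B - 1‖ ≤ 1 / 10) (hh : ‖h‖ ≤ 1 / 100) :
    ‖A * B - 1‖ ≤ 4 * ‖h‖ ^ 2 := by
  have hfactor : (A * B - 1) * (A * B + 1) = -h ^ 2 * (3 - 3 * h ^ 2 + h ^ 4) := by
    linear_combination B ^ 2 * hA + (1 + h) ^ 3 * hB
  have hfactor_norm : ‖A * B - 1‖ * ‖A * B + 1‖ = ‖h‖ ^ 2 * ‖3 - 3 * h ^ 2 + h ^ 4‖ := by
    rw [← norm_mul, hfactor, norm_mul, norm_neg, norm_pow]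
  have hsum : 1 ≤ ‖A * B + 1‖ := by
    have hdev : ‖(A - 1) * (B - 1) + (A - 1) + (B - 1)‖ ≤ 1 := by
      refine norm_add₃_le.trans ?_
      rw [norm_mul]
      nlinarith [norm_nonneg (A - 1), norm_nonneg (B - 1)]
    have htri := norm_sub_le (A * B + 1) ((A - 1) * (B - 1) + (A - 1) + (B - 1))
    rw [show A * B + 1 - ((A - 1) * (B - 1) + (A - 1) + (B - 1)) = 2 by ring,
      Complex.norm_ofNat] at htri
    linarith
  have hpoly : ‖3 - 3 * h ^ 2 + h ^ 4‖ ≤ 4 := by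
    have htri := (norm_add_le (3 - 3 * h ^ 2) (h ^ 4)).trans
      (add_le_add_left (norm_sub_le 3 (3 * h ^ 2)) _)
    simp only [norm_mul, norm_pow, Complex.norm_ofNat] at htri
    have hsq : ‖h‖ ^ 2 ≤ 1 / 100 := by nlinarith [norm_nonneg h]
    nlinarith [sq_nonneg ‖h‖]
  nlinarith [norm_nonneg (A * B - 1), mul_le_mul_of_nonneg_left hpoly (sq_nonneg ‖h‖)]

lemma norm_add_sub_two_le_of_sq_eq (hA : A ^ 2 = (1 + h) ^ 3) (hB : B ^ 2 = (1 - h) ^ 3)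
    (hA_near : ‖A - 1‖ ≤ 1 / 10) (hB_near : ‖B - 1‖ ≤ 1 / 10) (hh : ‖h‖ ≤ 1 / 100) :
    ‖A + B - 2‖ ≤ 6 * ‖h‖ ^ 2 := by
  have hfactor : (A + B - 2) * (A + B + 2) = 6 * h ^ 2 + 2 * (A * B - 1) := by
    linear_combination hA + hB
  have hnear : ‖A + B - 2‖ ≤ 1 / 5 := by
    rw [show A + B - 2 = (A - 1) + (B - 1) by ring]
    exact (norm_add_le _ _).trans (by linarith)
  have hsum : 3 ≤ ‖A + B + 2‖ := by
    have htri := norm_sub_le (A + B + 2) (A + B - 2)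
    rw [show A + B + 2 - (A + B - 2) = 4 by ring, Complex.norm_ofNat] at htri
    linarith
  have hright : ‖6 * h ^ 2 + 2 * (A * B - 1)‖ ≤ 6 * ‖h‖ ^ 2 + 2 * ‖A * B - 1‖ :=
    (norm_add_le _ _).trans_eq (by simp)
  rw [← hfactor, norm_mul] at hright
  nlinarith [norm_nonneg (A + B - 2), norm_mul_sub_one_le_of_sq_eq hA hB hA_near hB_near hh]

lemma norm_sub_sub_three_mul_le_of_sq_eq (hA : A ^ 2 = (1 + h) ^ 3) (hB : B ^ 2 = (1 - h) ^ 3)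
    (hA_near : ‖A - 1‖ ≤ 1 / 10) (hB_near : ‖B - 1‖ ≤ 1 / 10) (hh : ‖h‖ ≤ 1 / 100) :
    ‖A - B - 3 * h‖ ≤ 20 * ‖h‖ ^ 3 := by
  have hadd := norm_add_sub_two_le_of_sq_eq hA hB hA_near hB_near hh
  have hfactor : (A - B - 3 * h) * (A + B) = 2 * h ^ 3 - 3 * h * (A + B - 2) := by
    linear_combination hA - hB
  have hsum : 1 ≤ ‖A + B‖ := by
    have htri := norm_sub_le (A + B) (A + B - 2)
    rw [show A + B - (A + B - 2) = 2 by ring, Complex.norm_ofNat] at htri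
    nlinarith [norm_nonneg h]
  calc ‖A - B - 3 * h‖ ≤ ‖A - B - 3 * h‖ * ‖A + B‖ := le_mul_of_one_le_right (norm_nonneg _) hsum
    _ = ‖2 * h ^ 3 - 3 * h * (A + B - 2)‖ := by rw [← norm_mul, hfactor]
    _ ≤ 2 * ‖h‖ ^ 3 + 3 * ‖h‖ * ‖A + B - 2‖ := (norm_sub_le _ _).trans_eq (by simp)
    _ ≤ 2 * ‖h‖ ^ 3 + 3 * ‖h‖ * (6 * ‖h‖ ^ 2) := by gcongr
    _ = 20 * ‖h‖ ^ 3 := by ring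

end SqrtPair

/-! ### Asymptotics of the Airy solutions in polar coordinates -/

/-- The logarithm of the square root of `r e^{iθ}`, continuous in `θ`. -/
noncomputable def waveLog (r θ : ℝ) : ℂ := (Real.log r / 2 : ℝ) + (θ / 2 : ℝ) * I

/-- The wave number `k = √z` at `z = r e^{iθ}`, on the branch continuous in `θ`. -/
noncomputable def waveNumber (r θ : ℝ) : ℂ := Complex.exp (waveLog r θ)

lemma waveLog_re (r θ : ℝ) : (waveLog r θ).re = Real.log r / 2 := by simp [waveLog]

lemma waveLog_im (r θ : ℝ) : (waveLog r θ).im = θ / 2 := by simp [waveLog]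

lemma waveNumber_ne_zero (r θ : ℝ) : waveNumber r θ ≠ 0 := Complex.exp_ne_zero _

lemma norm_waveNumber {r : ℝ} (hr : 0 < r) (θ : ℝ) : ‖waveNumber r θ‖ = √r := by
  rw [waveNumber, Complex.norm_exp, waveLog_re, Real.exp_half, Real.exp_log hr]

lemma waveNumber_sq {r : ℝ} (hr : 0 < r) (θ : ℝ) :
    waveNumber r θ ^ 2 = r * Complex.exp (I * θ) := by
  rw [waveNumber, ← Complex.exp_nat_mul,
    show ((2 : ℕ) : ℂ) * waveLog r θ = (Real.log r : ℝ) + I * θ by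
      rw [waveLog]; push_cast; ring,
    Complex.exp_add, ← Complex.ofReal_exp, Real.exp_log hr]

lemma waveNumber_pow_three {r : ℝ} (hr : 0 < r) (θ : ℝ) :
    waveNumber r θ ^ 3 = (r * √r : ℝ) * Complex.exp ((3 * θ / 2 : ℝ) * I) := by
  have hmod : r * √r = Real.exp (Real.log r + Real.log r / 2) := by
    rw [Real.exp_add, Real.exp_half, Real.exp_log hr]
  rw [waveNumber, waveLog, ← Complex.exp_nat_mul, hmod, Complex.ofReal_exp, ← Complex.exp_add]
  congr 1
  push_cast
  ring

/-- Half the logarithm of the Airy argument `e^{2iτ} z f^{-2/3}` at `z = r e^{iθ}`. -/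
noncomputable def airyArgLog (f r θ τ : ℝ) : ℂ := τ * I + waveLog r θ - (Real.log f / 3 : ℝ)

/-- The leading amplitude `x^{-1/4} / (2 √π)` of the Airy function at
`x = e^{2iτ} z f^{-2/3}`, `z = r e^{iθ}`. -/
noncomputable def airyAmplitude (f r θ τ : ℝ) : ℂ :=
  Complex.exp (-(airyArgLog f r θ τ / 2)) / (2 * √π : ℝ)

lemma airyArgLog_re (f r θ τ : ℝ) :
    (airyArgLog f r θ τ).re = Real.log r / 2 - Real.log f / 3 := by
  rw [airyArgLog, Complex.sub_re, Complex.add_re, waveLog_re, Complex.ofReal_re]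
  simp

lemma airyArgLog_im (f r θ τ : ℝ) : (airyArgLog f r θ τ).im = τ + θ / 2 := by
  rw [airyArgLog, Complex.sub_im, Complex.add_im, waveLog_im, Complex.ofReal_im]
  simp

lemma exp_two_mul_airyArgLog {f : ℝ} (hf : 0 < f) (r θ τ : ℝ) :
    Complex.exp (2 * airyArgLog f r θ τ)
      = Complex.exp (2 * (τ * I)) * waveNumber r θ ^ 2 * (f ^ (-(2 : ℝ) / 3) : ℝ) := by
  rw [show 2 * airyArgLog f r θ τ = 2 * (τ * I) + (2 : ℕ) * waveLog r θ
      + ((Real.log f * (-(2 : ℝ) / 3) : ℝ) : ℂ) by rw [airyArgLog]; push_cast; ring,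
    Complex.exp_add, Complex.exp_add, Complex.exp_nat_mul, ← Complex.ofReal_exp,
    ← Real.rpow_def_of_pos hf, waveNumber]

lemma exp_three_mul_airyArgLog {f : ℝ} (hf : 0 < f) (r θ τ : ℝ) :
    Complex.exp (3 * airyArgLog f r θ τ)
      = Complex.exp (3 * (τ * I)) * waveNumber r θ ^ 3 / f := by
  rw [show 3 * airyArgLog f r θ τ = 3 * (τ * I) + (3 : ℕ) * waveLog r θ - (Real.log f : ℝ) by
      rw [airyArgLog]; push_cast; ring,
    Complex.exp_sub, Complex.exp_add, Complex.exp_nat_mul, ← Complex.ofReal_exp,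
    Real.exp_log hf, waveNumber]

lemma norm_exp_mul_one_add_sub_one_le {w ε : ℂ} (hw : ‖w‖ ≤ 1) (hε : ‖ε‖ ≤ 1) :
    ‖Complex.exp w * (1 + ε) - 1‖ ≤ 4 * ‖w‖ + ‖ε‖ := by
  have hfactor : ‖1 + ε‖ ≤ 2 := (norm_add_le _ _).trans (by rw [norm_one]; linarith)
  calc ‖Complex.exp w * (1 + ε) - 1‖ = ‖(Complex.exp w - 1) * (1 + ε) + ε‖ := by congr 1; ring
    _ ≤ ‖Complex.exp w - 1‖ * ‖1 + ε‖ + ‖ε‖ := by rw [← norm_mul]; exact norm_add_le _ _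
    _ ≤ 2 * ‖w‖ * 2 + ‖ε‖ := by gcongr; exact Complex.norm_exp_sub_one_le hw
    _ = 4 * ‖w‖ + ‖ε‖ := by ring

section PointAsymptotics

variable {f r θ τ : ℝ} {μ h : ℂ}

lemma norm_airyError_airyArgLog_add_le (hf : 0 < f) (hr : 0 < r) (hμ : ‖μ‖ ≤ 1 / 100)
    (hτ : |τ + θ / 2| ≤ π / 3) :
    ‖airyError (airyArgLog f r θ τ + μ)‖ ≤ 1200 * (f / (r * √r)) := by
  have him : |(airyArgLog f r θ τ + μ).im| ≤ 11 / 10 := by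
    rw [Complex.add_im, airyArgLog_im]
    linarith [abs_add_le (τ + θ / 2) μ.im, Complex.abs_im_le_norm μ, Real.pi_lt_d2]
  have hscale : f / (r * √r) = Real.exp (Real.log f - (Real.log r + Real.log r / 2)) := by
    rw [Real.exp_sub, Real.exp_add, Real.exp_half, Real.exp_log hf, Real.exp_log hr]
  have hexp_half : Real.exp (1 / 2) ≤ 2 := by
    rw [Real.exp_half, Real.sqrt_le_left (by norm_num)]
    linarith [Real.exp_one_lt_d9]
  have hμ_re : -(3 * μ.re) ≤ 1 / 2 := by
    linarith [(abs_le.1 ((Complex.abs_re_le_norm μ).trans hμ)).1]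
  calc ‖airyError (airyArgLog f r θ τ + μ)‖
      ≤ 600 * Real.exp (-(3 * (airyArgLog f r θ τ + μ).re)) := norm_airyError_le him
    _ = 600 * (f / (r * √r) * Real.exp (-(3 * μ.re))) := by
        rw [hscale, ← Real.exp_add, Complex.add_re, airyArgLog_re]
        ring_nf
    _ ≤ 600 * (f / (r * √r) * 2) := by
        gcongr
        exact (Real.exp_le_exp.2 hμ_re).trans hexp_half
    _ = 1200 * (f / (r * √r)) := by ring

lemma exists_Ai_eq_airyAmplitude_mul (hf : 0 < f) (hr : 0 < r) (hh : ‖h‖ ≤ 1 / 100)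
    (hsmall : 1200 * (f / (r * √r)) ≤ 1) (hτ : |τ + θ / 2| ≤ π / 3) :
    ∃ ε : ℂ, ‖ε‖ ≤ 1200 * (‖h‖ + f / (r * √r)) ∧
      Ai (Complex.exp (2 * (τ * I)) * (waveNumber r θ ^ 2 * (1 + h)) * (f ^ (-(2 : ℝ) / 3) : ℝ))
      = airyAmplitude f r θ τ * Complex.exp (-(Complex.exp (3 * (τ * I)) *
          (2 / (3 * f) * waveNumber r θ ^ 3 * (1 + h) ^ (3 / 2 : ℂ)))) * (1 + ε) := by
  have h1h : 1 + h ≠ 0 := one_add_ne_zero_of_norm_le hh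
  set μ : ℂ := Complex.log (1 + h) / 2 with hμ
  set l : ℂ := airyArgLog f r θ τ with hl
  have hμ_norm : ‖μ‖ ≤ ‖h‖ := by
    rw [hμ, norm_div, Complex.norm_ofNat]
    linarith [Complex.norm_log_one_add_half_le_self (z := h) (by linarith), norm_nonneg h]
  have him : |(l + μ).im| < π / 2 := by
    rw [Complex.add_im, hl, airyArgLog_im]
    linarith [abs_add_le (τ + θ / 2) μ.im, Complex.abs_im_le_norm μ, Real.pi_gt_three]
  have herror := norm_airyError_airyArgLog_add_le hf hr (hμ_norm.trans hh) hτ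
  have harg : Complex.exp (2 * (l + μ))
      = Complex.exp (2 * (τ * I)) * (waveNumber r θ ^ 2 * (1 + h)) * (f ^ (-(2 : ℝ) / 3) : ℝ) := by
    rw [mul_add, Complex.exp_add, exp_two_mul_airyArgLog hf, hμ, mul_div_cancel₀ _ two_ne_zero,
      Complex.exp_log h1h]
    ring
  have hphase : 2 / 3 * Complex.exp (3 * (l + μ)) = Complex.exp (3 * (τ * I)) *
      (2 / (3 * f) * waveNumber r θ ^ 3 * (1 + h) ^ (3 / 2 : ℂ)) := by
    rw [mul_add, Complex.exp_add, exp_three_mul_airyArgLog hf, Complex.cpow_def_of_ne_zero h1h,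
      show 3 * μ = Complex.log (1 + h) * (3 / 2) by rw [hμ]; ring]
    field_simp
  refine ⟨Complex.exp (-(μ / 2)) * (1 + airyError (l + μ)) - 1, ?_, ?_⟩
  · have hw : ‖-(μ / 2)‖ = ‖μ‖ / 2 := by rw [norm_neg, norm_div, Complex.norm_ofNat]
    have hbound := norm_exp_mul_one_add_sub_one_le (w := -(μ / 2)) (by linarith)
      (herror.trans hsmall)
    linarith [norm_nonneg h]
  · rw [← harg, Ai_exp_two_mul him, hphase, airyAmplitude, ← hl,
      show -((l + μ) / 2) = -(l / 2) + -(μ / 2) by ring, Complex.exp_add]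
    ring

end PointAsymptotics

section PairAsymptotics

variable {κ f r θ τ : ℝ}

/-- The relative displacement `h = κ f / z` of `z = r e^{iθ}` caused by the shift `z ↦ z + κ f`. -/
noncomputable def relShift (κ f r θ : ℝ) : ℂ := κ * f / waveNumber r θ ^ 2

/-- The mean of the Airy phases `(2i / 3f) (z ± κ f)^{3/2}` at the two centres. -/
noncomputable def meanPhase (κ f r θ : ℝ) : ℂ :=
  I * (waveNumber r θ ^ 3 / (3 * f)
    * ((1 + relShift κ f r θ) ^ (3 / 2 : ℂ) + (1 - relShift κ f r θ) ^ (3 / 2 : ℂ)))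

/-- Half the difference of the Airy phases `(2i / 3f) (z ± κ f)^{3/2}`, minus its leading term
`i κ √z`. -/
noncomputable def phaseError (κ f r θ : ℝ) : ℂ :=
  I * (waveNumber r θ ^ 3 / (3 * f)
    * ((1 + relShift κ f r θ) ^ (3 / 2 : ℂ) - (1 - relShift κ f r θ) ^ (3 / 2 : ℂ)
      - 3 * relShift κ f r θ))

/-- The constant of the error bound `wkbError`; no attempt is made to optimise it. -/
noncomputable def wkbConst (κ : ℝ) : ℝ := 10000 * (1 + |κ| + |κ| ^ 2 + |κ| ^ 3)

/-- A bound for the relative error of the leading-order asymptotics of the shifted Airy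
solutions at `|z| = r`. -/
noncomputable def wkbError (κ f r : ℝ) : ℝ := wkbConst κ * (f / r + f / (r * √r))

lemma relShift_neg (κ f r θ : ℝ) : relShift (-κ) f r θ = -relShift κ f r θ := by
  rw [relShift, relShift]
  push_cast
  ring

lemma meanPhase_neg (κ f r θ : ℝ) : meanPhase (-κ) f r θ = meanPhase κ f r θ := by
  rw [meanPhase, meanPhase, relShift_neg, sub_neg_eq_add, ← sub_eq_add_neg, add_comm (_ ^ _)]

lemma wkbError_neg (κ f r : ℝ) : wkbError (-κ) f r = wkbError κ f r := by
  simp only [wkbError, wkbConst, abs_neg]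

lemma waveNumber_sq_mul_one_add_relShift (κ f r θ : ℝ) :
    waveNumber r θ ^ 2 * (1 + relShift κ f r θ) = waveNumber r θ ^ 2 + κ * f := by
  have hk := waveNumber_ne_zero r θ
  rw [relShift]
  field_simp

lemma neg_airyExponent_eq (hf : f ≠ 0) (u : ℂ) :
    -(u * (2 / (3 * f) * waveNumber r θ ^ 3 * (1 + relShift κ f r θ) ^ (3 / 2 : ℂ)))
      = I * u * meanPhase κ f r θ + -(u * (κ * waveNumber r θ)) + I * u * phaseError κ f r θ := by
  have hleading : waveNumber r θ ^ 3 / (3 * f) * (3 * relShift κ f r θ) = κ * waveNumber r θ := by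
    have hk := waveNumber_ne_zero r θ
    have hf' : (f : ℂ) ≠ 0 := mod_cast hf
    rw [relShift]
    field_simp
  rw [meanPhase, phaseError]
  linear_combination -u * hleading + u * (waveNumber r θ ^ 3 / (3 * f) * (3 * relShift κ f r θ)
    - 2 / (3 * f) * waveNumber r θ ^ 3 * (1 + relShift κ f r θ) ^ (3 / 2 : ℂ)) * Complex.I_sq

lemma norm_relShift (hf : 0 < f) (hr : 0 < r) : ‖relShift κ f r θ‖ = |κ| * (f / r) := by
  rw [relShift, norm_div, norm_mul, norm_pow, norm_waveNumber hr, Complex.norm_real,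
    Complex.norm_real, Real.norm_of_nonneg hf.le, Real.sq_sqrt hr.le, Real.norm_eq_abs,
    mul_div_assoc]

lemma norm_waveNumber_pow_three_div (hf : 0 < f) (hr : 0 < r) :
    ‖waveNumber r θ ^ 3 / (3 * f)‖ = √r ^ 3 / (3 * f) := by
  rw [norm_div, norm_pow, norm_waveNumber hr, norm_mul, Complex.norm_real,
    Real.norm_of_nonneg hf.le, Complex.norm_ofNat]

lemma le_wkbError (hf : 0 < f) (hr : 0 < r) :
    1200 * (|κ| * (f / r) + f / (r * √r)) + 28 * |κ| ^ 3 * (f / (r * √r)) ≤ wkbError κ f r := by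
  have hκ := abs_nonneg κ
  have hcoef : 1200 + 1200 * |κ| + 28 * |κ| ^ 3 ≤ wkbConst κ := by
    rw [wkbConst]
    nlinarith [pow_nonneg hκ 2, pow_nonneg hκ 3]
  have hδ₁ : 0 ≤ f / r := by positivity
  have hδ₂ : 0 ≤ f / (r * √r) := by positivity
  calc _ ≤ (1200 + 1200 * |κ| + 28 * |κ| ^ 3) * (f / r + f / (r * √r)) := by
        linarith [mul_nonneg hκ hδ₂, mul_nonneg (pow_nonneg hκ 3) hδ₁]
    _ ≤ wkbError κ f r := by rw [wkbError]; gcongr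

lemma norm_relShift_le_of_wkbError_le (hf : 0 < f) (hr : 0 < r) (hsmall : wkbError κ f r ≤ 1) :
    ‖relShift κ f r θ‖ ≤ 1 / 100 := by
  have hδ : 0 ≤ f / (r * √r) := by positivity
  rw [norm_relShift hf hr]
  linarith [le_wkbError (κ := κ) hf hr, mul_nonneg (pow_nonneg (abs_nonneg κ) 3) hδ]

lemma abs_two_mul_meanPhase_re_add_le (hf : 0 < f) (hr : 0 < r) (hsmall : wkbError κ f r ≤ 1) :
    |2 * (meanPhase κ f r θ).re + 4 / (3 * f) * (r * √r) * Real.sin (3 * θ / 2)|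
      ≤ 4 * κ ^ 2 * (f / √r) := by
  have hh := norm_relShift_le_of_wkbError_le (θ := θ) hf hr hsmall
  have hlead : (I * waveNumber r θ ^ 3).re = -(r * √r * Real.sin (3 * θ / 2)) := by
    rw [waveNumber_pow_three hr, Complex.I_mul_re, Complex.im_ofReal_mul,
      Complex.exp_ofReal_mul_I_im]
  have hadd := norm_add_sub_two_le_of_sq_eq (cpow_three_halves_sq (1 + relShift κ f r θ))
    (cpow_three_halves_sq (1 - relShift κ f r θ)) (norm_one_add_cpow_three_halves_sub_one_le hh)
    (by simpa only [sub_eq_add_neg] using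
      norm_one_add_cpow_three_halves_sub_one_le ((norm_neg _).trans_le hh)) hh
  set S := (1 + relShift κ f r θ) ^ (3 / 2 : ℂ) + (1 - relShift κ f r θ) ^ (3 / 2 : ℂ) with hS
  have hsplit : (2 : ℝ) * meanPhase κ f r θ
      = 2 * (I * (waveNumber r θ ^ 3 / (3 * f) * (S - 2)))
        + (4 / (3 * f) : ℝ) * (I * waveNumber r θ ^ 3) := by
    rw [meanPhase, ← hS]
    push_cast
    ring
  have hre := congrArg Complex.re hsplit
  rw [Complex.re_ofReal_mul, Complex.add_re, Complex.re_ofReal_mul, hlead] at hre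
  rw [hre, show ∀ x : ℝ, x + 4 / (3 * f) * -(r * √r * Real.sin (3 * θ / 2))
    + 4 / (3 * f) * (r * √r) * Real.sin (3 * θ / 2) = x from fun x ↦ by ring]
  calc _ ≤ ‖2 * (I * (waveNumber r θ ^ 3 / (3 * f) * (S - 2)))‖ := Complex.abs_re_le_norm _
    _ = 2 * (√r ^ 3 / (3 * f) * ‖S - 2‖) := by
        rw [norm_mul, norm_mul, norm_mul, Complex.norm_I, norm_waveNumber_pow_three_div hf hr,
          Complex.norm_ofNat, one_mul]
    _ ≤ 2 * (√r ^ 3 / (3 * f) * (6 * ‖relShift κ f r θ‖ ^ 2)) := by gcongr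
    _ = 4 * κ ^ 2 * (f / √r) := by
        rw [norm_relShift hf hr, mul_pow, sq_abs]
        nth_rw 2 [← Real.sq_sqrt hr.le]
        field_simp
        ring

lemma norm_phaseError_le (hf : 0 < f) (hf1 : f ≤ 1) (hr : 0 < r) (hsmall : wkbError κ f r ≤ 1) :
    ‖phaseError κ f r θ‖ ≤ 7 * |κ| ^ 3 * (f / (r * √r)) := by
  have hh := norm_relShift_le_of_wkbError_le (θ := θ) hf hr hsmall
  have hsub := norm_sub_sub_three_mul_le_of_sq_eq (cpow_three_halves_sq (1 + relShift κ f r θ))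
    (cpow_three_halves_sq (1 - relShift κ f r θ)) (norm_one_add_cpow_three_halves_sub_one_le hh)
    (by simpa only [sub_eq_add_neg] using
      norm_one_add_cpow_three_halves_sub_one_le ((norm_neg _).trans_le hh)) hh
  rw [phaseError, norm_mul, norm_mul, Complex.norm_I, one_mul, norm_waveNumber_pow_three_div hf hr]
  calc _ ≤ √r ^ 3 / (3 * f) * (20 * ‖relShift κ f r θ‖ ^ 3) := by gcongr
    _ = 20 / 3 * |κ| ^ 3 * (f / (r * √r)) * f := by
        rw [norm_relShift hf hr]
        nth_rw 2 3 [← Real.sq_sqrt hr.le]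
        field_simp
    _ ≤ 7 * |κ| ^ 3 * (f / (r * √r)) * 1 := by gcongr; norm_num
    _ = 7 * |κ| ^ 3 * (f / (r * √r)) := mul_one _

/-- `x` approximates `y` with relative error at most `d`. -/
def RelErrorLE (d : ℝ) (x y : ℂ) : Prop := ‖x - y‖ ≤ d * ‖y‖

lemma relErrorLE_mul_one_add {d : ℝ} {ε : ℂ} (y : ℂ) (hε : ‖ε‖ ≤ d) :
    RelErrorLE d (y * (1 + ε)) y := by
  rw [RelErrorLE, mul_one_add, add_sub_cancel_left, norm_mul, mul_comm d]
  gcongr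

lemma exists_Ai_shift_eq (hf : 0 < f) (hf1 : f ≤ 1) (hr : 0 < r) (hsmall : wkbError κ f r ≤ 1)
    (hτ : |τ + θ / 2| ≤ π / 3) :
    ∃ x : ℂ, RelErrorLE (wkbError κ f r) x
        (Complex.exp (-(Complex.exp (3 * (τ * I)) * (κ * waveNumber r θ)))) ∧
      Ai (Complex.exp (2 * (τ * I)) * (waveNumber r θ ^ 2 + κ * f) * (f ^ (-(2 : ℝ) / 3) : ℝ))
      = airyAmplitude f r θ τ
        * Complex.exp (I * Complex.exp (3 * (τ * I)) * meanPhase κ f r θ) * x := by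
  have hh := norm_relShift_le_of_wkbError_le (θ := θ) hf hr hsmall
  have hle := le_wkbError (κ := κ) hf hr
  have hδ₁ : 0 ≤ |κ| * (f / r) := by positivity
  have hδ₂ : 0 ≤ f / (r * √r) := by positivity
  have hδ₃ : 0 ≤ |κ| ^ 3 * (f / (r * √r)) := by positivity
  set u := Complex.exp (3 * (τ * I)) with hu
  have hu_norm : ‖u‖ = 1 := by
    rw [hu, show 3 * (τ * I) = ((3 * τ : ℝ) : ℂ) * I by push_cast; ring,
      Complex.norm_exp_ofReal_mul_I]
  have hphase : ‖I * u * phaseError κ f r θ‖ ≤ 7 * |κ| ^ 3 * (f / (r * √r)) := by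
    rw [norm_mul, norm_mul, Complex.norm_I, hu_norm, one_mul, one_mul]
    exact norm_phaseError_le hf hf1 hr hsmall
  obtain ⟨ε, hε, hAi⟩ := exists_Ai_eq_airyAmplitude_mul hf hr hh (by linarith) hτ
  rw [norm_relShift hf hr] at hε
  refine ⟨_, relErrorLE_mul_one_add _
    (ε := Complex.exp (I * u * phaseError κ f r θ) * (1 + ε) - 1) ?_, ?_⟩
  · linarith [norm_exp_mul_one_add_sub_one_le (w := I * u * phaseError κ f r θ) (ε := ε)
      (by linarith) (by linarith)]
  · rw [waveNumber_sq_mul_one_add_relShift, neg_airyExponent_eq hf.ne', Complex.exp_add,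
      Complex.exp_add] at hAi
    rw [hAi]
    ring

end PairAsymptotics

/-! ### Asymptotic forms of the determinant -/

lemma ωc_ne_zero : ωc ≠ 0 := Complex.exp_ne_zero _

lemma exp_two_mul_pi_div_two : Complex.exp (2 * ((π / 2 : ℝ) * I)) = -1 := by
  rw [← Complex.exp_pi_mul_I]
  congr 1
  push_cast
  ring

lemma exp_two_mul_pi_div_six : Complex.exp (2 * ((π / 6 : ℝ) * I)) = -ωc ^ 2 := by
  rw [ωc, ← Complex.exp_nat_mul, neg_eq_neg_one_mul, ← Complex.exp_neg_pi_mul_I, ← Complex.exp_add]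
  congr 1
  push_cast
  ring

lemma exp_two_mul_neg_pi_div_six : Complex.exp (2 * ((-(π / 6) : ℝ) * I)) = -ωc := by
  rw [ωc, ← neg_one_mul (Complex.exp (2 * π * I / 3)), ← Complex.exp_neg_pi_mul_I,
    ← Complex.exp_add]
  congr 1
  push_cast
  ring

lemma exp_three_mul_pi_div_two : Complex.exp (3 * ((π / 2 : ℝ) * I)) = -I := by
  rw [show 3 * (((π / 2 : ℝ) : ℂ) * I) = π * I + π / 2 * I by push_cast; ring,
    Complex.exp_add, Complex.exp_pi_mul_I, Complex.exp_pi_div_two_mul_I, neg_one_mul]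

lemma exp_three_mul_pi_div_six : Complex.exp (3 * ((π / 6 : ℝ) * I)) = I := by
  rw [show 3 * (((π / 6 : ℝ) : ℂ) * I) = π / 2 * I by push_cast; ring,
    Complex.exp_pi_div_two_mul_I]

lemma exp_three_mul_neg_pi_div_six : Complex.exp (3 * ((-(π / 6) : ℝ) * I)) = -I := by
  rw [show 3 * (((-(π / 6) : ℝ) : ℂ) * I) = -(π / 2 * I) by push_cast; ring,
    Complex.exp_neg, Complex.exp_pi_div_two_mul_I, Complex.inv_I]

section SectorForms

variable {κ η f r θ : ℝ}

lemma airyAmplitude_ne_zero (f r θ τ : ℝ) : airyAmplitude f r θ τ ≠ 0 :=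
  div_ne_zero (Complex.exp_ne_zero _) (mod_cast (by positivity : 2 * √π ≠ 0))

lemma airyAmplitude_eq_mul_exp (f r θ τ τ' : ℝ) :
    airyAmplitude f r θ τ' = airyAmplitude f r θ τ * Complex.exp (((τ - τ') / 2 : ℝ) * I) := by
  rw [airyAmplitude, airyAmplitude, airyArgLog, airyArgLog, div_mul_eq_mul_div, ← Complex.exp_add]
  congr 2
  push_cast
  ring

lemma ωc_sq_mul_airyAmplitude_pi_div_six (f r θ : ℝ) :
    ωc ^ 2 * airyAmplitude f r θ (π / 6) = -I * airyAmplitude f r θ (π / 2) := by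
  have hrot : -ωc ^ 2 * Complex.exp (((π / 2 - π / 6) / 2 : ℝ) * I) = I := by
    rw [← exp_two_mul_pi_div_six, ← Complex.exp_add,
      show 2 * ((π / 6 : ℝ) * I) + ((π / 2 - π / 6) / 2 : ℝ) * I = π / 2 * I by push_cast; ring,
      Complex.exp_pi_div_two_mul_I]
  rw [airyAmplitude_eq_mul_exp f r θ (π / 2) (π / 6)]
  linear_combination -airyAmplitude f r θ (π / 2) * hrot

lemma airyAmplitude_neg_pi_div_six (f r θ : ℝ) :
    airyAmplitude f r θ (-(π / 6)) = -ωc ^ 2 * airyAmplitude f r θ (π / 2) := by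
  rw [airyAmplitude_eq_mul_exp f r θ (π / 2) (-(π / 6)), ← exp_two_mul_pi_div_six, mul_comm]
  congr 2
  push_cast
  ring

lemma airyAmplitude_sq (f r θ τ : ℝ) :
    airyAmplitude f r θ τ ^ 2 = Complex.exp (-airyArgLog f r θ τ) / (4 * π) := by
  have hpi : ((√π : ℝ) : ℂ) ^ 2 = π := by rw [← Complex.ofReal_pow, Real.sq_sqrt Real.pi_pos.le]
  rw [airyAmplitude, div_pow, ← Complex.exp_nat_mul]
  push_cast
  rw [mul_pow, hpi]
  ring_nf

lemma Wf_eq_airyAmplitude_sq_mul_waveNumber (hf : 0 < f) (r θ : ℝ) :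
    Wf f = -ωc ^ 2 * airyAmplitude f r θ (π / 2) ^ 2 * (2 * waveNumber r θ) := by
  have hcube_root : ((f ^ ((1 : ℝ) / 3) : ℝ) : ℂ) = Complex.exp ((Real.log f / 3 : ℝ) : ℂ) := by
    rw [Real.rpow_def_of_pos hf, Complex.ofReal_exp]
    ring_nf
  have hexp : Complex.exp ((Real.log f / 3 : ℝ) : ℂ) * Complex.exp (-(π : ℂ) * I / 6)
      = Complex.exp (2 * ((π / 6 : ℝ) * I)) * Complex.exp (-airyArgLog f r θ (π / 2))
        * Complex.exp (waveLog r θ) := by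
    rw [← Complex.exp_add, ← Complex.exp_add, ← Complex.exp_add, airyArgLog]
    congr 1
    push_cast
    ring
  rw [Wf, hcube_root, hexp, exp_two_mul_pi_div_six, airyAmplitude_sq, waveNumber]
  ring

lemma exists_Ai_neg_eq (hf : 0 < f) (hf1 : f ≤ 1) (hr : 0 < r) (hsmall : wkbError κ f r ≤ 1)
    (hθ : -π ≤ θ) (hθ' : θ ≤ -(π / 3)) :
    ∃ x : ℂ, RelErrorLE (wkbError κ f r) x (Complex.exp (I * κ * waveNumber r θ)) ∧
      Ai (-(waveNumber r θ ^ 2 + κ * f) * (f ^ (-(2 : ℝ) / 3) : ℝ))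
      = airyAmplitude f r θ (π / 2) * (Complex.exp (meanPhase κ f r θ) * x) := by
  obtain ⟨x, hx, hAi⟩ := exists_Ai_shift_eq (θ := θ) (τ := π / 2) hf hf1 hr hsmall
    (abs_le.2 ⟨by linarith [Real.pi_pos], by linarith⟩)
  rw [exp_three_mul_pi_div_two] at hx hAi
  refine ⟨x, by convert hx using 2; ring, ?_⟩
  rw [exp_two_mul_pi_div_two, mul_neg, Complex.I_mul_I, neg_neg, one_mul] at hAi
  rw [← mul_assoc, ← hAi, neg_one_mul]

lemma exists_Ai_neg_ωc_sq_eq (hf : 0 < f) (hf1 : f ≤ 1) (hr : 0 < r)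
    (hsmall : wkbError κ f r ≤ 1) (hθ : -π ≤ θ) (hθ' : θ ≤ 0) :
    ∃ x : ℂ, RelErrorLE (wkbError κ f r) x (Complex.exp (I * κ * waveNumber r θ))⁻¹ ∧
      ωc ^ 2 * Ai (-ωc ^ 2 * (waveNumber r θ ^ 2 + κ * f) * (f ^ (-(2 : ℝ) / 3) : ℝ))
      = -I * airyAmplitude f r θ (π / 2) * ((Complex.exp (meanPhase κ f r θ))⁻¹ * x) := by
  obtain ⟨x, hx, hAi⟩ := exists_Ai_shift_eq (θ := θ) (τ := π / 6) hf hf1 hr hsmall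
    (abs_le.2 ⟨by linarith, by linarith [Real.pi_pos]⟩)
  rw [exp_three_mul_pi_div_six] at hx hAi
  refine ⟨x, by rw [← Complex.exp_neg]; convert hx using 3; ring, ?_⟩
  rw [exp_two_mul_pi_div_six, Complex.I_mul_I, neg_one_mul] at hAi
  rw [hAi, Complex.exp_neg, ← ωc_sq_mul_airyAmplitude_pi_div_six]
  ring

lemma exists_Ai_neg_ωc_eq (hf : 0 < f) (hf1 : f ≤ 1) (hr : 0 < r) (hsmall : wkbError κ f r ≤ 1)
    (hθ : -(π / 3) ≤ θ) (hθ' : θ ≤ 0) :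
    ∃ x : ℂ, RelErrorLE (wkbError κ f r) x (Complex.exp (I * κ * waveNumber r θ)) ∧
      Ai (-ωc * (waveNumber r θ ^ 2 + κ * f) * (f ^ (-(2 : ℝ) / 3) : ℝ))
      = -ωc ^ 2 * airyAmplitude f r θ (π / 2) * (Complex.exp (meanPhase κ f r θ) * x) := by
  obtain ⟨x, hx, hAi⟩ := exists_Ai_shift_eq (θ := θ) (τ := -(π / 6)) hf hf1 hr hsmall
    (abs_le.2 ⟨by linarith [Real.pi_pos], by linarith [Real.pi_pos]⟩)
  rw [exp_three_mul_neg_pi_div_six] at hx hAi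
  refine ⟨x, by convert hx using 2; ring, ?_⟩
  rw [exp_two_mul_neg_pi_div_six, mul_neg, Complex.I_mul_I, neg_neg, one_mul,
    airyAmplitude_neg_pi_div_six] at hAi
  rw [← mul_assoc, ← hAi]

lemma Ai_connection_neg (w q : ℂ) :
    Ai (-w * q) + ωc * Ai (-ωc * w * q) + ωc ^ 2 * Ai (-ωc ^ 2 * w * q) = 0 := by
  have h := Ai_connection (-w * q)
  rwa [show ωc * (-w * q) = -ωc * w * q by ring,
    show ωc ^ 2 * (-w * q) = -ωc ^ 2 * w * q by ring] at h

lemma exists_Ai_pair_of_le_neg_pi_div_three (hf : 0 < f) (hf1 : f ≤ 1) (hr : 0 < r)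
    (hsmall : wkbError κ f r ≤ 1) (hθ : -π ≤ θ) (hθ' : θ ≤ -(π / 3)) :
    ∃ x y : ℂ, RelErrorLE (wkbError κ f r) x (Complex.exp (I * κ * waveNumber r θ)) ∧
      RelErrorLE (wkbError κ f r) y (Complex.exp (I * κ * waveNumber r θ))⁻¹ ∧
      Ai (-(waveNumber r θ ^ 2 + κ * f) * (f ^ (-(2 : ℝ) / 3) : ℝ))
        = airyAmplitude f r θ (π / 2) * (Complex.exp (meanPhase κ f r θ) * x) ∧
      Ai (-ωc * (waveNumber r θ ^ 2 + κ * f) * (f ^ (-(2 : ℝ) / 3) : ℝ))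
        = -ωc ^ 2 * airyAmplitude f r θ (π / 2)
          * (Complex.exp (meanPhase κ f r θ) * x - I * ((Complex.exp (meanPhase κ f r θ))⁻¹ * y))
      := by
  obtain ⟨x, hx, hAi⟩ := exists_Ai_neg_eq hf hf1 hr hsmall hθ hθ'
  obtain ⟨y, hy, hAi₂⟩ := exists_Ai_neg_ωc_sq_eq hf hf1 hr hsmall hθ (by linarith [Real.pi_pos])
  refine ⟨x, y, hx, hy, hAi, mul_left_cancel₀ ωc_ne_zero ?_⟩
  have hconn := Ai_connection_neg (waveNumber r θ ^ 2 + κ * f) (f ^ (-(2 : ℝ) / 3) : ℝ)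
  rw [hAi, hAi₂] at hconn
  linear_combination hconn + airyAmplitude f r θ (π / 2)
    * (Complex.exp (meanPhase κ f r θ) * x - I * ((Complex.exp (meanPhase κ f r θ))⁻¹ * y))
    * ωc_pow_three

lemma exists_Ai_pair_of_neg_pi_div_three_le (hf : 0 < f) (hf1 : f ≤ 1) (hr : 0 < r)
    (hsmall : wkbError κ f r ≤ 1) (hθ : -(π / 3) ≤ θ) (hθ' : θ ≤ 0) :
    ∃ x y : ℂ, RelErrorLE (wkbError κ f r) x (Complex.exp (I * κ * waveNumber r θ)) ∧
      RelErrorLE (wkbError κ f r) y (Complex.exp (I * κ * waveNumber r θ))⁻¹ ∧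
      Ai (-(waveNumber r θ ^ 2 + κ * f) * (f ^ (-(2 : ℝ) / 3) : ℝ))
        = airyAmplitude f r θ (π / 2)
          * (Complex.exp (meanPhase κ f r θ) * x + I * ((Complex.exp (meanPhase κ f r θ))⁻¹ * y)) ∧
      Ai (-ωc * (waveNumber r θ ^ 2 + κ * f) * (f ^ (-(2 : ℝ) / 3) : ℝ))
        = -ωc ^ 2 * airyAmplitude f r θ (π / 2) * (Complex.exp (meanPhase κ f r θ) * x) := by
  obtain ⟨x, hx, hAi⟩ := exists_Ai_neg_ωc_eq hf hf1 hr hsmall hθ hθ'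
  obtain ⟨y, hy, hAi₂⟩ := exists_Ai_neg_ωc_sq_eq hf hf1 hr hsmall (by linarith [Real.pi_pos]) hθ'
  refine ⟨x, y, hx, hy, ?_, hAi⟩
  have hconn := Ai_connection_neg (waveNumber r θ ^ 2 + κ * f) (f ^ (-(2 : ℝ) / 3) : ℝ)
  rw [hAi, hAi₂] at hconn
  linear_combination hconn + airyAmplitude f r θ (π / 2)
    * (Complex.exp (meanPhase κ f r θ) * x) * ωc_pow_three

/-- The Born amplitude `-i / (2ηk)` for reflection of a wave of wave number `k = √(r e^{iθ})` by
one delta potential of strength `η⁻¹`. -/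
noncomputable def bornAmplitude (η r θ : ℝ) : ℂ := -I / (2 * η * waveNumber r θ)

lemma Df_eq_of_Ai_eq (hf : 0 < f) (hη : η ≠ 0) {ap am bp bm : ℂ}
    (hap : Ai (-(waveNumber r θ ^ 2 + κ * f) * (f ^ (-(2 : ℝ) / 3) : ℝ))
      = airyAmplitude f r θ (π / 2) * ap)
    (ham : Ai (-(waveNumber r θ ^ 2 - κ * f) * (f ^ (-(2 : ℝ) / 3) : ℝ))
      = airyAmplitude f r θ (π / 2) * am)
    (hbp : Ai (-ωc * (waveNumber r θ ^ 2 + κ * f) * (f ^ (-(2 : ℝ) / 3) : ℝ))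
      = -ωc ^ 2 * airyAmplitude f r θ (π / 2) * bp)
    (hbm : Ai (-ωc * (waveNumber r θ ^ 2 - κ * f) * (f ^ (-(2 : ℝ) / 3) : ℝ))
      = -ωc ^ 2 * airyAmplitude f r θ (π / 2) * bm) :
    Df κ η f (waveNumber r θ ^ 2) = 1 + I * bornAmplitude η r θ * (bm * am + bp * ap)
      - bornAmplitude η r θ ^ 2 * (bp * am * (bm * ap - bp * am)) := by
  have hk := waveNumber_ne_zero r θ
  have hη' : (η : ℂ) ≠ 0 := mod_cast hη
  have hω := ωc_ne_zero
  have hamp := airyAmplitude_ne_zero f r θ (π / 2)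
  have hborn : I * bornAmplitude η r θ = 1 / (2 * η * waveNumber r θ) := by
    rw [bornAmplitude, ← mul_div_assoc, mul_neg, Complex.I_mul_I, neg_neg]
  have hborn_sq : bornAmplitude η r θ ^ 2 = -(1 / (2 * η * waveNumber r θ)) ^ 2 := by
    rw [← hborn, mul_pow, Complex.I_sq, neg_one_mul, neg_neg]
  rw [hborn, hborn_sq, Df, alphaP, alphaM, betaP, betaM, hap, ham, hbp, hbm,
    Wf_eq_airyAmplitude_sq_mul_waveNumber hf r θ]
  field_simp
  ring

/-- The factors multiplying `e^p` (`a` at `-κ`, `b` at `κ`) and `e^{-p}` (`c` at `-κ`, `d` at `κ`)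
in the Airy solutions are, up to relative error `ε`, the plane waves `E = e^{iκk}` and `E⁻¹`. -/
structure NearPlaneWaves (ε : ℝ) (E a b c d : ℂ) : Prop where
  plus_left : RelErrorLE ε a E
  plus_right : RelErrorLE ε b E⁻¹
  minus_left : RelErrorLE ε c E⁻¹
  minus_right : RelErrorLE ε d E

/-- The coefficient of `i X e^{2p}` in `Df`, where `p` is the mean phase and `X` the Born
amplitude. -/
def oscillatingPart (X a b c d : ℂ) : ℂ := a ^ 2 + b ^ 2 - X * (a * b) * (b * c - a * d)

/-- The part of `Df` without the factor `e^{2p}`, for `-π ≤ θ ≤ -π/3`. -/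
def leftRemainder (X a b c d : ℂ) : ℂ :=
  1 + X * (b * d + a * c) + X ^ 2 * (a * b * (c * d) - (b * c) ^ 2)

/-- The part of `Df` without the factor `e^{2p}`, for `-π/3 ≤ θ ≤ 0`. -/
def rightRemainder (X a b c d : ℂ) : ℂ :=
  1 - X * (b * d + a * c) + X ^ 2 * (a * b * (c * d) - (a * d) ^ 2)

lemma exp_I_mul_neg_mul (κ : ℝ) (k : ℂ) :
    Complex.exp (I * ((-κ : ℝ) : ℂ) * k) = (Complex.exp (I * κ * k))⁻¹ := by
  rw [← Complex.exp_neg]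
  push_cast
  ring_nf

theorem exists_Df_eq_of_le_neg_pi_div_three (hη : η ≠ 0) (hf : 0 < f) (hf1 : f ≤ 1) (hr : 0 < r)
    (hsmall : wkbError κ f r ≤ 1) (hθ : -π ≤ θ) (hθ' : θ ≤ -(π / 3)) :
    ∃ a b c d : ℂ,
      NearPlaneWaves (wkbError κ f r) (Complex.exp (I * κ * waveNumber r θ)) a b c d ∧
      Df κ η f (waveNumber r θ ^ 2) = I * bornAmplitude η r θ *
        Complex.exp (2 * meanPhase κ f r θ) * oscillatingPart (bornAmplitude η r θ) a b c d
        + leftRemainder (bornAmplitude η r θ) a b c d := by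
  obtain ⟨a, c, ha, hc, hap, hbp⟩ := exists_Ai_pair_of_le_neg_pi_div_three hf hf1 hr hsmall hθ hθ'
  obtain ⟨b, d, hb, hd, ham, hbm⟩ := exists_Ai_pair_of_le_neg_pi_div_three (κ := -κ) hf hf1 hr
    (by rwa [wkbError_neg]) hθ hθ'
  rw [wkbError_neg, exp_I_mul_neg_mul] at hb hd
  rw [inv_inv] at hd
  simp only [meanPhase_neg, Complex.ofReal_neg, neg_mul (κ : ℂ), ← sub_eq_add_neg] at ham hbm
  refine ⟨a, b, c, d, ⟨ha, hb, hc, hd⟩, ?_⟩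
  have hP := Complex.exp_ne_zero (meanPhase κ f r θ)
  rw [Df_eq_of_Ai_eq hf hη hap ham hbp hbm, two_mul, Complex.exp_add, oscillatingPart,
    leftRemainder]
  field_simp
  set X := bornAmplitude η r θ
  linear_combination (-X * (b * d + a * c) + X ^ 2 * (b * c) * (b * c - a * d)) * Complex.I_sq

theorem exists_Df_eq_of_neg_pi_div_three_le (hη : η ≠ 0) (hf : 0 < f) (hf1 : f ≤ 1) (hr : 0 < r)
    (hsmall : wkbError κ f r ≤ 1) (hθ : -(π / 3) ≤ θ) (hθ' : θ ≤ 0) :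
    ∃ a b c d : ℂ,
      NearPlaneWaves (wkbError κ f r) (Complex.exp (I * κ * waveNumber r θ)) a b c d ∧
      Df κ η f (waveNumber r θ ^ 2) = I * bornAmplitude η r θ *
        Complex.exp (2 * meanPhase κ f r θ) * oscillatingPart (bornAmplitude η r θ) a b c d
        + rightRemainder (bornAmplitude η r θ) a b c d := by
  obtain ⟨a, c, ha, hc, hap, hbp⟩ := exists_Ai_pair_of_neg_pi_div_three_le hf hf1 hr hsmall hθ hθ'
  obtain ⟨b, d, hb, hd, ham, hbm⟩ := exists_Ai_pair_of_neg_pi_div_three_le (κ := -κ) hf hf1 hr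
    (by rwa [wkbError_neg]) hθ hθ'
  rw [wkbError_neg, exp_I_mul_neg_mul] at hb hd
  rw [inv_inv] at hd
  simp only [meanPhase_neg, Complex.ofReal_neg, neg_mul (κ : ℂ), ← sub_eq_add_neg] at ham hbm
  refine ⟨a, b, c, d, ⟨ha, hb, hc, hd⟩, ?_⟩
  have hP := Complex.exp_ne_zero (meanPhase κ f r θ)
  rw [Df_eq_of_Ai_eq hf hη hap ham hbp hbm, two_mul, Complex.exp_add, oscillatingPart,
    rightRemainder]
  field_simp
  set X := bornAmplitude η r θ
  linear_combination (X * (b * d + a * c) + X ^ 2 * (a * d) * (a * d - b * c)) * Complex.I_sq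

end SectorForms

/-! ### Size of the oscillating part and of the remainders -/

section RelError

variable {d d' : ℝ} {x x' y y' : ℂ}

lemma RelErrorLE.nonneg (h : RelErrorLE d x y) (hy : y ≠ 0) : 0 ≤ d :=
  nonneg_of_mul_nonneg_left ((norm_nonneg _).trans h) (norm_pos_iff.2 hy)

lemma RelErrorLE.norm_le (h : RelErrorLE d x y) : ‖x‖ ≤ (1 + d) * ‖y‖ := by
  have htri := norm_add_le (x - y) y
  rw [sub_add_cancel] at htri
  rw [RelErrorLE] at h
  linarith

lemma RelErrorLE.mul (h : RelErrorLE d x y) (h' : RelErrorLE d' x' y') :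
    RelErrorLE (d + d' + d * d') (x * x') (y * y') := by
  have hd := (norm_nonneg _).trans h
  calc ‖x * x' - y * y'‖ = ‖(x - y) * y' + y * (x' - y') + (x - y) * (x' - y')‖ := by ring_nf
    _ ≤ ‖x - y‖ * ‖y'‖ + ‖y‖ * ‖x' - y'‖ + ‖x - y‖ * ‖x' - y'‖ := by
      rw [← norm_mul, ← norm_mul, ← norm_mul]
      exact norm_add₃_le
    _ ≤ d * ‖y‖ * ‖y'‖ + ‖y‖ * (d' * ‖y'‖) + d * ‖y‖ * (d' * ‖y'‖) := by
      gcongr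
      exacts [h, h', h, h']
    _ = (d + d' + d * d') * ‖y * y'‖ := by rw [norm_mul]; ring

lemma RelErrorLE.mul_three (h : RelErrorLE d x y) (h' : RelErrorLE d x' y') (hd : 0 ≤ d)
    (hd1 : d ≤ 1) : RelErrorLE (3 * d) (x * x') (y * y') := by
  refine (h.mul h').trans ?_
  gcongr
  nlinarith

lemma RelErrorLE.mul_fifteen (h : RelErrorLE (3 * d) x y) (h' : RelErrorLE (3 * d) x' y')
    (hd : 0 ≤ d) (hd1 : d ≤ 1) : RelErrorLE (15 * d) (x * x') (y * y') := by
  refine (h.mul h').trans ?_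
  gcongr
  nlinarith

end RelError

section Remainders

variable {X E a b c d : ℂ} {ε : ℝ}

/-- The oscillating part for exact plane waves `E` and `E⁻¹`. -/
noncomputable def planeWavePart (X E : ℂ) : ℂ := E ^ 2 * (1 + X) + E⁻¹ ^ 2 * (1 - X)

lemma NearPlaneWaves.nonneg (h : NearPlaneWaves ε E a b c d) (hE : E ≠ 0) : 0 ≤ ε :=
  h.plus_left.nonneg hE

lemma NearPlaneWaves.plus_mul_plus (h : NearPlaneWaves ε E a b c d) (hE : E ≠ 0) (hε : ε ≤ 1) :
    RelErrorLE (3 * ε) (a * b) 1 := by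
  simpa only [mul_inv_cancel₀ hE] using h.plus_left.mul_three h.plus_right (h.nonneg hE) hε

lemma NearPlaneWaves.minus_mul_minus (h : NearPlaneWaves ε E a b c d) (hE : E ≠ 0) (hε : ε ≤ 1) :
    RelErrorLE (3 * ε) (c * d) 1 := by
  simpa only [inv_mul_cancel₀ hE] using h.minus_left.mul_three h.minus_right (h.nonneg hE) hε

lemma NearPlaneWaves.left_mul_left (h : NearPlaneWaves ε E a b c d) (hE : E ≠ 0) (hε : ε ≤ 1) :
    RelErrorLE (3 * ε) (a * c) 1 := by
  simpa only [mul_inv_cancel₀ hE] using h.plus_left.mul_three h.minus_left (h.nonneg hE) hε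

lemma NearPlaneWaves.right_mul_right (h : NearPlaneWaves ε E a b c d) (hE : E ≠ 0) (hε : ε ≤ 1) :
    RelErrorLE (3 * ε) (b * d) 1 := by
  simpa only [inv_mul_cancel₀ hE] using h.plus_right.mul_three h.minus_right (h.nonneg hE) hε

lemma NearPlaneWaves.plus_left_mul_minus_right (h : NearPlaneWaves ε E a b c d) (hE : E ≠ 0)
    (hε : ε ≤ 1) : RelErrorLE (3 * ε) (a * d) (E ^ 2) := by
  simpa only [sq] using h.plus_left.mul_three h.minus_right (h.nonneg hE) hε

lemma NearPlaneWaves.plus_right_mul_minus_left (h : NearPlaneWaves ε E a b c d) (hE : E ≠ 0)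
    (hε : ε ≤ 1) : RelErrorLE (3 * ε) (b * c) (E⁻¹ ^ 2) := by
  simpa only [sq] using h.plus_right.mul_three h.minus_left (h.nonneg hE) hε

lemma norm_inv_sq_le_one (hE : 1 ≤ ‖E‖) : ‖E⁻¹ ^ 2‖ ≤ 1 := by
  rw [norm_pow, norm_inv]
  exact pow_le_one₀ (by positivity) (inv_le_one_of_one_le₀ hE)

lemma NearPlaneWaves.norm_oscillatingPart_sub_le (h : NearPlaneWaves ε E a b c d) (hE : 1 ≤ ‖E‖)
    (hε : ε ≤ 1) :
    ‖oscillatingPart X a b c d - planeWavePart X E‖ ≤ 30 * ε * (1 + ‖X‖) * ‖E‖ ^ 2 := by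
  have hE0 : E ≠ 0 := norm_pos_iff.1 (by linarith)
  have hε0 := h.nonneg hE0
  have hinv : ‖E⁻¹ ^ 2‖ ≤ ‖E‖ ^ 2 := (norm_inv_sq_le_one hE).trans (one_le_pow₀ hE)
  have hab := h.plus_mul_plus hE0 hε
  have haa : ‖a * a - E * E‖ ≤ 3 * ε * ‖E * E‖ := h.plus_left.mul_three h.plus_left hε0 hε
  have hbb : ‖b * b - E⁻¹ * E⁻¹‖ ≤ 3 * ε * ‖E⁻¹ * E⁻¹‖ :=
    h.plus_right.mul_three h.plus_right hε0 hε
  have habbc : ‖a * b * (b * c) - 1 * E⁻¹ ^ 2‖ ≤ 15 * ε * ‖1 * E⁻¹ ^ 2‖ :=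
    hab.mul_fifteen (h.plus_right_mul_minus_left hE0 hε) hε0 hε
  have habad : ‖a * b * (a * d) - 1 * E ^ 2‖ ≤ 15 * ε * ‖1 * E ^ 2‖ :=
    hab.mul_fifteen (h.plus_left_mul_minus_right hE0 hε) hε0 hε
  rw [← sq E, norm_pow] at haa
  rw [← sq E⁻¹] at hbb
  rw [one_mul] at habbc habad
  rw [norm_pow E] at habad
  calc ‖oscillatingPart X a b c d - planeWavePart X E‖
      = ‖((a * a - E ^ 2) + (b * b - E⁻¹ ^ 2))
        - X * ((a * b * (b * c) - E⁻¹ ^ 2) - (a * b * (a * d) - E ^ 2))‖ := by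
        rw [oscillatingPart, planeWavePart]; ring_nf
    _ ≤ (‖a * a - E ^ 2‖ + ‖b * b - E⁻¹ ^ 2‖)
        + ‖X‖ * (‖a * b * (b * c) - E⁻¹ ^ 2‖ + ‖a * b * (a * d) - E ^ 2‖) := by
        refine (norm_sub_le _ _).trans ?_
        rw [norm_mul]
        gcongr
        exacts [norm_add_le _ _, norm_sub_le _ _]
    _ ≤ (3 * ε * ‖E‖ ^ 2 + 3 * ε * ‖E‖ ^ 2) + ‖X‖ * (15 * ε * ‖E‖ ^ 2 + 15 * ε * ‖E‖ ^ 2) := by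
        gcongr
        exacts [hbb.trans (by gcongr), habbc.trans (by gcongr)]
    _ ≤ 30 * ε * (1 + ‖X‖) * ‖E‖ ^ 2 := by linarith [mul_nonneg hε0 (sq_nonneg ‖E‖)]

lemma norm_planeWavePart_le (hE : 1 ≤ ‖E‖) :
    ‖planeWavePart X E‖ ≤ 2 * (1 + ‖X‖) * ‖E‖ ^ 2 := by
  have hinv : ‖E⁻¹ ^ 2‖ ≤ ‖E‖ ^ 2 := (norm_inv_sq_le_one hE).trans (one_le_pow₀ hE)
  have hadd : ‖1 + X‖ ≤ 1 + ‖X‖ := (norm_add_le _ _).trans_eq (by rw [norm_one])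
  have hsub : ‖1 - X‖ ≤ 1 + ‖X‖ := (norm_sub_le _ _).trans_eq (by rw [norm_one])
  calc ‖planeWavePart X E‖ ≤ ‖E‖ ^ 2 * ‖1 + X‖ + ‖E⁻¹ ^ 2‖ * ‖1 - X‖ := by
        rw [← norm_pow, ← norm_mul, ← norm_mul]
        exact norm_add_le _ _
    _ ≤ ‖E‖ ^ 2 * (1 + ‖X‖) + ‖E‖ ^ 2 * (1 + ‖X‖) := by gcongr
    _ = 2 * (1 + ‖X‖) * ‖E‖ ^ 2 := by ring

lemma NearPlaneWaves.norm_oscillatingPart_le (h : NearPlaneWaves ε E a b c d) (hE : 1 ≤ ‖E‖)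
    (hε : ε ≤ 1) : ‖oscillatingPart X a b c d‖ ≤ 32 * (1 + ‖X‖) * ‖E‖ ^ 2 := by
  have herr : 30 * ε * (1 + ‖X‖) * ‖E‖ ^ 2 ≤ 30 * 1 * (1 + ‖X‖) * ‖E‖ ^ 2 := by gcongr
  have htri := norm_add_le (oscillatingPart X a b c d - planeWavePart X E) (planeWavePart X E)
  rw [sub_add_cancel] at htri
  linarith [h.norm_oscillatingPart_sub_le (X := X) hE hε, norm_planeWavePart_le (X := X) hE]

lemma norm_one_add_mul_add_sq_mul_le (X s u : ℂ) :
    ‖1 + X * s + X ^ 2 * u‖ ≤ 1 + ‖X‖ * ‖s‖ + ‖X‖ ^ 2 * ‖u‖ := by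
  rw [← norm_one (α := ℂ), ← norm_mul, ← norm_pow, ← norm_mul]
  exact norm_add₃_le

lemma NearPlaneWaves.norm_mul_add_mul_le (h : NearPlaneWaves ε E a b c d) (hE : E ≠ 0)
    (hε : ε ≤ 1) : ‖b * d + a * c‖ ≤ 8 := by
  have hbd := (h.right_mul_right hE hε).norm_le
  have hac := (h.left_mul_left hE hε).norm_le
  rw [norm_one] at hbd hac
  linarith [norm_add_le (b * d) (a * c)]

lemma NearPlaneWaves.norm_mul_mul_mul_le (h : NearPlaneWaves ε E a b c d) (hE : E ≠ 0)
    (hε : ε ≤ 1) : ‖a * b * (c * d)‖ ≤ 16 := by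
  have habcd := ((h.plus_mul_plus hE hε).mul_fifteen (h.minus_mul_minus hE hε)
    (h.nonneg hE) hε).norm_le
  rw [one_mul, norm_one] at habcd
  linarith

lemma NearPlaneWaves.norm_leftRemainder_le (h : NearPlaneWaves ε E a b c d) (hE : 1 ≤ ‖E‖)
    (hε : ε ≤ 1) : ‖leftRemainder X a b c d‖ ≤ 32 * (1 + ‖X‖) ^ 2 := by
  have hE0 : E ≠ 0 := norm_pos_iff.1 (by linarith)
  have hbc : ‖b * c‖ ≤ 4 := by
    have hbc' := (h.plus_right_mul_minus_left hE0 hε).norm_le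
    nlinarith [norm_inv_sq_le_one hE, h.nonneg hE0]
  have hsq : ‖(b * c) ^ 2‖ ≤ 16 := by
    rw [norm_pow]
    nlinarith [norm_nonneg (b * c)]
  have hquad : ‖a * b * (c * d) - (b * c) ^ 2‖ ≤ 32 :=
    (norm_sub_le _ _).trans (by linarith [h.norm_mul_mul_mul_le hE0 hε])
  calc ‖leftRemainder X a b c d‖ ≤ 1 + ‖X‖ * 8 + ‖X‖ ^ 2 * 32 := by
        refine (norm_one_add_mul_add_sq_mul_le _ _ _).trans ?_
        gcongr
        exact h.norm_mul_add_mul_le hE0 hε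
    _ ≤ 32 * (1 + ‖X‖) ^ 2 := by nlinarith [norm_nonneg X]

lemma NearPlaneWaves.norm_rightRemainder_le (h : NearPlaneWaves ε E a b c d) (hE : 1 ≤ ‖E‖)
    (hε : ε ≤ 1) : ‖rightRemainder X a b c d‖ ≤ 32 * (1 + ‖X‖) ^ 2 * ‖E‖ ^ 4 := by
  have hE0 : E ≠ 0 := norm_pos_iff.1 (by linarith)
  have hE4 : 1 ≤ ‖E‖ ^ 4 := one_le_pow₀ hE
  have had : ‖a * d‖ ≤ 4 * ‖E‖ ^ 2 := by
    refine (h.plus_left_mul_minus_right hE0 hε).norm_le.trans ?_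
    rw [norm_pow]
    gcongr
    linarith
  have hsq : ‖(a * d) ^ 2‖ ≤ 16 * ‖E‖ ^ 4 := by
    rw [norm_pow]
    exact (pow_le_pow_left₀ (norm_nonneg _) had 2).trans_eq (by ring)
  have hquad : ‖a * b * (c * d) - (a * d) ^ 2‖ ≤ 32 * ‖E‖ ^ 4 :=
    (norm_sub_le _ _).trans (by linarith [h.norm_mul_mul_mul_le hE0 hε])
  calc ‖rightRemainder X a b c d‖
      = ‖1 + -X * (b * d + a * c) + (-X) ^ 2 * (a * b * (c * d) - (a * d) ^ 2)‖ := by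
        rw [rightRemainder]; ring_nf
    _ ≤ 1 + ‖X‖ * 8 + ‖X‖ ^ 2 * (32 * ‖E‖ ^ 4) := by
        refine (norm_one_add_mul_add_sq_mul_le _ _ _).trans ?_
        rw [norm_neg]
        gcongr
        exact h.norm_mul_add_mul_le hE0 hε
    _ ≤ (1 + ‖X‖ * 8 + ‖X‖ ^ 2 * 32) * ‖E‖ ^ 4 := by
        nlinarith [norm_nonneg X]
    _ ≤ 32 * (1 + ‖X‖) ^ 2 * ‖E‖ ^ 4 := by
        gcongr
        nlinarith [norm_nonneg X]

lemma sq_norm_one_add (X : ℂ) : ‖1 + X‖ ^ 2 = 1 + 2 * X.re + ‖X‖ ^ 2 := by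
  simp only [Complex.sq_norm, Complex.normSq_apply, Complex.add_re, Complex.add_im, Complex.one_re,
    Complex.one_im]
  ring

lemma NearPlaneWaves.norm_leftRemainder_sub_le (h : NearPlaneWaves ε E a b c d) (hE : 1 ≤ ‖E‖)
    (hε : ε ≤ 1) :
    ‖leftRemainder X a b c d - ((1 + X) ^ 2 - X ^ 2 * (E⁻¹ ^ 2) ^ 2)‖
      ≤ 30 * ε * ‖X‖ * (1 + ‖X‖) := by
  have hE0 : E ≠ 0 := norm_pos_iff.1 (by linarith)
  have hε0 := h.nonneg hE0
  have hbd : ‖b * d - 1‖ ≤ 3 * ε * ‖(1 : ℂ)‖ := h.right_mul_right hE0 hε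
  have hac : ‖a * c - 1‖ ≤ 3 * ε * ‖(1 : ℂ)‖ := h.left_mul_left hE0 hε
  have habcd : ‖a * b * (c * d) - 1 * 1‖ ≤ 15 * ε * ‖(1 * 1 : ℂ)‖ :=
    (h.plus_mul_plus hE0 hε).mul_fifteen (h.minus_mul_minus hE0 hε) hε0 hε
  have hbcbc : ‖b * c * (b * c) - E⁻¹ ^ 2 * E⁻¹ ^ 2‖ ≤ 15 * ε := by
    have hbc := h.plus_right_mul_minus_left hE0 hε
    refine (hbc.mul_fifteen hbc hε0 hε).trans (mul_le_of_le_one_right (by positivity) ?_)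
    rw [norm_mul]
    exact mul_le_one₀ (norm_inv_sq_le_one hE) (norm_nonneg _) (norm_inv_sq_le_one hE)
  rw [mul_one] at habcd
  rw [norm_one, mul_one] at hbd hac habcd
  calc ‖leftRemainder X a b c d - ((1 + X) ^ 2 - X ^ 2 * (E⁻¹ ^ 2) ^ 2)‖
      = ‖X * ((b * d - 1) + (a * c - 1))
        + X ^ 2 * ((a * b * (c * d) - 1) - (b * c * (b * c) - E⁻¹ ^ 2 * E⁻¹ ^ 2))‖ := by
        rw [leftRemainder]; ring_nf
    _ ≤ ‖X‖ * (3 * ε + 3 * ε) + ‖X‖ ^ 2 * (15 * ε + 15 * ε) := by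
        refine (norm_add_le _ _).trans ?_
        rw [norm_mul, norm_mul, norm_pow]
        gcongr
        exacts [norm_add_le_of_le hbd hac, norm_sub_le_of_le habcd hbcbc]
    _ ≤ 30 * ε * ‖X‖ * (1 + ‖X‖) := by linarith [mul_nonneg hε0 (norm_nonneg X)]

lemma NearPlaneWaves.le_norm_leftRemainder (h : NearPlaneWaves ε E a b c d) (hE : 1 ≤ ‖E‖)
    (hε : ε ≤ 1) :
    1 + 2 * X.re - 30 * ε * ‖X‖ * (1 + ‖X‖) ≤ ‖leftRemainder X a b c d‖ := by
  have hlead : 1 + 2 * X.re ≤ ‖(1 + X) ^ 2 - X ^ 2 * (E⁻¹ ^ 2) ^ 2‖ := by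
    refine le_trans ?_ (norm_sub_norm_le _ _)
    rw [norm_pow, sq_norm_one_add, norm_mul, norm_pow, norm_pow (E⁻¹ ^ 2)]
    have hinv : ‖X‖ ^ 2 * ‖E⁻¹ ^ 2‖ ^ 2 ≤ ‖X‖ ^ 2 * 1 := by
      gcongr
      exact pow_le_one₀ (norm_nonneg _) (norm_inv_sq_le_one hE)
    linarith
  have htri := norm_sub_norm_le ((1 + X) ^ 2 - X ^ 2 * (E⁻¹ ^ 2) ^ 2) (leftRemainder X a b c d)
  rw [norm_sub_rev _ (leftRemainder X a b c d)] at htri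
  linarith [h.norm_leftRemainder_sub_le (X := X) hE hε]

lemma le_norm_planeWavePart (hX : 0 ≤ X.re) (hE : 1 ≤ ‖E‖) :
    (1 + ‖X‖) / 2 * (‖E‖ ^ 2 - (‖E‖ ^ 2)⁻¹) ≤ ‖planeWavePart X E‖ := by
  have hadd := sq_norm_one_add X
  have hsub := sq_norm_one_add (-X)
  rw [← sub_eq_add_neg, Complex.neg_re, norm_neg] at hsub
  have hle : ‖1 - X‖ ≤ ‖1 + X‖ := le_of_sq_le_sq (by linarith) (norm_nonneg _)
  have hge : (1 + ‖X‖) / 2 ≤ ‖1 + X‖ :=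
    le_of_sq_le_sq (by nlinarith [sq_nonneg (1 - ‖X‖)]) (norm_nonneg _)
  have hgap : 0 ≤ ‖E‖ ^ 2 - (‖E‖ ^ 2)⁻¹ :=
    sub_nonneg.2 ((inv_le_one_of_one_le₀ (one_le_pow₀ hE)).trans (one_le_pow₀ hE))
  calc (1 + ‖X‖) / 2 * (‖E‖ ^ 2 - (‖E‖ ^ 2)⁻¹)
      ≤ ‖1 + X‖ * (‖E‖ ^ 2 - (‖E‖ ^ 2)⁻¹) := by gcongr
    _ = ‖E‖ ^ 2 * ‖1 + X‖ - (‖E‖ ^ 2)⁻¹ * ‖1 + X‖ := by ring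
    _ ≤ ‖E‖ ^ 2 * ‖1 + X‖ - (‖E‖ ^ 2)⁻¹ * ‖1 - X‖ := by gcongr
    _ = ‖E ^ 2 * (1 + X)‖ - ‖-(E⁻¹ ^ 2 * (1 - X))‖ := by
      simp only [norm_neg, norm_mul, norm_pow, norm_inv, inv_pow]
    _ ≤ ‖planeWavePart X E‖ :=
      (norm_sub_norm_le (E ^ 2 * (1 + X)) _).trans_eq (by rw [planeWavePart, sub_neg_eq_add])

end Remainders

/-! ### Lower bound for the oscillating part -/

section OscillatingPart

variable {κ η r θ ε : ℝ} {X E a b c d : ℂ}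

/-- The exponent `y` with `|e^{iκk}|² = e^y` for `k = √(r e^{iθ})`. -/
noncomputable def waveGrowth (κ r θ : ℝ) : ℝ := 2 * κ * √r * Real.sin (-θ / 2)

lemma waveNumber_im (hr : 0 < r) (θ : ℝ) : (waveNumber r θ).im = √r * Real.sin (θ / 2) := by
  rw [waveNumber, Complex.exp_im, waveLog_re, waveLog_im, Real.exp_half, Real.exp_log hr]

lemma sq_norm_exp_I_mul_waveNumber (hr : 0 < r) (κ θ : ℝ) :
    ‖Complex.exp (I * κ * waveNumber r θ)‖ ^ 2 = Real.exp (waveGrowth κ r θ) := by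
  rw [Complex.norm_exp, ← Real.exp_nat_mul, waveGrowth, neg_div, Real.sin_neg, mul_assoc I,
    Complex.I_mul_re, Complex.im_ofReal_mul, waveNumber_im hr]
  congr 1
  push_cast
  ring

lemma waveGrowth_nonneg (hκ : 0 ≤ κ) (hθ : -π ≤ θ) (hθ' : θ ≤ 0) : 0 ≤ waveGrowth κ r θ :=
  mul_nonneg (by positivity)
    (Real.sin_nonneg_of_nonneg_of_le_pi (by linarith) (by linarith [Real.pi_pos]))

lemma one_le_norm_exp_I_mul_waveNumber (hκ : 0 ≤ κ) (hr : 0 < r) (hθ : -π ≤ θ) (hθ' : θ ≤ 0) :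
    1 ≤ ‖Complex.exp (I * κ * waveNumber r θ)‖ := by
  rw [← one_le_sq_iff₀ (norm_nonneg _), sq_norm_exp_I_mul_waveNumber hr]
  exact Real.one_le_exp (waveGrowth_nonneg hκ hθ hθ')

lemma norm_bornAmplitude (hη : 0 < η) (hr : 0 < r) (θ : ℝ) :
    ‖bornAmplitude η r θ‖ = 1 / (2 * η * √r) := by
  rw [bornAmplitude, norm_div, norm_neg, Complex.norm_I, norm_mul, norm_mul, norm_waveNumber hr,
    Complex.norm_real, Real.norm_of_nonneg hη.le, Complex.norm_ofNat]

lemma bornAmplitude_re (hη : 0 < η) (hr : 0 < r) (θ : ℝ) :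
    (bornAmplitude η r θ).re = ‖bornAmplitude η r θ‖ * Real.sin (-θ / 2) := by
  have : 0 < √r := Real.sqrt_pos.2 hr
  have hsplit : bornAmplitude η r θ = ((1 / (2 * η) : ℝ) : ℂ) * (-I * (waveNumber r θ)⁻¹) := by
    rw [bornAmplitude, div_eq_mul_inv, mul_inv]
    push_cast
    ring
  have hre : (-I * (waveNumber r θ)⁻¹).re = -(waveNumber r θ).im / √r ^ 2 := by
    rw [neg_mul, Complex.neg_re, Complex.I_mul_re, neg_neg, Complex.inv_im,
      Complex.normSq_eq_norm_sq, norm_waveNumber hr]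
  rw [norm_bornAmplitude hη hr, hsplit, Complex.re_ofReal_mul, hre, waveNumber_im hr, neg_div 2 θ,
    Real.sin_neg]
  field_simp

lemma bornAmplitude_re_nonneg (hη : 0 < η) (hr : 0 < r) (hθ : -π ≤ θ) (hθ' : θ ≤ 0) :
    0 ≤ (bornAmplitude η r θ).re := by
  rw [bornAmplitude_re hη hr]
  exact mul_nonneg (norm_nonneg _)
    (Real.sin_nonneg_of_nonneg_of_le_pi (by linarith) (by linarith [Real.pi_pos]))

lemma bornAmplitude_mul_waveNumber (hη : η ≠ 0) (κ r θ : ℝ) :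
    bornAmplitude η r θ * (2 * (2 * (I * κ * waveNumber r θ))) = ((2 * (κ / η) : ℝ) : ℂ) := by
  have hk := waveNumber_ne_zero r θ
  have hη' : (η : ℂ) ≠ 0 := mod_cast hη
  rw [bornAmplitude]
  push_cast
  field_simp
  linear_combination -(κ : ℂ) * Complex.I_sq

/-- For `w = 2iκk → 0` the first-order terms `X (e^w - e^{-w}) ≈ 2Xw = 2κ/η` do not vanish even
though `X = -i / (2ηk)` blows up, and they have the same sign as `e^w + e^{-w} ≈ 2`. -/
lemma le_norm_planeWavePart_of_small (hκ : 0 < κ) (hη : 0 < η) (hr : 0 < r)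
    (hsmall : 4 * κ * √r ≤ 1) :
    3 / 2 ≤ ‖planeWavePart (bornAmplitude η r θ) (Complex.exp (I * κ * waveNumber r θ))‖ := by
  have hρ : 0 < √r := Real.sqrt_pos.2 hr
  have hXw := bornAmplitude_mul_waveNumber hη.ne' κ r θ
  have hXn := norm_bornAmplitude hη hr θ
  set X := bornAmplitude η r θ
  set w : ℂ := 2 * (I * κ * waveNumber r θ) with hw
  have hwn : ‖w‖ = 2 * κ * √r := by
    rw [hw, norm_mul, norm_mul, norm_mul, norm_waveNumber hr, Complex.norm_real, Complex.norm_I,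
      Real.norm_of_nonneg hκ.le, Complex.norm_ofNat]
    ring
  have hw1 : ‖w‖ ≤ 1 := by linarith
  have hw2 : ‖w‖ ^ 2 ≤ 1 / 4 := by rw [hwn]; nlinarith [mul_pos hκ hρ]
  have hu := Complex.norm_exp_sub_one_sub_id_le hw1
  have hv := Complex.norm_exp_sub_one_sub_id_le (x := -w) (by rwa [norm_neg])
  rw [norm_neg] at hv
  set u := Complex.exp w - 1 - w with hu_def
  set v := Complex.exp (-w) - 1 - -w with hv_def
  have hexpand : planeWavePart X (Complex.exp (I * κ * waveNumber r θ))
      = ((2 + 2 * (κ / η) : ℝ) : ℂ) - -(u + v + X * (u - v)) := by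
    rw [planeWavePart, ← Complex.exp_neg, ← Complex.exp_nat_mul, ← Complex.exp_nat_mul,
      Nat.cast_ofNat, mul_neg, ← hw, hu_def, hv_def, Complex.ofReal_add, ← hXw,
      Complex.ofReal_ofNat]
    ring
  have hXuv : ‖X * (u - v)‖ ≤ κ / η := by
    calc ‖X * (u - v)‖ ≤ 1 / (2 * η * √r) * (‖w‖ ^ 2 + ‖w‖ ^ 2) := by
          rw [norm_mul, hXn]
          gcongr
          exact norm_sub_le_of_le hu hv
      _ = κ / η * (4 * κ * √r) := by rw [hwn]; field_simp; ring
      _ ≤ κ / η := mul_le_of_le_one_right (by positivity) hsmall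
  have hrest : ‖u + v + X * (u - v)‖ ≤ 1 / 2 + κ / η :=
    norm_add₃_le.trans (by linarith)
  rw [hexpand]
  refine le_trans ?_ (norm_sub_norm_le _ _)
  rw [Complex.norm_real, Real.norm_of_nonneg (by positivity), norm_neg]
  linarith [div_pos hκ hη]

lemma exp_mul_min_le_exp_sub_exp_neg {y : ℝ} (hy : 0 ≤ y) :
    Real.exp y * min (1 / 2) y ≤ Real.exp y - Real.exp (-y) := by
  have hexp : Real.exp (-y) = Real.exp y * (Real.exp (2 * y))⁻¹ := by
    rw [← Real.exp_neg, ← Real.exp_add]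
    congr 1
    ring
  have hinv : (Real.exp (2 * y))⁻¹ ≤ (2 * y + 1)⁻¹ :=
    inv_anti₀ (by linarith) (Real.add_one_le_exp _)
  have hmin : min (1 / 2) y ≤ 1 - (2 * y + 1)⁻¹ := by
    rw [show 1 - (2 * y + 1)⁻¹ = 2 * y / (2 * y + 1) by field_simp; ring,
      le_div_iff₀ (by linarith)]
    rcases le_total (1 / 2) y with h | h
    · rw [min_eq_left h]
      linarith
    · rw [min_eq_right h]
      nlinarith
  rw [hexp]
  nlinarith [Real.exp_pos y]

lemma NearPlaneWaves.norm_planeWavePart_sub_le (h : NearPlaneWaves ε E a b c d) (hE : 1 ≤ ‖E‖)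
    (hε : ε ≤ 1) :
    ‖planeWavePart X E‖ - 30 * ε * (1 + ‖X‖) * ‖E‖ ^ 2 ≤ ‖oscillatingPart X a b c d‖ := by
  have htri := norm_sub_norm_le (planeWavePart X E) (oscillatingPart X a b c d)
  rw [norm_sub_rev] at htri
  linarith [h.norm_oscillatingPart_sub_le (X := X) hE hε]

lemma NearPlaneWaves.exp_mul_min_le_norm_oscillatingPart {y : ℝ} (h : NearPlaneWaves ε E a b c d)
    (hX : 0 ≤ X.re) (hy : 0 ≤ y) (hE : ‖E‖ ^ 2 = Real.exp y) (hε : 120 * ε ≤ min (1 / 2) y) :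
    Real.exp y * min (1 / 2) y / 4 ≤ ‖oscillatingPart X a b c d‖ := by
  have hε1 : ε ≤ 1 := by linarith [min_le_left (1 / 2) y]
  have hE1 : 1 ≤ ‖E‖ := by
    rw [← one_le_sq_iff₀ (norm_nonneg _), hE]
    exact Real.one_le_exp hy
  have hlead := le_norm_planeWavePart hX hE1
  have hosc := h.norm_planeWavePart_sub_le (X := X) hE1 hε1
  rw [hE] at hlead hosc
  rw [← Real.exp_neg] at hlead
  have hgap : (1 + ‖X‖) / 2 * (Real.exp y * min (1 / 2) y)
      ≤ (1 + ‖X‖) / 2 * (Real.exp y - Real.exp (-y)) := by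
    gcongr
    exact exp_mul_min_le_exp_sub_exp_neg hy
  have herr : (1 + ‖X‖) / 4 * Real.exp y * (120 * ε)
      ≤ (1 + ‖X‖) / 4 * Real.exp y * min (1 / 2) y := by gcongr
  have hX' : 0 ≤ ‖X‖ * (Real.exp y * min (1 / 2) y) := by positivity
  linarith

lemma NearPlaneWaves.sq_norm_le_norm_oscillatingPart_of_small (hκ : 0 < κ) (hη : 0 < η)
    (hr : 0 < r) (hθ : -π ≤ θ) (hθ' : θ ≤ 0)
    (h : NearPlaneWaves ε (Complex.exp (I * κ * waveNumber r θ)) a b c d)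
    (hε : 240 * (ε * (1 + ‖bornAmplitude η r θ‖)) ≤ 1) (hε1 : ε ≤ 1) (hsmall : 4 * κ * √r ≤ 1) :
    Real.exp (waveGrowth κ r θ) / 2 ≤ ‖oscillatingPart (bornAmplitude η r θ) a b c d‖ := by
  have hosc := h.norm_planeWavePart_sub_le (X := bornAmplitude η r θ)
    (one_le_norm_exp_I_mul_waveNumber hκ.le hr hθ hθ') hε1
  rw [sq_norm_exp_I_mul_waveNumber hr] at hosc
  have hy : waveGrowth κ r θ ≤ 1 / 2 := by
    have hsin : 2 * κ * √r * Real.sin (-θ / 2) ≤ 2 * κ * √r * 1 := by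
      gcongr
      exact Real.sin_le_one _
    rw [waveGrowth]
    linarith
  have hexp : Real.exp (waveGrowth κ r θ) ≤ 2 := by
    refine (Real.exp_le_exp.2 hy).trans (le_of_sq_le_sq ?_ zero_le_two)
    rw [← Real.exp_nat_mul]
    norm_num
    linarith [Real.exp_one_lt_d9]
  nlinarith [le_norm_planeWavePart_of_small (θ := θ) hκ hη hr hsmall,
    Real.exp_pos (waveGrowth κ r θ)]

lemma NearPlaneWaves.le_norm_oscillatingPart {m : ℝ} (hκ : 0 < κ) (hη : 0 < η) (hr : 0 < r)
    (hθ : -π ≤ θ) (hθ' : θ ≤ 0)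
    (h : NearPlaneWaves ε (Complex.exp (I * κ * waveNumber r θ)) a b c d)
    (hε : 240 * (ε * (1 + ‖bornAmplitude η r θ‖)) ≤ 1) (hm : m ≤ 1 / 2)
    (hlarge : 1 ≤ 4 * κ * √r → 120 * ε ≤ waveGrowth κ r θ ∧ m ≤ waveGrowth κ r θ) :
    Real.exp (waveGrowth κ r θ) * (m / 4) ≤ ‖oscillatingPart (bornAmplitude η r θ) a b c d‖ := by
  have hε0 := h.nonneg (Complex.exp_ne_zero _)
  have hεX := mul_nonneg hε0 (norm_nonneg (bornAmplitude η r θ))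
  have hexp := Real.exp_pos (waveGrowth κ r θ)
  rcases le_total (4 * κ * √r) 1 with hsmall | hbig
  · have hosc := h.sq_norm_le_norm_oscillatingPart_of_small hκ hη hr hθ hθ' hε (by linarith) hsmall
    nlinarith
  · obtain ⟨hεy, hmy⟩ := hlarge hbig
    refine le_trans ?_ (h.exp_mul_min_le_norm_oscillatingPart
      (bornAmplitude_re_nonneg hη hr hθ hθ') (waveGrowth_nonneg hκ.le hθ hθ')
      (sq_norm_exp_I_mul_waveNumber hr κ θ) (le_min (by linarith) hεy))
    rw [mul_div_assoc]
    gcongr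
    exact le_min hm hmy

end OscillatingPart

/-! ### The weak-field regime -/

section WeakField

variable {κ η f r θ τ : ℝ}

/-- The regime `f ≪ 1`, `f ≪ r²` in which the Airy asymptotics at `|z| = r` are accurate enough
to decide whether `D_f` vanishes: the errors are small and powers of `r + f⁻¹` absorb all constants
depending on `κ` and `η`. -/
structure WeakField (κ η f r : ℝ) : Prop where
  κ_pos : 0 < κ
  η_pos : 0 < η
  f_pos : 0 < f
  f_le_one : f ≤ 1
  r_pos : 0 < r
  error_le : 240 * (wkbError κ f r * (1 + 1 / (2 * η * √r))) ≤ 1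
  phase_le : 4 * κ ^ 2 * (f / √r) ≤ 1
  shift_le : κ * (f / r) ≤ 1 / 4
  inv_le : 1 / r ≤ r + f⁻¹
  const_le : 768 * (1 + η) * (2 + 1 / (2 * η ^ 2)) + 2 ≤ r + f⁻¹
  κ_le_log : κ ≤ Real.log (r + f⁻¹)
  one_le_log : 1 ≤ κ * Real.log (r + f⁻¹)
  error_le_log : 1 ≤ 4 * κ * √r → 12 * wkbError κ f r ≤ κ * Real.log (r + f⁻¹) * (f / r)

lemma one_le_wkbConst (κ : ℝ) : 1 ≤ wkbConst κ := by
  rw [wkbConst]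
  linarith [abs_nonneg κ, pow_nonneg (abs_nonneg κ) 2, pow_nonneg (abs_nonneg κ) 3]

lemma four_mul_sq_le_wkbConst (κ : ℝ) : 4 * κ ^ 2 ≤ wkbConst κ := by
  rw [wkbConst, ← sq_abs κ]
  linarith [abs_nonneg κ, pow_nonneg (abs_nonneg κ) 2, pow_nonneg (abs_nonneg κ) 3]

lemma wkbError_nonneg (hf : 0 < f) (hr : 0 < r) : 0 ≤ wkbError κ f r :=
  mul_nonneg (zero_le_one.trans (one_le_wkbConst κ)) (by positivity)

lemma div_sqrt_pow_le (hτ : 0 < τ) (hr : 0 < r) (hfτ : f ≤ τ) (hfr : f ≤ τ * r ^ 2) {j : ℕ}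
    (hj : j ≤ 4) : f / √r ^ j ≤ τ := by
  have hρ : 0 < √r := Real.sqrt_pos.2 hr
  rw [div_le_iff₀ (pow_pos hρ j)]
  rcases le_total (√r) 1 with hle | hge
  · calc f ≤ τ * √r ^ 4 := by rwa [show √r ^ 4 = (√r ^ 2) ^ 2 by ring, Real.sq_sqrt hr.le]
      _ ≤ τ * √r ^ j := by gcongr ?_ * ?_; exact pow_le_pow_of_le_one hρ.le hle hj
  · exact hfτ.trans (le_mul_of_one_le_right hτ.le (one_le_pow₀ hge))

lemma wkbError_mul_le (hη : 0 < η) (hτ : 0 < τ) (hr : 0 < r) (hfτ : f ≤ τ)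
    (hfr : f ≤ τ * r ^ 2) :
    wkbError κ f r * (1 + 1 / (2 * η * √r)) ≤ wkbConst κ * (2 + 1 / η) * τ := by
  have : 0 < √r := Real.sqrt_pos.2 hr
  have hC : 0 ≤ wkbConst κ := zero_le_one.trans (one_le_wkbConst κ)
  have hdiv {j : ℕ} (hj : j ≤ 4) := div_sqrt_pow_le hτ hr hfτ hfr hj
  calc wkbError κ f r * (1 + 1 / (2 * η * √r))
      = wkbConst κ * (f / √r ^ 2 + f / √r ^ 3 + 1 / (2 * η) * (f / √r ^ 3 + f / √r ^ 4)) := by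
        rw [wkbError]
        nth_rewrite 1 2 [← Real.sq_sqrt hr.le]
        field_simp
    _ ≤ wkbConst κ * (τ + τ + 1 / (2 * η) * (τ + τ)) := by
        gcongr <;> exact hdiv (by norm_num)
    _ = wkbConst κ * (2 + 1 / η) * τ := by field_simp; ring

lemma wkbError_le_of_one_le (hf : 0 < f) (hr : 0 < r) (hκρ : 1 ≤ 4 * κ * √r) :
    wkbError κ f r ≤ wkbConst κ * (1 + 4 * κ) * (f / r) := by
  have hρ : 0 < √r := Real.sqrt_pos.2 hr
  have hC : 0 ≤ wkbConst κ := zero_le_one.trans (one_le_wkbConst κ)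
  calc wkbError κ f r = wkbConst κ * (f / r) * (1 + 1 / √r) := by rw [wkbError]; field_simp
    _ ≤ wkbConst κ * (f / r) * (1 + 4 * κ) := by
        gcongr
        rwa [div_le_iff₀ hρ]
    _ = wkbConst κ * (1 + 4 * κ) * (f / r) := by ring

lemma one_div_le_add_inv (hf : 0 < f) (hf1 : f ≤ 1) (hr : 0 < r) (hfr : f ≤ r ^ 2) :
    1 / r ≤ r + f⁻¹ := by
  have hsq : (1 / r) ^ 2 ≤ f⁻¹ := by
    rw [one_div, inv_pow]
    exact inv_anti₀ hf hfr
  nlinarith [(one_le_inv₀ hf).2 hf1]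

lemma le_log_and_le_mul_log {x R : ℝ} (hκ : 0 < κ) (hx : 0 ≤ x)
    (hR : Real.exp (κ + x / κ) ≤ R) : κ ≤ Real.log R ∧ x ≤ κ * Real.log R := by
  have hlog := (Real.le_log_iff_exp_le ((Real.exp_pos _).trans_le hR)).2 hR
  refine ⟨by linarith [div_nonneg hx hκ.le], ?_⟩
  rw [mul_comm, ← div_le_iff₀ hκ]
  linarith

lemma exists_weakField (hκ : 0 < κ) (hη : 0 < η) :
    ∃ τ > 0, ∀ f r : ℝ, 0 < f → f ≤ τ → 0 < r → f ≤ τ * r ^ 2 → WeakField κ η f r := by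
  have hC : 0 < wkbConst κ := zero_lt_one.trans_le (one_le_wkbConst κ)
  have hterm₁ : 0 < 768 * (1 + η) * (2 + 1 / (2 * η ^ 2)) := by positivity
  have hterm₂ : 0 < 240 * wkbConst κ * (2 + 1 / η) := by positivity
  have hterm₃ := Real.exp_pos (κ + 12 * wkbConst κ * (1 + 4 * κ) / κ)
  obtain ⟨B, hB⟩ : ∃ B, B = 768 * (1 + η) * (2 + 1 / (2 * η ^ 2)) + 2
      + 240 * wkbConst κ * (2 + 1 / η) + wkbConst κ + 4 * κ
      + Real.exp (κ + 12 * wkbConst κ * (1 + 4 * κ) / κ) := ⟨_, rfl⟩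
  have hB0 : 0 < B := by linarith
  have hmul {b : ℝ} (hb : b ≤ B) : b * B⁻¹ ≤ 1 := by rwa [mul_inv_le_iff₀ hB0, one_mul]
  refine ⟨B⁻¹, inv_pos.2 hB0, fun f r hf hfτ hr hfr ↦ ?_⟩
  have hdiv {j : ℕ} (hj : j ≤ 4) := div_sqrt_pow_le (inv_pos.2 hB0) hr hfτ hfr hj
  have hB1 : B⁻¹ ≤ 1 := by simpa using hmul (b := 1) (by linarith)
  have hBR : B ≤ r + f⁻¹ := by linarith [(le_inv_comm₀ hf hB0).1 hfτ]
  obtain ⟨hlog, hκlog⟩ := le_log_and_le_mul_log (x := 12 * wkbConst κ * (1 + 4 * κ))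
    (R := r + f⁻¹) hκ (by positivity) (by linarith)
  refine ⟨hκ, hη, hf, hfτ.trans hB1, hr, ?_, ?_, ?_, ?_, by linarith, hlog, ?_, ?_⟩
  · linarith [wkbError_mul_le (κ := κ) hη (inv_pos.2 hB0) hr hfτ hfr,
      hmul (b := 240 * wkbConst κ * (2 + 1 / η)) (by linarith)]
  · calc 4 * κ ^ 2 * (f / √r) ≤ wkbConst κ * B⁻¹ := by
          gcongr
          exacts [four_mul_sq_le_wkbConst κ, by simpa using hdiv (j := 1) (by norm_num)]
      _ ≤ 1 := hmul (by linarith)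
  · have hfr' : f / r ≤ B⁻¹ := by simpa only [Real.sq_sqrt hr.le] using hdiv (j := 2) (by norm_num)
    linarith [mul_le_mul_of_nonneg_left hfr' hκ.le, hmul (b := 4 * κ) (by linarith)]
  · exact one_div_le_add_inv hf (hfτ.trans hB1) hr
      (hfr.trans (mul_le_of_le_one_left (sq_nonneg r) hB1))
  · linarith [mul_pos hC hκ, one_le_wkbConst κ]
  · intro hκρ
    linarith [wkbError_le_of_one_le hf hr hκρ,
      mul_le_mul_of_nonneg_right hκlog (by positivity : 0 ≤ f / r)]

namespace WeakField

lemma wkbError_le_one (h : WeakField κ η f r) : wkbError κ f r ≤ 1 := by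
  have hη := h.η_pos
  have hX : 0 ≤ wkbError κ f r * (1 / (2 * η * √r)) :=
    mul_nonneg (wkbError_nonneg h.f_pos h.r_pos) (by positivity)
  linarith [h.error_le, wkbError_nonneg (κ := κ) h.f_pos h.r_pos]

lemma error_mul_norm_le (h : WeakField κ η f r) (θ : ℝ) :
    240 * (wkbError κ f r * (1 + ‖bornAmplitude η r θ‖)) ≤ 1 := by
  rw [norm_bornAmplitude h.η_pos h.r_pos]
  exact h.error_le

lemma two_le (h : WeakField κ η f r) : 2 ≤ r + f⁻¹ := by
  have hη := h.η_pos
  have : 0 < 768 * (1 + η) * (2 + 1 / (2 * η ^ 2)) := by positivity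
  linarith [h.const_le]

lemma log_pos (h : WeakField κ η f r) : 0 < Real.log (r + f⁻¹) :=
  h.κ_pos.trans_le h.κ_le_log

lemma le_norm_bornAmplitude (h : WeakField κ η f r) (θ : ℝ) :
    1 / (2 * η * (r + f⁻¹)) ≤ ‖bornAmplitude η r θ‖ := by
  have hη := h.η_pos
  have hρ : 0 < √r := Real.sqrt_pos.2 h.r_pos
  have hle : √r ≤ r + f⁻¹ := by
    rw [Real.sqrt_le_iff]
    have := inv_pos.2 h.f_pos
    constructor <;> nlinarith [h.two_le, h.r_pos]
  rw [norm_bornAmplitude hη h.r_pos]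
  gcongr

lemma sq_one_add_norm_bornAmplitude_le (h : WeakField κ η f r) (θ : ℝ) :
    (1 + ‖bornAmplitude η r θ‖) ^ 2 ≤ (2 + 1 / (2 * η ^ 2)) * (r + f⁻¹) := by
  have hη := h.η_pos
  have hsq : ‖bornAmplitude η r θ‖ ^ 2 ≤ 1 / (4 * η ^ 2) * (r + f⁻¹) := by
    calc ‖bornAmplitude η r θ‖ ^ 2 = 1 / (4 * η ^ 2) * (1 / r) := by
          rw [norm_bornAmplitude hη h.r_pos, div_pow, mul_pow, Real.sq_sqrt h.r_pos.le]
          ring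
      _ ≤ 1 / (4 * η ^ 2) * (r + f⁻¹) := by gcongr; exact h.inv_le
  have hhalf : 1 / (2 * η ^ 2) = 2 * (1 / (4 * η ^ 2)) := by ring
  rw [hhalf]
  nlinarith [sq_nonneg (1 - ‖bornAmplitude η r θ‖), h.two_le]

lemma sq_one_add_norm_bornAmplitude_lt (h : WeakField κ η f r) (θ : ℝ) :
    32 * (1 + ‖bornAmplitude η r θ‖) ^ 2
      < ‖bornAmplitude η r θ‖ * ((r + f⁻¹) ^ 20 / 3) * (1 / (r + f⁻¹) ^ 2 / 4) := by
  have hη := h.η_pos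
  have hsq := h.sq_one_add_norm_bornAmplitude_le θ
  have hlow := h.le_norm_bornAmplitude θ
  have hconst := h.const_le
  have hR := h.two_le
  have hK : 0 < 2 + 1 / (2 * η ^ 2) := by positivity
  generalize r + f⁻¹ = R, 2 + 1 / (2 * η ^ 2) = K, ‖bornAmplitude η r θ‖ = S at *
  have : 0 < R := by linarith
  calc 32 * (1 + S) ^ 2 ≤ 32 * K * R := by linarith
    _ < R ^ 16 / (24 * η) * R := by
        gcongr
        rw [lt_div_iff₀ (by positivity)]
        linarith [le_self_pow₀ (by linarith : 1 ≤ R) (by norm_num : 16 ≠ 0)]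
    _ = 1 / (2 * η * R) * (R ^ 20 / 3) * (1 / R ^ 2 / 4) := by field_simp; norm_num
    _ ≤ S * (R ^ 20 / 3) * (1 / R ^ 2 / 4) := by gcongr

lemma norm_bornAmplitude_mul_le (h : WeakField κ η f r) (θ : ℝ) :
    ‖bornAmplitude η r θ‖ * (32 * (1 + ‖bornAmplitude η r θ‖) * (3 * ((r + f⁻¹) ^ 20)⁻¹))
      ≤ 1 / 4 := by
  have hη := h.η_pos
  have hsq := h.sq_one_add_norm_bornAmplitude_le θ
  have hS := norm_nonneg (bornAmplitude η r θ)
  have hconst := h.const_le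
  have hR := h.two_le
  have hK : 0 < 2 + 1 / (2 * η ^ 2) := by positivity
  generalize r + f⁻¹ = R, 2 + 1 / (2 * η ^ 2) = K, ‖bornAmplitude η r θ‖ = S at *
  have : 0 < R := by linarith
  calc S * (32 * (1 + S) * (3 * (R ^ 20)⁻¹)) ≤ (1 + S) * (32 * (1 + S) * (3 * (R ^ 20)⁻¹)) := by
        gcongr
        linarith
    _ = 96 * (1 + S) ^ 2 * (R ^ 20)⁻¹ := by ring
    _ ≤ 96 * (K * R) * (R ^ 20)⁻¹ := by gcongr
    _ = 96 * K / R ^ 19 := by field_simp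
    _ ≤ 1 / 4 := by
        rw [div_le_iff₀ (by positivity)]
        linarith [le_self_pow₀ (by linarith : 1 ≤ R) (by norm_num : 19 ≠ 0), mul_pos hη hK]

end WeakField

end WeakField

/-! ### Phase and growth bounds off the critical rays -/

section CriticalRays

variable {κ η f r θ : ℝ} {a b c d : ℂ}

lemma le_mul_sin_three_halves {x : ℝ} (hf : 0 < f) (hr : 0 < r) (hx : 0 ≤ x) (hx' : x ≤ π / 3) :
    5 / 4 * (r * √r * x / f) ≤ 4 / (3 * f) * (r * √r) * Real.sin (3 * x / 2) := by
  have hpi : 5 / 4 ≤ 4 / π := by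
    rw [le_div_iff₀ Real.pi_pos]
    linarith [Real.pi_lt_d2]
  calc 5 / 4 * (r * √r * x / f) ≤ 4 / π * (r * √r * x / f) := by gcongr
    _ = 4 / (3 * f) * (r * √r) * (2 / π * (3 * x / 2)) := by field_simp
    _ ≤ 4 / (3 * f) * (r * √r) * Real.sin (3 * x / 2) := by
        gcongr
        exact Real.mul_le_sin (by linarith) (by linarith)

lemma pow_div_three_le_exp {R x : ℝ} {n : ℕ} (hR : 0 < R) (hx : n * Real.log R - 1 ≤ x) :
    R ^ n / 3 ≤ Real.exp x := by
  calc R ^ n / 3 ≤ R ^ n / Real.exp 1 := by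
        gcongr
        linarith [Real.exp_one_lt_d9]
    _ = Real.exp (n * Real.log R - 1) := by rw [Real.exp_sub, Real.exp_nat_mul, Real.exp_log hR]
    _ ≤ Real.exp x := Real.exp_le_exp.2 hx

lemma exp_le_three_mul_inv_pow {R x : ℝ} {n : ℕ} (hR : 0 < R) (hx : x ≤ 1 - n * Real.log R) :
    Real.exp x ≤ 3 * (R ^ n)⁻¹ := by
  have hinv := inv_anti₀ (by positivity) (pow_div_three_le_exp (x := -x) hR (by linarith))
  rwa [← Real.exp_neg, neg_neg, inv_div, div_eq_mul_inv] at hinv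

lemma neg_div_four_le_sin (hθ : -π ≤ θ) (hθ' : θ ≤ 0) : -θ / 4 ≤ Real.sin (-θ / 2) := by
  refine le_trans ?_ (Real.mul_le_sin (by linarith) (by linarith))
  have hpi : 1 / 4 ≤ 1 / π := one_div_le_one_div_of_le Real.pi_pos Real.pi_le_four
  calc -θ / 4 = 1 / 4 * (-θ) := by ring
    _ ≤ 1 / π * (-θ) := by gcongr; linarith
    _ = 2 / π * (-θ / 2) := by ring

namespace WeakField

lemma le_waveGrowth (h : WeakField κ η f r) (hθ : -π ≤ θ) (hθ' : θ ≤ 0)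
    (hray : 20 * Real.log (r + f⁻¹) * f ≤ r * √r * (-θ)) :
    10 * (κ * Real.log (r + f⁻¹) * (f / r)) ≤ waveGrowth κ r θ := by
  have hκ := h.κ_pos
  have hdist : 20 * Real.log (r + f⁻¹) * (f / r) ≤ √r * (-θ) := by
    rw [mul_div_assoc', div_le_iff₀ h.r_pos]
    linarith
  calc 10 * (κ * Real.log (r + f⁻¹) * (f / r))
      = κ / 2 * (20 * Real.log (r + f⁻¹) * (f / r)) := by ring
    _ ≤ κ / 2 * (√r * (-θ)) := by gcongr
    _ = 2 * κ * √r * (-θ / 4) := by ring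
    _ ≤ waveGrowth κ r θ := by
        rw [waveGrowth]
        gcongr
        exact neg_div_four_le_sin hθ hθ'

lemma one_div_sq_le_div (h : WeakField κ η f r) : 1 / (r + f⁻¹) ^ 2 ≤ f / r := by
  have hf := h.f_pos
  have hr := h.r_pos
  have hfi := inv_pos.2 hf
  calc 1 / (r + f⁻¹) ^ 2 ≤ 1 / (f⁻¹ * r) := by
        gcongr
        nlinarith
    _ = f / r := by field_simp

lemma exp_waveGrowth_mul_le_norm_oscillatingPart (h : WeakField κ η f r) (hθ : -π ≤ θ)
    (hθ' : θ ≤ 0) (hray : 20 * Real.log (r + f⁻¹) * f ≤ r * √r * (-θ))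
    (hw : NearPlaneWaves (wkbError κ f r) (Complex.exp (I * κ * waveNumber r θ)) a b c d) :
    Real.exp (waveGrowth κ r θ) * (1 / (r + f⁻¹) ^ 2 / 4)
      ≤ ‖oscillatingPart (bornAmplitude η r θ) a b c d‖ := by
  have hgrowth := h.le_waveGrowth hθ hθ' hray
  have hfr : 0 ≤ f / r := div_nonneg h.f_pos.le h.r_pos.le
  have hlog : f / r ≤ κ * Real.log (r + f⁻¹) * (f / r) := le_mul_of_one_le_left hfr h.one_le_log
  have hm : 1 / (r + f⁻¹) ^ 2 ≤ 1 / 2 := by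
    gcongr
    nlinarith [h.two_le]
  refine hw.le_norm_oscillatingPart h.κ_pos h.η_pos h.r_pos hθ hθ' (h.error_mul_norm_le θ) hm
    fun hκρ ↦ ⟨?_, ?_⟩
  · linarith [h.error_le_log hκρ]
  · linarith [h.one_div_sq_le_div]

lemma abs_phase_le_one (h : WeakField κ η f r) (θ : ℝ) :
    |2 * (meanPhase κ f r θ).re + 4 / (3 * f) * (r * √r) * Real.sin (3 * θ / 2)| ≤ 1 :=
  (abs_two_mul_meanPhase_re_add_le h.f_pos h.r_pos h.wkbError_le_one).trans h.phase_le

lemma le_meanPhase_re (h : WeakField κ η f r) (hθ : -(2 * π / 3) ≤ θ) (hθ' : θ ≤ -(π / 3))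
    (hray : 20 * Real.log (r + f⁻¹) * f ≤ r * √r * (θ + 2 * π / 3)) :
    20 * Real.log (r + f⁻¹) - 1 ≤ 2 * (meanPhase κ f r θ).re := by
  have hsin := le_mul_sin_three_halves (x := θ + 2 * π / 3) h.f_pos h.r_pos (by linarith)
    (by linarith)
  rw [show 3 * (θ + 2 * π / 3) / 2 = 3 * θ / 2 + π by ring, Real.sin_add_pi] at hsin
  have hdist := (le_div_iff₀ h.f_pos).2 hray
  linarith [(abs_le.1 (h.abs_phase_le_one θ)).1, h.log_pos]

lemma le_meanPhase_re_sub_waveGrowth (h : WeakField κ η f r) (hθ : -(π / 3) ≤ θ) (hθ' : θ ≤ 0)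
    (hray : 20 * Real.log (r + f⁻¹) * f ≤ r * √r * (-θ)) :
    20 * Real.log (r + f⁻¹) - 1 ≤ 2 * (meanPhase κ f r θ).re - waveGrowth κ r θ := by
  have hκ := h.κ_pos
  have hf := h.f_pos
  have hr := h.r_pos
  have hsin := le_mul_sin_three_halves (x := -θ) hf hr (by linarith) (by linarith)
  rw [show 3 * -θ / 2 = -(3 * θ / 2) by ring, Real.sin_neg] at hsin
  have hdist := (le_div_iff₀ hf).2 hray
  have hgrowth : waveGrowth κ r θ ≤ 1 / 4 * (r * √r * (-θ) / f) := by
    calc waveGrowth κ r θ ≤ 2 * κ * √r * (-θ / 2) := by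
          rw [waveGrowth]
          gcongr
          exact Real.sin_le (by linarith)
      _ = κ * (f / r) * (r * √r * (-θ) / f) := by field_simp
      _ ≤ 1 / 4 * (r * √r * (-θ) / f) := by
          gcongr
          · have : 0 ≤ -θ := by linarith
            positivity
          · exact h.shift_le
  linarith [(abs_le.1 (h.abs_phase_le_one θ)).1]

lemma meanPhase_re_add_waveGrowth_le (h : WeakField κ η f r) (hθ : -π ≤ θ)
    (hθ' : θ ≤ -(2 * π / 3))
    (hray : 20 * Real.log (r + f⁻¹) * f * (√r + 1) ≤ r * √r * (-(2 * π / 3) - θ)) :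
    2 * (meanPhase κ f r θ).re + waveGrowth κ r θ ≤ 1 - 20 * Real.log (r + f⁻¹) := by
  have hκ := h.κ_pos
  have hsin := le_mul_sin_three_halves (x := -(2 * π / 3) - θ) h.f_pos h.r_pos (by linarith)
    (by linarith)
  rw [show 3 * (-(2 * π / 3) - θ) / 2 = -(3 * θ / 2 + π) by ring, Real.sin_neg, Real.sin_add_pi,
    neg_neg] at hsin
  have hdist : 20 * Real.log (r + f⁻¹) * (√r + 1) ≤ r * √r * (-(2 * π / 3) - θ) / f := by
    rw [le_div_iff₀ h.f_pos]
    linarith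
  have hgrowth : waveGrowth κ r θ ≤ 2 * Real.log (r + f⁻¹) * √r := by
    calc waveGrowth κ r θ ≤ 2 * κ * √r :=
          mul_le_of_le_one_right (by positivity) (Real.sin_le_one _)
      _ ≤ 2 * Real.log (r + f⁻¹) * √r := by gcongr; exact h.κ_le_log
  linarith [(abs_le.1 (h.abs_phase_le_one θ)).2, h.log_pos,
    mul_nonneg h.log_pos.le (Real.sqrt_nonneg r)]

end WeakField

end CriticalRays

/-! ### Zero-free sectors -/

section Sectors

variable {κ η f r θ : ℝ}

lemma add_ne_zero_of_norm_lt {u v : ℂ} (h : ‖v‖ < ‖u‖) : u + v ≠ 0 := fun h0 ↦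
  h.ne' (by rw [eq_neg_of_add_eq_zero_left h0, norm_neg])

lemma norm_I_mul_mul_exp_mul (X p Q : ℂ) :
    ‖I * X * Complex.exp (2 * p) * Q‖ = ‖X‖ * Real.exp (2 * p.re) * ‖Q‖ := by
  rw [norm_mul, norm_mul, norm_mul, Complex.norm_I, one_mul, Complex.norm_exp,
    ← Complex.ofReal_ofNat, Complex.re_ofReal_mul]

lemma rpow_neg_half (hr : 0 < r) : r ^ (-(1 : ℝ) / 2) = (√r)⁻¹ := by
  rw [neg_div, Real.rpow_neg hr.le, Real.sqrt_eq_rpow]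

lemma rpow_neg_three_halves (hr : 0 < r) : r ^ (-(3 : ℝ) / 2) = (r * √r)⁻¹ := by
  rw [show -(3 : ℝ) / 2 = -1 + -1 / 2 by norm_num, Real.rpow_add hr, rpow_neg_half hr,
    Real.rpow_neg_one, mul_inv]

lemma im_ofReal_mul_exp_pos (hr : 0 < r) (hθ : -(2 * π) < θ) (hθ' : θ < -π) :
    0 < ((r : ℂ) * Complex.exp (I * θ)).im := by
  rw [Complex.im_ofReal_mul, mul_comm I, Complex.exp_ofReal_mul_I_im, ← Real.sin_add_two_pi]
  exact mul_pos hr (Real.sin_pos_of_pos_of_lt_pi (by linarith) (by linarith))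

namespace WeakField

/-- To the right of the ray `arg z = -2π/3` the factor `e^{2p}` is large, so the oscillating term
dominates. -/
lemma Df_ne_zero_of_le_neg_pi_div_three (h : WeakField κ η f r) (hθ : -(2 * π / 3) ≤ θ)
    (hθ' : θ ≤ -(π / 3)) (hray : 20 * Real.log (r + f⁻¹) * f ≤ r * √r * (-θ))
    (hray' : 20 * Real.log (r + f⁻¹) * f ≤ r * √r * (θ + 2 * π / 3)) :
    Df κ η f (waveNumber r θ ^ 2) ≠ 0 := by
  have hpi := Real.pi_pos
  have hR : 0 < r + f⁻¹ := by linarith [h.two_le]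
  obtain ⟨a, b, c, d, hw, hDf⟩ := exists_Df_eq_of_le_neg_pi_div_three h.η_pos.ne' h.f_pos
    h.f_le_one h.r_pos h.wkbError_le_one (by linarith) hθ'
  have hE := one_le_norm_exp_I_mul_waveNumber h.κ_pos.le h.r_pos (by linarith : -π ≤ θ)
    (by linarith)
  have hphase := pow_div_three_le_exp (n := 20) hR (h.le_meanPhase_re hθ hθ' hray')
  have hosc := h.exp_waveGrowth_mul_le_norm_oscillatingPart (by linarith) (by linarith) hray hw
  have hgrowth := Real.one_le_exp
    (waveGrowth_nonneg (r := r) h.κ_pos.le (by linarith : -π ≤ θ) (by linarith))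
  rw [hDf]
  apply add_ne_zero_of_norm_lt
  rw [norm_I_mul_mul_exp_mul]
  calc _ ≤ 32 * (1 + ‖bornAmplitude η r θ‖) ^ 2 := hw.norm_leftRemainder_le hE h.wkbError_le_one
    _ < ‖bornAmplitude η r θ‖ * ((r + f⁻¹) ^ 20 / 3) * (1 / (r + f⁻¹) ^ 2 / 4) :=
        h.sq_one_add_norm_bornAmplitude_lt θ
    _ ≤ _ := by
        gcongr
        exact (le_mul_of_one_le_left (by positivity) hgrowth).trans hosc

/-- To the left of the ray `arg z = 0` the oscillating term dominates as well, because `e^{2p}`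
outgrows the factor `e^y` by which the remainder exceeds it. -/
lemma Df_ne_zero_of_neg_pi_div_three_le (h : WeakField κ η f r) (hθ : -(π / 3) ≤ θ)
    (hθ' : θ ≤ 0) (hray : 20 * Real.log (r + f⁻¹) * f ≤ r * √r * (-θ)) :
    Df κ η f (waveNumber r θ ^ 2) ≠ 0 := by
  have hpi := Real.pi_pos
  have hR : 0 < r + f⁻¹ := by linarith [h.two_le]
  obtain ⟨a, b, c, d, hw, hDf⟩ := exists_Df_eq_of_neg_pi_div_three_le h.η_pos.ne' h.f_pos
    h.f_le_one h.r_pos h.wkbError_le_one hθ hθ'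
  have hE := one_le_norm_exp_I_mul_waveNumber h.κ_pos.le h.r_pos (by linarith : -π ≤ θ) hθ'
  have hE2 := sq_norm_exp_I_mul_waveNumber h.r_pos κ θ
  have hphase := pow_div_three_le_exp (n := 20) hR (h.le_meanPhase_re_sub_waveGrowth hθ hθ' hray)
  have hosc := h.exp_waveGrowth_mul_le_norm_oscillatingPart (by linarith) hθ' hray hw
  have hrem := hw.norm_rightRemainder_le (X := bornAmplitude η r θ) hE h.wkbError_le_one
  rw [show 4 = 2 * 2 from rfl, pow_mul, hE2] at hrem
  rw [hDf]
  apply add_ne_zero_of_norm_lt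
  rw [norm_I_mul_mul_exp_mul]
  set y := waveGrowth κ r θ
  have hsplit : Real.exp (2 * (meanPhase κ f r θ).re)
      = Real.exp (2 * (meanPhase κ f r θ).re - y) * Real.exp y := by
    rw [← Real.exp_add, sub_add_cancel]
  calc _ ≤ 32 * (1 + ‖bornAmplitude η r θ‖) ^ 2 * Real.exp y ^ 2 := hrem
    _ < ‖bornAmplitude η r θ‖ * ((r + f⁻¹) ^ 20 / 3) * (1 / (r + f⁻¹) ^ 2 / 4)
          * Real.exp y ^ 2 :=
        mul_lt_mul_of_pos_right (h.sq_one_add_norm_bornAmplitude_lt θ) (by positivity)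
    _ = ‖bornAmplitude η r θ‖ * ((r + f⁻¹) ^ 20 / 3 * Real.exp y)
          * (Real.exp y * (1 / (r + f⁻¹) ^ 2 / 4)) := by ring
    _ ≤ _ := by rw [hsplit]; gcongr

/-- To the left of the ray `arg z = -2π/3` the factor `e^{2p}` is small, so the remainder, which is
close to `(1 + X)² - X² E⁻⁴` with `Re X > 0` and `‖E‖ ≥ 1`, dominates. -/
lemma Df_ne_zero_of_le_neg_two_pi_div_three (h : WeakField κ η f r) (hθ : -π ≤ θ)
    (hθ' : θ ≤ -(2 * π / 3))
    (hray : 20 * Real.log (r + f⁻¹) * f * (√r + 1) ≤ r * √r * (-(2 * π / 3) - θ)) :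
    Df κ η f (waveNumber r θ ^ 2) ≠ 0 := by
  have hpi := Real.pi_gt_three
  have hR : 0 < r + f⁻¹ := by linarith [h.two_le]
  obtain ⟨a, b, c, d, hw, hDf⟩ := exists_Df_eq_of_le_neg_pi_div_three h.η_pos.ne' h.f_pos
    h.f_le_one h.r_pos h.wkbError_le_one hθ (by linarith)
  have hE := one_le_norm_exp_I_mul_waveNumber h.κ_pos.le h.r_pos hθ (by linarith)
  have hosc := hw.norm_oscillatingPart_le (X := bornAmplitude η r θ) hE h.wkbError_le_one
  rw [sq_norm_exp_I_mul_waveNumber h.r_pos] at hosc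
  have hphase := exp_le_three_mul_inv_pow (n := 20) hR
    (h.meanPhase_re_add_waveGrowth_le hθ hθ' hray)
  have hrem := hw.le_norm_leftRemainder (X := bornAmplitude η r θ) hE h.wkbError_le_one
  have hsin : 1 / 2 ≤ Real.sin (-θ / 2) := by
    linarith [neg_div_four_le_sin hθ (by linarith)]
  have hre := mul_le_mul_of_nonneg_left hsin (norm_nonneg (bornAmplitude η r θ))
  rw [bornAmplitude_re h.η_pos h.r_pos] at hrem
  have herror := mul_le_mul_of_nonneg_left (h.error_mul_norm_le θ)
    (norm_nonneg (bornAmplitude η r θ))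
  rw [hDf, add_comm]
  apply add_ne_zero_of_norm_lt
  rw [norm_I_mul_mul_exp_mul]
  calc _ ≤ ‖bornAmplitude η r θ‖ * Real.exp (2 * (meanPhase κ f r θ).re)
          * (32 * (1 + ‖bornAmplitude η r θ‖) * Real.exp (waveGrowth κ r θ)) := by gcongr
    _ = ‖bornAmplitude η r θ‖ * (32 * (1 + ‖bornAmplitude η r θ‖)
          * Real.exp (2 * (meanPhase κ f r θ).re + waveGrowth κ r θ)) := by
        rw [Real.exp_add]
        ring
    _ ≤ ‖bornAmplitude η r θ‖ * (32 * (1 + ‖bornAmplitude η r θ‖)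
          * (3 * ((r + f⁻¹) ^ 20)⁻¹)) := by gcongr
    _ ≤ 1 / 4 := h.norm_bornAmplitude_mul_le θ
    _ < _ := by linarith [norm_nonneg (bornAmplitude η r θ)]

lemma le_mul_of_rpow_mul_lt {M x : ℝ} (h : WeakField κ η f r) (hM : 20 < M)
    (hx : r ^ (-(3 : ℝ) / 2) * M * f * Real.log (r + f⁻¹) < x) :
    0 < x ∧ 20 * Real.log (r + f⁻¹) * f ≤ r * √r * x := by
  have hf := h.f_pos
  have hr := h.r_pos
  have hL := h.log_pos
  refine ⟨lt_trans (by positivity) hx, ?_⟩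
  rw [rpow_neg_three_halves hr] at hx
  calc 20 * Real.log (r + f⁻¹) * f ≤ M * Real.log (r + f⁻¹) * f := by gcongr
    _ = r * √r * ((r * √r)⁻¹ * M * f * Real.log (r + f⁻¹)) := by field_simp
    _ ≤ r * √r * x := by gcongr

lemma le_mul_of_inv_mul_lt {M x : ℝ} (h : WeakField κ η f r) (hM : 20 < M)
    (hx : r⁻¹ * (1 + r ^ (-(1 : ℝ) / 2)) * M * f * Real.log (r + f⁻¹) < x) :
    0 < x ∧ 20 * Real.log (r + f⁻¹) * f * (√r + 1) ≤ r * √r * x := by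
  have hf := h.f_pos
  have hr := h.r_pos
  have hL := h.log_pos
  refine ⟨lt_trans (by positivity) hx, ?_⟩
  rw [rpow_neg_half hr] at hx
  calc 20 * Real.log (r + f⁻¹) * f * (√r + 1) ≤ M * Real.log (r + f⁻¹) * f * (√r + 1) := by
        gcongr
    _ = r * √r * (r⁻¹ * (1 + (√r)⁻¹) * M * f * Real.log (r + f⁻¹)) := by field_simp
    _ ≤ r * √r * x := by gcongr

lemma Df_ne_zero_of_between_rays {M : ℝ} (h : WeakField κ η f r) (hM : 20 < M)
    (hleft : -(2 * π / 3) + r ^ (-(3 : ℝ) / 2) * M * f * Real.log (r + f⁻¹) < θ)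
    (hright : θ < -(r ^ (-(3 : ℝ) / 2) * M * f * Real.log (r + f⁻¹))) :
    Df κ η f (r * Complex.exp (I * θ)) ≠ 0 := by
  obtain ⟨hθ, hray⟩ := h.le_mul_of_rpow_mul_lt hM (lt_neg_of_lt_neg hright)
  obtain ⟨hθ', hray'⟩ := h.le_mul_of_rpow_mul_lt (x := θ + 2 * π / 3) hM (by linarith)
  rw [← waveNumber_sq h.r_pos]
  rcases le_total θ (-(π / 3)) with hmid | hmid
  · exact h.Df_ne_zero_of_le_neg_pi_div_three (by linarith) hmid hray hray'
  · exact h.Df_ne_zero_of_neg_pi_div_three_le hmid (by linarith) hray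

lemma Df_ne_zero_of_left_of_rays {M : ℝ} (h : WeakField κ η f r) (hM : 20 < M)
    (hθ : -(2 * π) < θ)
    (hleft : θ < -(2 * π / 3)
      - r⁻¹ * (1 + r ^ (-(1 : ℝ) / 2)) * M * f * Real.log (r + f⁻¹)) :
    Df κ η f (r * Complex.exp (I * θ)) ≠ 0 := by
  rcases lt_or_ge θ (-π) with hupper | hlower
  · exact Df_ne_zero_of_im_pos h.κ_pos.le h.η_pos.ne' h.f_pos
      (im_ofReal_mul_exp_pos h.r_pos hθ hupper)
  · obtain ⟨hθ', hray⟩ := h.le_mul_of_inv_mul_lt (x := -(2 * π / 3) - θ) hM (by linarith)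
    rw [← waveNumber_sq h.r_pos]
    exact h.Df_ne_zero_of_le_neg_two_pi_div_three hlower (by linarith) hray

end WeakField

lemma le_mul_sq_of_rpow_lt {a τ : ℝ} (hτ : 0 ≤ τ) (ha : a < 1 / 2) (hf : 0 < f)
    (hfτ : f ≤ τ ^ (1 / (1 - 2 * a))) (hr : f ^ a < r) : f ≤ τ * r ^ 2 := by
  have hexponent : 0 < 1 - 2 * a := by linarith
  have hpow : f ^ (1 - 2 * a) ≤ τ := by
    rwa [one_div, Real.le_rpow_inv_iff_of_pos hf.le hτ hexponent] at hfτ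
  calc f = f ^ (1 - 2 * a) * (f ^ a) ^ 2 := by
        rw [← Real.rpow_natCast, ← Real.rpow_mul hf.le, ← Real.rpow_add hf, Nat.cast_ofNat,
          show 1 - 2 * a + a * 2 = 1 by ring, Real.rpow_one]
    _ ≤ τ * r ^ 2 := by gcongr

end Sectors

/-- For small `f`, `D_f` has no zeros in the regions `R₁` (near but off the ray
`arg z = −2π/3`) and `R₂` (the sector between the two critical rays), for
`z = re^{iθ}` with `r > f^a`. -/
theorem stmt8 (κ η : ℝ) (hκ : 0 < κ) (hη : 0 < η) (a M : ℝ)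
    (ha0 : 0 < a) (ha1 : a < 1 / 2) (hM : 20 < M) :
    ∃ f₀ > (0 : ℝ), ∀ f : ℝ, 0 < f → f < f₀ → ∀ r θ : ℝ,
      ((f ^ a < r ∧
          -(2 * π / 3) + r ^ (-(3 : ℝ) / 2) * M * f * Real.log (r + f⁻¹) < θ ∧
          θ < -(r ^ (-(3 : ℝ) / 2) * M * f * Real.log (r + f⁻¹))) ∨
       (f ^ a < r ∧ -(2 * π) < θ ∧
          θ < -(2 * π / 3) - r⁻¹ * (1 + r ^ (-(1 : ℝ) / 2)) * M * f * Real.log (r + f⁻¹))) →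
      Df κ η f ((r : ℂ) * Complex.exp (Complex.I * θ)) ≠ 0 := by
  obtain ⟨τ, hτ, hweak⟩ := exists_weakField hκ hη
  refine ⟨min τ (τ ^ (1 / (1 - 2 * a))), lt_min hτ (Real.rpow_pos_of_pos hτ _), ?_⟩
  intro f hf hf₀ r θ hregion
  obtain ⟨hfτ, hfτ'⟩ := le_min_iff.1 hf₀.le
  have hr : f ^ a < r := hregion.elim And.left And.left
  have hfield : WeakField κ η f r := hweak f r hf hfτ ((Real.rpow_pos_of_pos hf a).trans hr)
    (le_mul_sq_of_rpow_lt hτ.le ha1 hf hfτ' hr)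
  rcases hregion with ⟨-, hleft, hright⟩ | ⟨-, hθ, hleft⟩
  · exact hfield.Df_ne_zero_of_between_rays hM hleft hright
  · exact hfield.Df_ne_zero_of_left_of_rays hM hθ hleft
end
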